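/- (Derivative estimate for the density for the one-dimensional Navier–Stokes equations.) Let γ > 1, κ = (γ−1)²/(4γ), p(ρ) = κρ^γ, ε > 0, and let (ρ̄, ū), E₀ be as in the energy estimate. Let (ρ, u) be a classical solution on [0,T] × ℝ with ρ > 0 of ∂_t ρ + ∂_x(ρu) = 0, ∂_t(ρu) + ∂_x(ρu² + p(ρ)) = ε ∂_{xx} u, with the same decay assumptions at x = ±∞, satisfying ∫_ℝ Φ_*(ρ(0,·), m(0,·)) dx ≤ E₀ and ∫_ℝ ( ε² |∂_x ρ(0,x)|²/ρ(0,x)³ + 2ε |∂_x ρ(0,x) u(0,x)|/ρ(0,x) + ρ(0,x)|u(0,x)| ) dx ≤ E₁. Then there exists a constant C₁ > 0, independent of ε, such that for every t ∈ [0,T]: ε² ∫_ℝ |∂_x ρ(t,x)|²/ρ(t,x)³ dx + ε ∫₀^t ∫_ℝ ρ(τ,x)^{γ−3} |∂_x ρ(τ,x)|² dx dτ ≤ C₁ (E₀ + E₁). -/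

import Mathlib

/-!
The proof rests on the effective velocity `V = u + ε ρₓ/ρ²`.  Differentiating the continuity
equation in `x` shows that the viscous term is absorbed: `ρ (V_t + u V_x) = -p_x`.  Hence the
effective energy density `ρV²/2 + h`, where `h` is the internal energy relative to `ρ̄`, satisfies a
balance law whose dissipation is `ε γ p ρₓ²/ρ³`, a constant multiple of `ε ρ^{γ-3} ρₓ²`, while
`ε² ρₓ²/ρ³ = ρ (V - u)²` is bounded by the effective energy and the mechanical energy together.

The difficulty lies at `x = ±∞`: the decay hypotheses hold at each time separately, with no
uniformity in time, so the boundary fluxes cannot simply be dropped.  Balances are therefore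
localized with cutoffs `θ(N/R)` of the Lagrangian mass label `N` (`N_x = ρ`, `N_t = -ρu`).  Such
cutoffs are transported by the flow, so convective fluxes cancel; only the flux of work survives,
and it carries a factor `1/R`.  The label is proper uniformly in time (`proper_of`), so every
localized integral has compact support.

The flux of work is handled in two rounds.  The potential `Ψ` of the effective momentum decreases
along trajectories at rate `p`, and at times `0` and `T` it is `o(√R)` on labels of size `R`
(`NS.growth`); its moments thus bound those of `p` and show that the localized effective energy is
`o(√R)` (`NS.growth_G`).  The dissipation then bounds the oscillation of `√p` pointwise
(`NS.sup_p`), which improves this to a bound uniform in `R` (`NS.G_bounded`) and finally makes the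
flux vanish as `R → ∞` (`NS.flux_zero`).  The viscous flux in the mechanical energy balance is
absorbed by the viscous dissipation up to a vanishing error (`NS.visc_zero`).

The work of the background gradient is bounded by the relative energy plus a constant on
the support of `ρ̄'`, so Gronwall's inequality applies (`NS.local_estimate`); letting `R → ∞` yields
`NS.estimate`.  The abstract flow `NS` is instantiated from a classical solution by `build`.

In the final theorem, integrability of `ρ|u|` at time `0` forces the background velocity to vanish,
and expanding `ρV²` at time `0` bounds the initial effective energy by `E₀ + E₁/2`.  Gronwall's
inequality leaves an additive constant `D` coming from `ρ̄'`; it is absorbed into `C₁ (E₀ + E₁)`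
because `E₀ + E₁ = 0` forces a constant density, hence a constant background and `D = 0`.
-/

open MeasureTheory Filter Set

/-- The mechanical energy `η⋆(ρ,m) = m²/(2ρ) + κ ρ^γ/(γ−1)`. -/
noncomputable def mechEnergy (γ κ : ℝ) (ρ m : ℝ) : ℝ :=
  m ^ 2 / (2 * ρ) + κ * ρ ^ γ / (γ - 1)

/-- The relative mechanical energy
`Φ⋆(ρ,m) = η⋆(ρ,m) − η⋆(ρ̄,m̄) − ∇η⋆(ρ̄,m̄)·(ρ−ρ̄, m−m̄)`. -/
noncomputable def relMechEnergy (γ κ : ℝ) (ρb mb : ℝ) (ρ m : ℝ) : ℝ :=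
  mechEnergy γ κ ρ m - mechEnergy γ κ ρb mb
    - ((-(mb ^ 2) / (2 * ρb ^ 2) + κ * γ * ρb ^ (γ - 1) / (γ - 1)) * (ρ - ρb)
        + (mb / ρb) * (m - mb))

namespace NSDensity

/-! ### Space and space-time integrals of admissible weights -/

/-- Continuous space-time functions whose spatial support is bounded uniformly in time. -/
def Adm (k : ℝ × ℝ → ℝ) : Prop :=
  Continuous k ∧ ∃ L : ℝ, ∀ t x, L ≤ |x| → k (t, x) = 0

/-- The spatial integral at time `t`. -/
noncomputable def I (k : ℝ × ℝ → ℝ) (t : ℝ) : ℝ := ∫ x, k (t, x)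

/-- The space-time integral over `[0,t] × ℝ`. -/
noncomputable def J (k : ℝ × ℝ → ℝ) (t : ℝ) : ℝ := ∫ τ in (0 : ℝ)..t, I k τ

lemma Adm.cont {k : ℝ × ℝ → ℝ} (h : Adm k) : Continuous k := h.1

lemma Adm.mul {k f : ℝ × ℝ → ℝ} (h : Adm k) (hf : Continuous f) : Adm (fun q => k q * f q) := by
  obtain ⟨hc, L, hL⟩ := h
  exact ⟨hc.mul hf, L, fun t x hx => by simp [hL t x hx]⟩

lemma Adm.const_mul {k : ℝ × ℝ → ℝ} (h : Adm k) (a : ℝ) : Adm (fun q => a * k q) := by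
  obtain ⟨hc, L, hL⟩ := h
  exact ⟨continuous_const.mul hc, L, fun t x hx => by simp [hL t x hx]⟩

lemma Adm.add {k l : ℝ × ℝ → ℝ} (h : Adm k) (h' : Adm l) : Adm (fun q => k q + l q) := by
  obtain ⟨hc, L, hL⟩ := h
  obtain ⟨hc', L', hL'⟩ := h'
  exact ⟨hc.add hc', max L L', fun t x hx => by
    simp [hL t x ((le_max_left _ _).trans hx), hL' t x ((le_max_right _ _).trans hx)]⟩

lemma Adm.abs {k : ℝ × ℝ → ℝ} (h : Adm k) : Adm (fun q => |k q|) := by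
  obtain ⟨hc, L, hL⟩ := h
  exact ⟨hc.abs, L, fun t x hx => by simp [hL t x hx]⟩

lemma Adm.sum {n : ℕ} {a : Fin n → ℝ} {ks : Fin n → ℝ × ℝ → ℝ} (h : ∀ i, Adm (ks i)) :
    Adm (fun q => ∑ i, a i * ks i q) := by
  choose hc L hL using h
  refine ⟨by fun_prop, ∑ i, |L i|, fun t x hx => ?_⟩
  refine Finset.sum_eq_zero fun i _ => ?_
  have : L i ≤ |x| := (le_abs_self _).trans
    ((Finset.single_le_sum (f := fun i => |L i|) (fun j _ => abs_nonneg _)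
      (Finset.mem_univ i)).trans hx)
  simp [hL i t x this]

lemma Adm.hcs {k : ℝ × ℝ → ℝ} (h : Adm k) (t : ℝ) : HasCompactSupport (fun x => k (t, x)) := by
  obtain ⟨hc, L, hL⟩ := h
  refine HasCompactSupport.intro (K := Icc (-|L|) |L|) isCompact_Icc fun x hx => hL t x ?_
  rw [mem_Icc, ← abs_le] at hx
  exact (le_abs_self L).trans (not_le.1 hx).le

lemma Adm.integrable {k : ℝ × ℝ → ℝ} (h : Adm k) (t : ℝ) : Integrable (fun x => k (t, x)) :=
  Continuous.integrable_of_hasCompactSupport (h.1.comp (by fun_prop)) (h.hcs t)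

lemma integral_eq_interval {f : ℝ → ℝ} {L : ℝ} (h : ∀ x, L ≤ |x| → f x = 0) {a : ℝ}
    (ha : L ≤ a) (ha0 : 0 ≤ a) : ∫ x, f x = ∫ x in (-a)..a, f x := by
  rw [intervalIntegral.integral_of_le (by linarith)]
  refine (setIntegral_eq_integral_of_forall_compl_eq_zero fun x hx => h x ?_).symm
  by_contra hlt
  rw [not_le, abs_lt] at hlt
  exact hx ⟨by linarith, by linarith⟩

lemma Adm.I_cont {k : ℝ × ℝ → ℝ} (h : Adm k) : Continuous (I k) := by
  obtain ⟨hc, L, hL⟩ := h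
  have : I k = fun t => ∫ x in (-|L|)..|L|, k (t, x) := by
    funext t
    exact integral_eq_interval (hL t) (le_abs_self L) (abs_nonneg L)
  rw [this]
  exact intervalIntegral.continuous_parametric_intervalIntegral_of_continuous'
    (f := fun t x => k (t, x)) hc _ _

lemma Adm.I_ii {k : ℝ × ℝ → ℝ} (h : Adm k) (a b : ℝ) :
    IntervalIntegrable (I k) volume a b := h.I_cont.intervalIntegrable _ _

lemma I_mono {k l : ℝ × ℝ → ℝ} (hk : Adm k) (hl : Adm l) (t : ℝ) (h : ∀ x, k (t, x) ≤ l (t, x)) :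
    I k t ≤ I l t := integral_mono (hk.integrable t) (hl.integrable t) h

lemma I_sum {n : ℕ} (a : Fin n → ℝ) (ks : Fin n → ℝ × ℝ → ℝ) (h : ∀ i, Adm (ks i)) (t : ℝ) :
    I (fun q => ∑ i, a i * ks i q) t = ∑ i, a i * I (ks i) t := by
  unfold I
  rw [integral_finsetSum _ fun i _ => ((h i).integrable t).const_mul (a i)]
  simp_rw [integral_const_mul]

lemma J_sum {n : ℕ} (a : Fin n → ℝ) (ks : Fin n → ℝ × ℝ → ℝ) (h : ∀ i, Adm (ks i)) (t : ℝ) :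
    J (fun q => ∑ i, a i * ks i q) t = ∑ i, a i * J (ks i) t := by
  unfold J
  simp_rw [I_sum a ks h]
  rw [intervalIntegral.integral_finsetSum fun i _ => ((h i).I_ii 0 t).const_mul (a i)]
  simp_rw [intervalIntegral.integral_const_mul]

lemma J_mono {k l : ℝ × ℝ → ℝ} (hk : Adm k) (hl : Adm l) {t : ℝ} (ht : 0 ≤ t)
    (h : ∀ τ ∈ Icc 0 t, ∀ x, k (τ, x) ≤ l (τ, x)) :
    J k t ≤ J l t :=
  intervalIntegral.integral_mono_on ht (hk.I_ii 0 t) (hl.I_ii 0 t)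
    fun τ hτ => I_mono hk hl τ (h τ hτ)

lemma I_nonneg {k : ℝ × ℝ → ℝ} (h : ∀ q, 0 ≤ k q) (t : ℝ) : 0 ≤ I k t :=
  integral_nonneg fun x => h (t, x)

lemma J_nonneg {k : ℝ × ℝ → ℝ} (h : ∀ q, 0 ≤ k q) {t : ℝ} (ht : 0 ≤ t) : 0 ≤ J k t :=
  intervalIntegral.integral_nonneg ht fun τ _ => I_nonneg h τ

lemma J_le_J {k : ℝ × ℝ → ℝ} (hk : Adm k) (h : ∀ q, 0 ≤ k q) {s t : ℝ} (hs : 0 ≤ s) (hst : s ≤ t) :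
    J k s ≤ J k t :=
  intervalIntegral.integral_mono_interval le_rfl hs hst
    (Eventually.of_forall fun τ => I_nonneg h τ) (hk.I_ii 0 t)

lemma J_le_of_I_le {k : ℝ × ℝ → ℝ} (hk : Adm k) {t M : ℝ} (ht : 0 ≤ t)
    (h : ∀ τ ∈ Icc 0 t, I k τ ≤ M) : J k t ≤ t * M := by
  have := intervalIntegral.integral_mono_on (μ := volume) (f := I k) (g := fun _ => M) ht
    (hk.I_ii 0 t) (by simp) h
  simpa [J] using this

lemma I_lin2 {k k₁ k₂ : ℝ × ℝ → ℝ} (h₁ : Adm k₁) (h₂ : Adm k₂) (a b : ℝ)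
    (h : ∀ q, k q = a * k₁ q + b * k₂ q) (t : ℝ) : I k t = a * I k₁ t + b * I k₂ t := by
  have := I_sum ![a, b] ![k₁, k₂] (by simp [Fin.forall_fin_succ, h₁, h₂]) t
  simp only [Fin.sum_univ_two, Matrix.cons_val_zero, Matrix.cons_val_one] at this
  rw [← this]; congr 1; funext q; exact h q

lemma J_lin2 {k k₁ k₂ : ℝ × ℝ → ℝ} (h₁ : Adm k₁) (h₂ : Adm k₂) (a b : ℝ)
    (h : ∀ q, k q = a * k₁ q + b * k₂ q) (t : ℝ) : J k t = a * J k₁ t + b * J k₂ t := by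
  have := J_sum ![a, b] ![k₁, k₂] (by simp [Fin.forall_fin_succ, h₁, h₂]) t
  simp only [Fin.sum_univ_two, Matrix.cons_val_zero, Matrix.cons_val_one] at this
  rw [← this]; congr 1; funext q; exact h q

lemma J_lin3 {k k₁ k₂ k₃ : ℝ × ℝ → ℝ} (h₁ : Adm k₁) (h₂ : Adm k₂) (h₃ : Adm k₃) (a b c : ℝ)
    (h : ∀ q, k q = a * k₁ q + b * k₂ q + c * k₃ q) (t : ℝ) :
    J k t = a * J k₁ t + b * J k₂ t + c * J k₃ t := by
  have e₁ := J_lin2 ((h₁.const_mul a).add (h₂.const_mul b)) h₃ 1 c (k := k)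
    (fun q => by rw [h q]; ring) t
  have e₂ := J_lin2 h₁ h₂ a b (fun q => rfl) t
  rw [e₁, e₂]; ring

lemma J_lin4 {k k₁ k₂ k₃ k₄ : ℝ × ℝ → ℝ} (h₁ : Adm k₁) (h₂ : Adm k₂) (h₃ : Adm k₃) (h₄ : Adm k₄)
    (a b c d : ℝ)
    (h : ∀ q, k q = a * k₁ q + b * k₂ q + c * k₃ q + d * k₄ q) (t : ℝ) :
    J k t = a * J k₁ t + b * J k₂ t + c * J k₃ t + d * J k₄ t := by
  have e₁ := J_lin2 (((h₁.const_mul a).add (h₂.const_mul b)).add (h₃.const_mul c)) h₄ 1 d (k := k)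
    (fun q => by rw [h q]; ring) t
  have e₂ := J_lin3 h₁ h₂ h₃ a b c (fun q => rfl) t
  rw [e₁, e₂]; ring

lemma I_abs2 {k k₁ k₂ : ℝ × ℝ → ℝ} (hk : Adm k) (h₁ : Adm k₁) (h₂ : Adm k₂) (a b : ℝ) {t : ℝ}
    (h : ∀ x, |k (t, x)| ≤ a * k₁ (t, x) + b * k₂ (t, x)) :
    |I k t| ≤ a * I k₁ t + b * I k₂ t := by
  rw [← I_lin2 h₁ h₂ a b (fun q => rfl) t]
  refine (abs_integral_le_integral_abs).trans ?_
  exact I_mono hk.abs ((h₁.const_mul a).add (h₂.const_mul b)) t h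

lemma J_abs2 {k k₁ k₂ : ℝ × ℝ → ℝ} (hk : Adm k) (h₁ : Adm k₁) (h₂ : Adm k₂) (a b : ℝ) {t : ℝ}
    (ht : 0 ≤ t)
    (h : ∀ τ ∈ Icc 0 t, ∀ x, |k (τ, x)| ≤ a * k₁ (τ, x) + b * k₂ (τ, x)) :
    |J k t| ≤ a * J k₁ t + b * J k₂ t := by
  have e := J_lin2 h₁ h₂ a b (k := fun q => a * k₁ q + b * k₂ q) (fun q => rfl) t
  have A := (h₁.const_mul a).add (h₂.const_mul b)
  have u := J_mono hk A ht fun τ hτ x => (le_abs_self _).trans (h τ hτ x)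
  have l := J_mono (hk.const_mul (-1)) A ht fun τ hτ x => by
    have := (neg_le_abs _).trans (h τ hτ x); linarith
  have e' := J_lin2 hk hk (-1) 0 (k := fun q => (-1) * k q) (fun q => by ring) t
  rw [abs_le]; constructor <;> linarith

lemma J_abs3 {k k₁ k₂ k₃ : ℝ × ℝ → ℝ} (hk : Adm k) (h₁ : Adm k₁) (h₂ : Adm k₂) (h₃ : Adm k₃)
    (a b c : ℝ) {t : ℝ} (ht : 0 ≤ t)
    (h : ∀ τ ∈ Icc 0 t, ∀ x, |k (τ, x)| ≤ a * k₁ (τ, x) + b * k₂ (τ, x) + c * k₃ (τ, x)) :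
    |J k t| ≤ a * J k₁ t + b * J k₂ t + c * J k₃ t := by
  have e := J_lin2 h₁ h₂ a b (k := fun q => a * k₁ q + b * k₂ q) (fun q => rfl) t
  have := J_abs2 hk ((h₁.const_mul a).add (h₂.const_mul b)) h₃ 1 c ht
    (fun τ hτ x => by linarith [h τ hτ x])
  linarith

lemma J_nn2 {k k₁ k₂ : ℝ × ℝ → ℝ} (hk : Adm k) (h₁ : Adm k₁) (h₂ : Adm k₂) (a b : ℝ) {t : ℝ}
    (ht : 0 ≤ t)
    (h : ∀ τ ∈ Icc 0 t, ∀ x, k (τ, x) ≤ a * k₁ (τ, x) + b * k₂ (τ, x)) :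
    J k t ≤ a * J k₁ t + b * J k₂ t := by
  rw [← J_lin2 h₁ h₂ a b (k := fun q => a * k₁ q + b * k₂ q) (fun q => rfl) t]
  exact J_mono hk ((h₁.const_mul a).add (h₂.const_mul b)) ht h

lemma I_nn2 {k k₁ k₂ : ℝ × ℝ → ℝ} (hk : Adm k) (h₁ : Adm k₁) (h₂ : Adm k₂) (a b : ℝ) {t : ℝ}
    (h : ∀ x, k (t, x) ≤ a * k₁ (t, x) + b * k₂ (t, x)) :
    I k t ≤ a * I k₁ t + b * I k₂ t := by
  rw [← I_lin2 h₁ h₂ a b (k := fun q => a * k₁ q + b * k₂ q) (fun q => rfl) t]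
  exact I_mono hk ((h₁.const_mul a).add (h₂.const_mul b)) t h

/-- A time-dependent coefficient can be pulled out of the spatial integral. -/
lemma I_time_mul (g : ℝ → ℝ) (k : ℝ × ℝ → ℝ) (t : ℝ) : I (fun q => g q.1 * k q) t = g t * I k t :=
  integral_const_mul (g t) fun x => k (t, x)

lemma Adm.time_mul {k : ℝ × ℝ → ℝ} (h : Adm k) {g : ℝ → ℝ} (hg : Continuous g) :
    Adm (fun q => g q.1 * k q) := by
  obtain ⟨hc, L, hL⟩ := h
  exact ⟨(hg.comp continuous_fst).mul hc, L, fun t x hx => by simp [hL t x hx]⟩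

/-- If `I k ≤ M` on `[0,t]` then `∫₀ᵗ I l · I k ≤ M ∫₀ᵗ I l`. -/
lemma J_time_mul_le {k l : ℝ × ℝ → ℝ} (hk : Adm k) (hl : Adm l) (hl0 : ∀ q, 0 ≤ l q) {t M : ℝ}
    (ht : 0 ≤ t) (h : ∀ τ ∈ Icc 0 t, I k τ ≤ M) :
    J (fun q => I l q.1 * k q) t ≤ M * J l t := by
  have : M * J l t = ∫ τ in (0 : ℝ)..t, M * I l τ := by
    rw [intervalIntegral.integral_const_mul]; rfl
  rw [this]
  refine intervalIntegral.integral_mono_on ht ((hk.time_mul hl.I_cont).I_ii 0 t)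
    ((hl.I_ii 0 t).const_mul M) fun τ hτ => ?_
  rw [I_time_mul (I l) k τ, mul_comm]
  exact mul_le_mul_of_nonneg_right (h τ hτ) (I_nonneg hl0 τ)

/-! ### Functions of class `C¹` on the space-time strip -/

/-- `f` has continuous partial derivatives `ft` (for `0 < t < T`) and `fx`. All three functions
are globally continuous; outside `[0,T]` they are thought of as frozen in time. -/
structure C1 (T : ℝ) (f ft fx : ℝ × ℝ → ℝ) : Prop where
  cont : Continuous f
  cont_t : Continuous ft
  cont_x : Continuous fx
  dt : ∀ t ∈ Ioo 0 T, ∀ x, HasDerivAt (fun s => f (s, x)) (ft (t, x)) t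
  dx : ∀ t x, HasDerivAt (fun y => f (t, y)) (fx (t, x)) x

lemma C1.congr {T : ℝ} {f ft fx gt gx : ℝ × ℝ → ℝ} (h : C1 T f ft fx)
    (ht : ∀ q, gt q = ft q) (hx : ∀ q, gx q = fx q) : C1 T f gt gx := by
  obtain rfl : gt = ft := funext ht
  obtain rfl : gx = fx := funext hx
  exact h

lemma C1.add {T : ℝ} {f ft fx g gt gx : ℝ × ℝ → ℝ} (hf : C1 T f ft fx) (hg : C1 T g gt gx) :
    C1 T (fun q => f q + g q) (fun q => ft q + gt q) (fun q => fx q + gx q) where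
  cont := hf.cont.add hg.cont
  cont_t := hf.cont_t.add hg.cont_t
  cont_x := hf.cont_x.add hg.cont_x
  dt t ht x := (hf.dt t ht x).add (hg.dt t ht x)
  dx t x := (hf.dx t x).add (hg.dx t x)

lemma C1.sub {T : ℝ} {f ft fx g gt gx : ℝ × ℝ → ℝ} (hf : C1 T f ft fx) (hg : C1 T g gt gx) :
    C1 T (fun q => f q - g q) (fun q => ft q - gt q) (fun q => fx q - gx q) where
  cont := hf.cont.sub hg.cont
  cont_t := hf.cont_t.sub hg.cont_t
  cont_x := hf.cont_x.sub hg.cont_x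
  dt t ht x := (hf.dt t ht x).sub (hg.dt t ht x)
  dx t x := (hf.dx t x).sub (hg.dx t x)

lemma C1.mul {T : ℝ} {f ft fx g gt gx : ℝ × ℝ → ℝ} (hf : C1 T f ft fx) (hg : C1 T g gt gx) :
    C1 T (fun q => f q * g q) (fun q => ft q * g q + f q * gt q)
      (fun q => fx q * g q + f q * gx q) where
  cont := hf.cont.mul hg.cont
  cont_t := (hf.cont_t.mul hg.cont).add (hf.cont.mul hg.cont_t)
  cont_x := (hf.cont_x.mul hg.cont).add (hf.cont.mul hg.cont_x)
  dt t ht x := (hf.dt t ht x).mul (hg.dt t ht x)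
  dx t x := (hf.dx t x).mul (hg.dx t x)

lemma C1.const {T : ℝ} (c : ℝ) : C1 T (fun _ => c) (fun _ => 0) (fun _ => 0) where
  cont := continuous_const
  cont_t := continuous_const
  cont_x := continuous_const
  dt _ _ _ := hasDerivAt_const _ _
  dx _ _ := hasDerivAt_const _ _

lemma C1.of_space {T : ℝ} {g g' : ℝ → ℝ} (h : ∀ x, HasDerivAt g (g' x) x) (hc : Continuous g') :
    C1 T (fun q => g q.2) (fun _ => 0) (fun q => g' q.2) where
  cont := (continuous_iff_continuousAt.2 fun x => (h x).continuousAt).comp continuous_snd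
  cont_t := continuous_const
  cont_x := hc.comp continuous_snd
  dt t _ x := hasDerivAt_const t (g x)
  dx _ x := h x

lemma C1.log {T : ℝ} {f ft fx : ℝ × ℝ → ℝ} (hf : C1 T f ft fx) (h : ∀ q, 0 < f q) :
    C1 T (fun q => Real.log (f q)) (fun q => ft q / f q) (fun q => fx q / f q) where
  cont := hf.cont.log fun q => (h q).ne'
  cont_t := hf.cont_t.div hf.cont fun q => (h q).ne'
  cont_x := hf.cont_x.div hf.cont fun q => (h q).ne'
  dt t ht x := (hf.dt t ht x).log (h _).ne'
  dx t x := (hf.dx t x).log (h _).ne'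

lemma Adm.comp {N : ℝ × ℝ → ℝ} (hN : Continuous N)
    (proper : ∀ r : ℝ, ∃ L, ∀ t x, L ≤ |x| → r ≤ |N (t, x)|) {θ : ℝ → ℝ} (hθ : Continuous θ)
    {r : ℝ} (hr : ∀ n, r ≤ |n| → θ n = 0) : Adm (fun q => θ (N q)) := by
  obtain ⟨L, hL⟩ := proper r
  exact ⟨hθ.comp hN, L, fun t x hx => hr _ (hL t x hx)⟩

/-- The balance law in mass coordinates: the convective flux is invisible to a cutoff depending on
the mass label `N` only, because `N` is transported by the flow. -/
lemma balance {T : ℝ} {ρ u ux N f ft fx j jx : ℝ × ℝ → ℝ} (hu : Continuous u) (hux : Continuous ux)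
    (hux' : ∀ t x, HasDerivAt (fun y => u (t, y)) (ux (t, x)) x)
    (hN : C1 T N (fun q => -(ρ q * u q)) ρ)
    (proper : ∀ r : ℝ, ∃ L, ∀ t x, L ≤ |x| → r ≤ |N (t, x)|)
    {θ θ₁ : ℝ → ℝ} (hθ : ∀ n, HasDerivAt θ (θ₁ n) n) (hθ₁ : Continuous θ₁)
    {r : ℝ} (hr : ∀ n, r ≤ |n| → θ n = 0) (hr₁ : ∀ n, r ≤ |n| → θ₁ n = 0)
    (hf : C1 T f ft fx) (hj : Continuous j) (hjx : Continuous jx)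
    (hjx' : ∀ t x, HasDerivAt (fun y => j (t, y)) (jx (t, x)) x)
    {t : ℝ} (ht : t ∈ Icc 0 T) :
    I (fun q => θ (N q) * f q) t - I (fun q => θ (N q) * f q) 0
      = J (fun q => θ (N q) * (ft q + u q * fx q + ux q * f q + jx q) + θ₁ (N q) * (ρ q * j q)) t := by
  have hθc : Continuous θ := continuous_iff_continuousAt.2 fun x => (hθ x).continuousAt
  have A := Adm.comp hN.cont proper hθc hr
  have A₁ := Adm.comp hN.cont proper hθ₁ hr₁
  have cρ : Continuous ρ := hN.cont_x
  -- the spatial divergence integrates to zero at every time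
  have hdiv : ∀ τ, I (fun q => θ (N q) * (u q * fx q + ux q * f q + jx q)
      + θ₁ (N q) * (ρ q * (u q * f q + j q))) τ = 0 := by
    intro τ
    have hA := ((A.mul (f := fun q => u q * fx q + ux q * f q + jx q)
      (((hu.mul hf.cont_x).add (hux.mul hf.cont)).add hjx)).add
      (A₁.mul (f := fun q => ρ q * (u q * f q + j q)) (cρ.mul ((hu.mul hf.cont).add hj))))
    have hB := A.mul ((hu.mul hf.cont).add hj)
    have := integral_of_hasDerivAt_of_tendsto (m := (0 : ℝ)) (n := 0)
      (f := fun x => θ (N (τ, x)) * (u (τ, x) * f (τ, x) + j (τ, x)))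
      (f' := fun x => θ (N (τ, x)) * (u (τ, x) * fx (τ, x) + ux (τ, x) * f (τ, x) + jx (τ, x))
      + θ₁ (N (τ, x)) * (ρ (τ, x) * (u (τ, x) * f (τ, x) + j (τ, x)))) ?_ ?_ ?_ ?_
    · simpa [I] using this
    · intro x
      refine ((((hθ _).comp x (hN.dx τ x))).mul
        (((hux' τ x).mul (hf.dx τ x)).add (hjx' τ x))).congr_deriv ?_
      simp only [Function.comp, Pi.mul_apply, Pi.add_apply]; ring
    · exact hA.integrable τ
    · obtain ⟨_, L, hL⟩ := hB
      refine tendsto_const_nhds.congr' ?_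
      filter_upwards [eventually_le_atBot (-|L|)] with x hx
      refine (hL τ x ?_).symm
      rw [abs_of_nonpos (by linarith [abs_nonneg L])]; linarith [le_abs_self L]
    · obtain ⟨_, L, hL⟩ := hB
      refine tendsto_const_nhds.congr' ?_
      filter_upwards [eventually_ge_atTop (|L|)] with x hx
      refine (hL τ x ?_).symm
      rw [abs_of_nonneg (by linarith [abs_nonneg L])]; linarith [le_abs_self L]
  have hG := A.mul hf.cont
  have hGt := (A.mul hf.cont_t).add (A₁.mul (f := fun q => -(ρ q * u q) * f q)
    ((cρ.mul hu).neg.mul hf.cont))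
  -- evolution of the weighted integral
  have htime : I (fun q => θ (N q) * f q) t - I (fun q => θ (N q) * f q) 0
      = J (fun q => θ (N q) * ft q + θ₁ (N q) * (-(ρ q * u q) * f q)) t := by
    unfold J I
    rw [intervalIntegral_integral_swap]
    · rw [← integral_sub (hG.integrable t) (hG.integrable 0)]
      congr 1; funext x
      refine (intervalIntegral.integral_eq_sub_of_hasDerivAt_of_le
        (f := fun s => θ (N (s, x)) * f (s, x)) ht.1 ?_ ?_ ?_).symm
      · exact (hG.1.comp (by fun_prop : Continuous fun s : ℝ => (s, x))).continuousOn
      · intro s hs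
        have hs' : s ∈ Ioo 0 T := ⟨hs.1, hs.2.trans_le ht.2⟩
        refine (((hθ _).comp s (hN.dt s hs' x)).mul (hf.dt s hs' x)).congr_deriv ?_
        simp only [Function.comp]; ring
      · exact (hGt.1.comp (by fun_prop : Continuous fun s : ℝ => (s, x))).intervalIntegrable _ _
    · obtain ⟨hc, L, hL⟩ := hGt
      have h1 : IntegrableOn (fun q => θ (N q) * ft q + θ₁ (N q) * (-(ρ q * u q) * f q))
          (uIcc 0 t ×ˢ Icc (-|L|) |L|) :=
        hc.continuousOn.integrableOn_compact (isCompact_uIcc.prod isCompact_Icc)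
      have h2 : IntegrableOn (fun q => θ (N q) * ft q + θ₁ (N q) * (-(ρ q * u q) * f q))
          (uIoc 0 t ×ˢ (univ : Set ℝ)) := by
        refine IntegrableOn.of_forall_sdiff_eq_zero
          (h1.mono_set (prod_mono uIoc_subset_uIcc (le_refl _)))
          (measurableSet_uIoc.prod MeasurableSet.univ) ?_
        rintro ⟨s, x⟩ ⟨⟨hs, _⟩, hx⟩
        refine hL s x ?_
        by_contra hlt
        rw [not_le] at hlt
        exact hx ⟨hs, abs_le.1 (hlt.le.trans (le_abs_self L))⟩
      rw [IntegrableOn, Measure.volume_eq_prod, ← Measure.prod_restrict, Measure.restrict_univ] at h2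
      exact h2
  rw [htime]
  unfold J
  refine intervalIntegral.integral_congr fun τ _ => ?_
  have e := I_lin2 hGt ((A.mul (f := fun q => u q * fx q + ux q * f q + jx q)
      (((hu.mul hf.cont_x).add (hux.mul hf.cont)).add hjx)).add
      (A₁.mul (f := fun q => ρ q * (u q * f q + j q)) (cρ.mul ((hu.mul hf.cont).add hj)))) 1 1
      (k := fun q => θ (N q) * (ft q + u q * fx q + ux q * f q + jx q) + θ₁ (N q) * (ρ q * j q))
      (fun q => by ring) τ
  have := hdiv τ
  rw [e, this]; ring


/-! ### Cutoff functions of the mass label -/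

/-- A fixed smooth bump equal to `1` on `[-1,1]` and vanishing outside `(-2,2)`. -/
noncomputable def bump : ContDiffBump (0 : ℝ) := ⟨1, 2, one_pos, one_lt_two⟩

noncomputable def chi (n : ℝ) : ℝ := bump n
noncomputable def chi1 : ℝ → ℝ := deriv chi
noncomputable def chi2 : ℝ → ℝ := deriv chi1

/-- The cutoff at scale `R`. The fourth power makes `θ'²/θ` and `θ''²/θ` bounded. -/
noncomputable def th (R n : ℝ) : ℝ := chi (n / R) ^ 4
/-- First derivative of `th R`. -/
noncomputable def th1 (R n : ℝ) : ℝ := 4 * chi (n / R) ^ 3 * chi1 (n / R) / R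
/-- Second derivative of `th R`. -/
noncomputable def th2 (R n : ℝ) : ℝ :=
  (12 * chi (n / R) ^ 2 * chi1 (n / R) ^ 2 + 4 * chi (n / R) ^ 3 * chi2 (n / R)) / R ^ 2
/-- The weight `θ'²/θ`. -/
noncomputable def om (R n : ℝ) : ℝ := 16 * chi (n / R) ^ 2 * chi1 (n / R) ^ 2 / R ^ 2
/-- Derivative of `om R`. -/
noncomputable def om1 (R n : ℝ) : ℝ :=
  16 * (2 * chi (n / R) * chi1 (n / R) ^ 3
    + 2 * chi (n / R) ^ 2 * chi1 (n / R) * chi2 (n / R)) / R ^ 3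

lemma chi_smooth : ContDiff ℝ (⊤ : ℕ∞) chi := bump.contDiff

lemma chi_hasDeriv (n : ℝ) : HasDerivAt chi (chi1 n) n :=
  (chi_smooth.differentiable (by simp) n).hasDerivAt

lemma chi1_smooth : ContDiff ℝ (⊤ : ℕ∞) chi1 := by
  have h := chi_smooth
  rw [show ((⊤ : ℕ∞) : WithTop ℕ∞) = (⊤ : ℕ∞) + 1 from rfl, contDiff_succ_iff_deriv] at h
  exact h.2.2

lemma chi1_hasDeriv (n : ℝ) : HasDerivAt chi1 (chi2 n) n :=
  (chi1_smooth.differentiable (by simp) n).hasDerivAt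

lemma chi2_cont : Continuous chi2 := chi1_smooth.continuous_deriv (by simp)

lemma chi_nonneg (n : ℝ) : 0 ≤ chi n := bump.nonneg
lemma chi_le_one (n : ℝ) : chi n ≤ 1 := bump.le_one
lemma chi_one {n : ℝ} (h : |n| ≤ 1) : chi n = 1 :=
  bump.one_of_mem_closedBall (by simpa [bump] using h)
lemma chi_zero {n : ℝ} (h : 2 ≤ |n|) : chi n = 0 :=
  bump.zero_of_le_dist (by simpa [bump] using h)

lemma chi1_zero_in {n : ℝ} (h : |n| < 1) : chi1 n = 0 := by
  have : chi =ᶠ[nhds n] fun _ => 1 := by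
    filter_upwards [(isOpen_lt continuous_abs continuous_const).mem_nhds h] with m hm
    exact chi_one (le_of_lt hm)
  rw [chi1, this.deriv_eq]; simp

lemma chi2_zero_in {n : ℝ} (h : |n| < 1) : chi2 n = 0 := by
  have : chi1 =ᶠ[nhds n] fun _ => 0 := by
    filter_upwards [(isOpen_lt continuous_abs continuous_const).mem_nhds h] with m hm
    exact chi1_zero_in hm
  rw [chi2, this.deriv_eq]; simp

lemma chi1_zero_out {n : ℝ} (h : 2 < |n|) : chi1 n = 0 := by
  have : chi =ᶠ[nhds n] fun _ => 0 := by
    filter_upwards [(isOpen_lt continuous_const continuous_abs).mem_nhds h] with m hm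
    exact chi_zero (le_of_lt hm)
  rw [chi1, this.deriv_eq]; simp

lemma chi2_zero_out {n : ℝ} (h : 2 < |n|) : chi2 n = 0 := by
  have : chi1 =ᶠ[nhds n] fun _ => 0 := by
    filter_upwards [(isOpen_lt continuous_const continuous_abs).mem_nhds h] with m hm
    exact chi1_zero_out hm
  rw [chi2, this.deriv_eq]; simp

lemma bounded_of_out {f : ℝ → ℝ} (hf : Continuous f) (h : ∀ n, 2 < |n| → f n = 0) :
    ∃ C, 1 ≤ C ∧ ∀ n, |f n| ≤ C := by
  obtain ⟨C, hC⟩ := (isCompact_Icc (a := (-2 : ℝ)) (b := 2)).exists_bound_of_continuousOn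
    hf.continuousOn
  refine ⟨max C 1, le_max_right _ _, fun n => ?_⟩
  by_cases hn : |n| ≤ 2
  · exact (hC n (abs_le.1 hn)).trans (le_max_left _ _)
  · rw [h n (not_le.1 hn)]; simp

lemma cut_bounds : ∃ C : ℝ, 1 ≤ C ∧ ∀ R, 0 < R → ∀ n, om R n ≤ C / R ^ 2 ∧ |th1 R n| ≤ C / R ∧
    th2 R n ^ 2 ≤ C * th R n / R ^ 4 := by
  obtain ⟨A, hA1, hA⟩ := bounded_of_out chi1_smooth.continuous fun n => chi1_zero_out
  obtain ⟨B, hB1, hB⟩ := bounded_of_out chi2_cont fun n => chi2_zero_out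
  refine ⟨16 * A ^ 2 + 4 * A + (12 * A ^ 2 + 4 * B) ^ 2, by nlinarith, fun R hR n => ?_⟩
  have a := hA (n / R)
  have b := hB (n / R)
  have c0 := chi_nonneg (n / R)
  have c1 := chi_le_one (n / R)
  simp only [om, th1, th2, th]
  set c := chi (n / R)
  set a' := chi1 (n / R)
  set b' := chi2 (n / R)
  have a2 : a' ^ 2 ≤ A ^ 2 := sq_le_sq' (by linarith [abs_le.1 a]) (abs_le.1 a).2
  have c2 : c ^ 2 ≤ 1 := pow_le_one₀ c0 c1
  have c3 : c ^ 3 ≤ 1 := pow_le_one₀ c0 c1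
  have hsq : 0 ≤ (12 * A ^ 2 + 4 * B) ^ 2 := sq_nonneg _
  refine ⟨?_, ?_, ?_⟩
  · gcongr
    have : c ^ 2 * a' ^ 2 ≤ 1 * A ^ 2 := mul_le_mul c2 a2 (sq_nonneg _) zero_le_one
    nlinarith
  · rw [abs_div, abs_of_pos hR]
    gcongr
    rw [abs_mul, abs_of_nonneg (by positivity : (0 : ℝ) ≤ 4 * c ^ 3)]
    have : c ^ 3 * |a'| ≤ 1 * A := mul_le_mul c3 a (abs_nonneg _) zero_le_one
    nlinarith
  · have e : ((12 * c ^ 2 * a' ^ 2 + 4 * c ^ 3 * b') / R ^ 2) ^ 2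
        = ((12 * a' ^ 2 + 4 * c * b') ^ 2 * c ^ 4) / R ^ 4 := by
      field_simp
    rw [e]
    gcongr
    have h1 : |12 * a' ^ 2 + 4 * c * b'| ≤ 12 * A ^ 2 + 4 * B := by
      have : |4 * c * b'| ≤ 4 * B := by
        rw [abs_mul, abs_of_nonneg (by positivity : (0 : ℝ) ≤ 4 * c)]
        nlinarith [mul_le_mul c1 b (abs_nonneg _) zero_le_one]
      calc _ ≤ |12 * a' ^ 2| + |4 * c * b'| := abs_add_le _ _
        _ ≤ _ := by rw [abs_of_nonneg (by positivity : (0 : ℝ) ≤ 12 * a' ^ 2)]; linarith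
    have h2 : (12 * a' ^ 2 + 4 * c * b') ^ 2 ≤ (12 * A ^ 2 + 4 * B) ^ 2 :=
      sq_le_sq' (by linarith [abs_le.1 h1]) (abs_le.1 h1).2
    nlinarith

/-- A numerical constant bounding all derivatives of the cutoffs. -/
noncomputable def Cc : ℝ := cut_bounds.choose
lemma one_le_Cc : 1 ≤ Cc := cut_bounds.choose_spec.1
lemma om_le {R : ℝ} (hR : 0 < R) (n : ℝ) : om R n ≤ Cc / R ^ 2 := (cut_bounds.choose_spec.2 R hR n).1
lemma th1_abs {R : ℝ} (hR : 0 < R) (n : ℝ) : |th1 R n| ≤ Cc / R :=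
  (cut_bounds.choose_spec.2 R hR n).2.1
lemma th2_sq {R : ℝ} (hR : 0 < R) (n : ℝ) : th2 R n ^ 2 ≤ Cc * th R n / R ^ 4 :=
  (cut_bounds.choose_spec.2 R hR n).2.2

lemma om_nonneg (R n : ℝ) : 0 ≤ om R n := by unfold om; positivity
lemma th_nonneg (R n : ℝ) : 0 ≤ th R n := by unfold th; positivity
lemma th_le_one (R n : ℝ) : th R n ≤ 1 := pow_le_one₀ (chi_nonneg _) (chi_le_one _)
lemma th1_sq (R n : ℝ) : th1 R n ^ 2 = om R n * th R n := by unfold th1 om th; ring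

lemma abs_div_R {R : ℝ} (hR : 0 < R) (n : ℝ) : |n / R| = |n| / R := by rw [abs_div, abs_of_pos hR]

lemma th_one {R : ℝ} (hR : 0 < R) {n : ℝ} (h : |n| ≤ R) : th R n = 1 := by
  unfold th
  rw [chi_one (by rw [abs_div_R hR]; exact (div_le_one hR).2 h)]; simp
lemma chi_zero' {R : ℝ} (hR : 0 < R) {n : ℝ} (h : 2 * R ≤ |n|) : chi (n / R) = 0 :=
  chi_zero (by rw [abs_div_R hR]; exact (le_div_iff₀ hR).2 h)
lemma th_zero {R : ℝ} (hR : 0 < R) {n : ℝ} (h : 2 * R ≤ |n|) : th R n = 0 := by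
  simp [th, chi_zero' hR h]
lemma th1_zero {R : ℝ} (hR : 0 < R) {n : ℝ} (h : 2 * R ≤ |n|) : th1 R n = 0 := by
  simp [th1, chi_zero' hR h]
lemma th2_zero {R : ℝ} (hR : 0 < R) {n : ℝ} (h : 2 * R ≤ |n|) : th2 R n = 0 := by
  simp [th2, chi_zero' hR h]
lemma om_zero {R : ℝ} (hR : 0 < R) {n : ℝ} (h : 2 * R ≤ |n|) : om R n = 0 := by
  simp [om, chi_zero' hR h]
lemma om1_zero {R : ℝ} (hR : 0 < R) {n : ℝ} (h : 2 * R ≤ |n|) : om1 R n = 0 := by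
  simp [om1, chi_zero' hR h]
lemma th1_zero_in {R : ℝ} (hR : 0 < R) {n : ℝ} (h : |n| < R) : th1 R n = 0 := by
  simp [th1, chi1_zero_in (n := n / R) (by rw [abs_div_R hR]; exact (div_lt_one hR).2 h)]
lemma th2_zero_in {R : ℝ} (hR : 0 < R) {n : ℝ} (h : |n| < R) : th2 R n = 0 := by
  simp [th2, chi1_zero_in (n := n / R) (by rw [abs_div_R hR]; exact (div_lt_one hR).2 h),
    chi2_zero_in (n := n / R) (by rw [abs_div_R hR]; exact (div_lt_one hR).2 h)]

lemma om_le_th {R : ℝ} (hR : 0 < R) (n : ℝ) : om R n ≤ Cc / R ^ 2 * th (2 * R) n := by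
  by_cases h : |n| ≤ 2 * R
  · rw [th_one (by positivity) h, mul_one]; exact om_le hR n
  · rw [om_zero hR (not_le.1 h).le]
    have := one_le_Cc
    exact mul_nonneg (by positivity) (th_nonneg _ _)

lemma th1_le_th {R : ℝ} (hR : 0 < R) (n : ℝ) : |th1 R n| ≤ Cc / R * th (2 * R) n := by
  by_cases h : |n| ≤ 2 * R
  · rw [th_one (by positivity) h, mul_one]; exact th1_abs hR n
  · rw [th1_zero hR (not_le.1 h).le]
    have := one_le_Cc
    simpa using mul_nonneg (by positivity) (th_nonneg _ _)

lemma th_le_th {R : ℝ} (hR : 0 < R) (n : ℝ) : th R n ≤ th (2 * R) n := by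
  by_cases h : |n| ≤ 2 * R
  · rw [th_one (R := 2 * R) (by positivity) h]; exact th_le_one _ _
  · rw [th_zero hR (not_le.1 h).le]; exact th_nonneg _ _

lemma hasDeriv_scale {f : ℝ → ℝ} {f' : ℝ} {R : ℝ} (n : ℝ) (h : HasDerivAt f f' (n / R)) :
    HasDerivAt (fun m => f (m / R)) (f' / R) n := by
  have := h.comp n ((hasDerivAt_id n).div_const R)
  refine this.congr_deriv ?_
  ring

lemma th_hasDeriv (R n : ℝ) : HasDerivAt (th R) (th1 R n) n := by
  refine ((hasDeriv_scale n (chi_hasDeriv (n / R))).pow 4).congr_deriv ?_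
  simp only [th1]; norm_num; ring

lemma th1_hasDeriv (R n : ℝ) : HasDerivAt (th1 R) (th2 R n) n := by
  refine (((((hasDeriv_scale n (chi_hasDeriv (n / R))).pow 3).const_mul 4).mul
    (hasDeriv_scale n (chi1_hasDeriv (n / R)))).div_const R).congr_deriv ?_
  simp only [th2, Pi.pow_apply]; norm_num; ring

lemma om_hasDeriv (R n : ℝ) : HasDerivAt (om R) (om1 R n) n := by
  refine (((((hasDeriv_scale n (chi_hasDeriv (n / R))).pow 2).const_mul 16).mul
    ((hasDeriv_scale n (chi1_hasDeriv (n / R))).pow 2)).div_const (R ^ 2)).congr_deriv ?_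
  simp only [om1, Pi.pow_apply]; norm_num; ring

lemma th_cont (R : ℝ) : Continuous (th R) :=
  continuous_iff_continuousAt.2 fun x => (th_hasDeriv R x).continuousAt
lemma th1_cont (R : ℝ) : Continuous (th1 R) :=
  continuous_iff_continuousAt.2 fun x => (th1_hasDeriv R x).continuousAt
lemma om_cont (R : ℝ) : Continuous (om R) :=
  continuous_iff_continuousAt.2 fun x => (om_hasDeriv R x).continuousAt
lemma th2_cont (R : ℝ) : Continuous (th2 R) := by
  have h0 := chi_smooth.continuous
  have h1 := chi1_smooth.continuous
  have h2 := chi2_cont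
  unfold th2; fun_prop
lemma om1_cont (R : ℝ) : Continuous (om1 R) := by
  have h0 := chi_smooth.continuous
  have h1 := chi1_smooth.continuous
  have h2 := chi2_cont
  unfold om1; fun_prop


/-! ### The flow in terms of the effective velocity -/

/-- A classical solution on `[0,T] × ℝ` with the velocity at infinity equal to zero, together with
its effective velocity `V = u + ε ρₓ/ρ²`, its pressure `p`, the mass label `N` (`N_x = ρ`,
`N_t = -ρu`), the potential `Ψ` of the effective momentum (`Ψ_x = ρV`, `Ψ_t = -(ρuV+p)`), and the
background enthalpy `eb` and pressure `pb`, constant outside `[-L₀,L₀]`.  `K` and `cs` are the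
constants in the pointwise comparisons of `ρ`, `p` and the relative internal energy
`p/(γ-1) - eb ρ + pb`. -/
structure NS (γ ε T : ℝ) where
  (ρ ρt ρx u ut ux uxx V Vt Vx p pt px N Ψ : ℝ × ℝ → ℝ)
  (eb pb β pbx : ℝ → ℝ)
  (L₀ K cs : ℝ)
  hγ : 1 < γ
  hε : 0 < ε
  hT : 0 < T
  C1ρ : C1 T ρ ρt ρx
  C1u : C1 T u ut ux
  C1V : C1 T V Vt Vx
  C1p : C1 T p pt px
  C1N : C1 T N (fun q => -(ρ q * u q)) ρ
  C1Ψ : C1 T Ψ (fun q => -(ρ q * u q * V q + p q)) (fun q => ρ q * V q)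
  cuxx : Continuous uxx
  duxx : ∀ t x, HasDerivAt (fun y => ux (t, y)) (uxx (t, x)) x
  ρpos : ∀ q, 0 < ρ q
  ppos : ∀ q, 0 < p q
  mass : ∀ q, ρt q = -(ρx q * u q + ρ q * ux q)
  V_def : ∀ q, V q = u q + ε * ρx q / ρ q ^ 2
  V_eq : ∀ q, ρ q * (Vt q + u q * Vx q) = -px q
  u_eq : ∀ q, ρ q * (ut q + u q * ux q) = -px q + ε * uxx q
  px_eq : ∀ q, px q = γ * p q * ρx q / ρ q
  pt_eq : ∀ q, pt q = γ * p q * ρt q / ρ q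
  deb : ∀ x, HasDerivAt eb (β x) x
  dpb : ∀ x, HasDerivAt pb (pbx x) x
  cβ : Continuous β
  cpbx : Continuous pbx
  β_out : ∀ x, L₀ ≤ |x| → β x = 0
  pbx_out : ∀ x, L₀ ≤ |x| → pbx x = 0
  K_one : 1 ≤ K
  h_nonneg : ∀ q, 0 ≤ p q / (γ - 1) - eb q.2 * ρ q + pb q.2
  hK1 : ∀ q, 1 + p q ≤ K * (p q / (γ - 1) - eb q.2 * ρ q + pb q.2 + ρ q)
  hK2 : ∀ q, ρ q * Real.log (ρ q) ^ 2 ≤ K * (p q / (γ - 1) - eb q.2 * ρ q + pb q.2 + ρ q)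
  hK3 : ∀ q, cs ≤ p q → ρ q ≤ K * (p q / (γ - 1) - eb q.2 * ρ q + pb q.2)
  hK4 : ∀ q, ρ q ≤ K * (1 + p q)
  pb_nonneg : ∀ x, 0 ≤ pb x
  pb_le : ∀ x, pb x ≤ K
  proper : ∀ r : ℝ, ∃ L, ∀ t x, L ≤ |x| → r ≤ |N (t, x)|
  ends_log : ∀ t, t = 0 ∨ t = T → ∃ A, ∀ x, |Real.log (ρ (t, x))| ≤ A
  ends_int : ∀ t, t = 0 ∨ t = T → Integrable (fun x => ρ (t, x) * u (t, x) ^ 2)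
  init_B : Integrable (fun x => ρ (0, x) * V (0, x) ^ 2 / 2
    + (p (0, x) / (γ - 1) - eb x * ρ (0, x) + pb x))

namespace NS

variable {γ ε T : ℝ} (S : NS γ ε T)

/-- Relative internal energy. -/
noncomputable def h (q : ℝ × ℝ) : ℝ := S.p q / (γ - 1) - S.eb q.2 * S.ρ q + S.pb q.2
/-- Energy density built with the effective velocity. -/
noncomputable def fB (q : ℝ × ℝ) : ℝ := S.ρ q * S.V q ^ 2 / 2 + S.h q
/-- Relative mechanical energy density. -/
noncomputable def fE (q : ℝ × ℝ) : ℝ := S.ρ q * S.u q ^ 2 / 2 + S.h q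
/-- The dissipation `γ p ρₓ²/ρ³` of the effective energy. -/
noncomputable def d (q : ℝ × ℝ) : ℝ := γ * S.p q * S.ρx q ^ 2 / S.ρ q ^ 3
/-- `W θ f` is `f` weighted by a cutoff of the mass label. -/
def W (θ : ℝ → ℝ) (f : ℝ × ℝ → ℝ) (q : ℝ × ℝ) : ℝ := θ (S.N q) * f q

lemma C1eb : C1 T (fun q => S.eb q.2) (fun _ => 0) (fun q => S.β q.2) := C1.of_space S.deb S.cβ
lemma C1pb : C1 T (fun q => S.pb q.2) (fun _ => 0) (fun q => S.pbx q.2) := C1.of_space S.dpb S.cpbx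

lemma ch : Continuous S.h := by
  have h1 := S.C1p.cont
  have h2 := S.C1eb.cont
  have h3 := S.C1pb.cont
  have h4 := S.C1ρ.cont
  exact ((h1.div_const _).sub (h2.mul h4)).add h3
lemma cfB : Continuous S.fB :=
  ((S.C1ρ.cont.mul (S.C1V.cont.pow 2)).div_const 2).add S.ch
lemma cfE : Continuous S.fE :=
  ((S.C1ρ.cont.mul (S.C1u.cont.pow 2)).div_const 2).add S.ch
lemma cd : Continuous S.d :=
  ((continuous_const.mul S.C1p.cont).mul (S.C1ρ.cont_x.pow 2)).div (S.C1ρ.cont.pow 3)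
    fun q => (pow_pos (S.ρpos q) 3).ne'

lemma h0 (q : ℝ × ℝ) : 0 ≤ S.h q := S.h_nonneg q
lemma fB0 (q : ℝ × ℝ) : 0 ≤ S.fB q := by
  have := S.h0 q; have := S.ρpos q; unfold fB; positivity
lemma fE0 (q : ℝ × ℝ) : 0 ≤ S.fE q := by
  have := S.h0 q; have := S.ρpos q; unfold fE; positivity
lemma d0 (q : ℝ × ℝ) : 0 ≤ S.d q := by
  have := S.ppos q; have := S.ρpos q; have := S.hγ; unfold d; positivity

lemma W0 {θ : ℝ → ℝ} {f : ℝ × ℝ → ℝ} (hθ : ∀ n, 0 ≤ θ n) (hf : ∀ q, 0 ≤ f q) (q : ℝ × ℝ) :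
    0 ≤ S.W θ f q := mul_nonneg (hθ _) (hf q)

lemma adm {θ : ℝ → ℝ} {f : ℝ × ℝ → ℝ} {r : ℝ} (hθ : Continuous θ) (hr : ∀ n, r ≤ |n| → θ n = 0)
    (hf : Continuous f) : Adm (S.W θ f) :=
  (Adm.comp S.C1N.cont S.proper hθ hr).mul hf

lemma admθ {f : ℝ × ℝ → ℝ} {R : ℝ} (hR : 0 < R) (hf : Continuous f) : Adm (S.W (th R) f) :=
  S.adm (th_cont R) (fun _ => th_zero hR) hf
lemma admθ1 {f : ℝ × ℝ → ℝ} {R : ℝ} (hR : 0 < R) (hf : Continuous f) : Adm (S.W (th1 R) f) :=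
  S.adm (th1_cont R) (fun _ => th1_zero hR) hf
lemma admθ2 {f : ℝ × ℝ → ℝ} {R : ℝ} (hR : 0 < R) (hf : Continuous f) : Adm (S.W (th2 R) f) :=
  S.adm (th2_cont R) (fun _ => th2_zero hR) hf
lemma admω {f : ℝ × ℝ → ℝ} {R : ℝ} (hR : 0 < R) (hf : Continuous f) : Adm (S.W (om R) f) :=
  S.adm (om_cont R) (fun _ => om_zero hR) hf
lemma admω1 {f : ℝ × ℝ → ℝ} {R : ℝ} (hR : 0 < R) (hf : Continuous f) : Adm (S.W (om1 R) f) :=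
  S.adm (om1_cont R) (fun _ => om1_zero hR) hf

/-- The balance law with source `s = D_t f + u_x f + j_x`. -/
lemma bal {θ θ₁ : ℝ → ℝ} (hθ : ∀ n, HasDerivAt θ (θ₁ n) n) (hθ₁ : Continuous θ₁)
    {r : ℝ} (hr : ∀ n, r ≤ |n| → θ n = 0) (hr₁ : ∀ n, r ≤ |n| → θ₁ n = 0)
    {f ft fx j jx s : ℝ × ℝ → ℝ} (hf : C1 T f ft fx) (hj : Continuous j) (hjx : Continuous jx)
    (hjx' : ∀ t x, HasDerivAt (fun y => j (t, y)) (jx (t, x)) x)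
    (hs : ∀ q, s q = ft q + S.u q * fx q + S.ux q * f q + jx q)
    {t : ℝ} (ht : t ∈ Icc 0 T) :
    I (S.W θ f) t - I (S.W θ f) 0 = J (S.W θ s) t + J (S.W θ₁ (fun q => S.ρ q * j q)) t := by
  have hb := balance S.C1u.cont S.C1u.cont_x S.C1u.dx S.C1N S.proper hθ hθ₁ hr hr₁ hf hj hjx hjx' ht
  have hs' : s = fun q => ft q + S.u q * fx q + S.ux q * f q + jx q := funext hs
  have hc : Continuous s := by
    rw [hs']
    exact ((hf.cont_t.add (S.C1u.cont.mul hf.cont_x)).add (S.C1u.cont_x.mul hf.cont)).add hjx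
  have hθc : Continuous θ := continuous_iff_continuousAt.2 fun x => (hθ x).continuousAt
  have e := J_lin2 (S.adm hθc hr hc) (S.adm hθ₁ hr₁ (S.C1ρ.cont.mul hj)) 1 1
    (k := fun q => θ (S.N q) * (ft q + S.u q * fx q + S.ux q * f q + jx q)
      + θ₁ (S.N q) * (S.ρ q * j q)) (fun q => by simp [W, hs]) t
  rw [e, one_mul, one_mul] at hb
  exact hb

lemma V_sub (q : ℝ × ℝ) : ε * S.d q = (S.V q - S.u q) * S.px q := by
  have := (S.ρpos q).ne'
  rw [S.V_def, S.px_eq, d]; field_simp; ring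

lemma C1h : C1 T S.h (fun q => S.pt q / (γ - 1) - S.eb q.2 * S.ρt q)
    (fun q => S.px q / (γ - 1) - (S.β q.2 * S.ρ q + S.eb q.2 * S.ρx q) + S.pbx q.2) := by
  have h1 := (((S.C1p.mul (C1.const (T := T) (γ - 1)⁻¹)).sub (S.C1eb.mul S.C1ρ)).add S.C1pb)
  have e : S.h = fun q => S.p q * (γ - 1)⁻¹ - S.eb q.2 * S.ρ q + S.pb q.2 := by
    funext q; simp [h, div_eq_mul_inv]
  rw [e]
  exact h1.congr (fun q => by simp [div_eq_mul_inv]) (fun q => by simp [div_eq_mul_inv])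

lemma h_transport (q : ℝ × ℝ) :
    (S.pt q / (γ - 1) - S.eb q.2 * S.ρt q)
      + S.u q * (S.px q / (γ - 1) - (S.β q.2 * S.ρ q + S.eb q.2 * S.ρx q) + S.pbx q.2)
      + S.ux q * S.h q = -(S.p q * S.ux q) - S.ρ q * S.u q * S.β q.2
        + (S.u q * S.pbx q.2 + S.ux q * S.pb q.2) := by
  have h1 := (S.ρpos q).ne'
  have h2 : γ - 1 ≠ 0 := by linarith [S.hγ]
  rw [S.pt_eq, S.px_eq, S.mass, h]
  field_simp; ring

lemma dj (t x : ℝ) : HasDerivAt (fun y => (S.p (t, y) - S.pb y) * S.u (t, y))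
    ((S.px (t, x) - S.pbx x) * S.u (t, x) + (S.p (t, x) - S.pb x) * S.ux (t, x)) x :=
  ((S.C1p.dx t x).sub (S.dpb x)).mul (S.C1u.dx t x)

lemma cj : Continuous (fun q => (S.p q - S.pb q.2) * S.u q) :=
  (S.C1p.cont.sub S.C1pb.cont).mul S.C1u.cont
lemma cjx : Continuous (fun q => (S.px q - S.pbx q.2) * S.u q + (S.p q - S.pb q.2) * S.ux q) :=
  ((S.C1p.cont_x.sub S.C1pb.cont_x).mul S.C1u.cont).add
    ((S.C1p.cont.sub S.C1pb.cont).mul S.C1u.cont_x)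

/-- The flux of energy through the cutoff, without viscous part. -/
noncomputable def flux (q : ℝ × ℝ) : ℝ := S.ρ q * ((S.p q - S.pb q.2) * S.u q)
/-- Work of the background gradient. -/
noncomputable def work (q : ℝ × ℝ) : ℝ := S.ρ q * S.u q * S.β q.2

lemma cflux : Continuous S.flux := S.C1ρ.cont.mul S.cj
lemma cwork : Continuous S.work := (S.C1ρ.cont.mul S.C1u.cont).mul S.C1eb.cont_x

/-- Localised balance of the effective energy. -/
lemma identA {R : ℝ} (hR : 0 < R) {t : ℝ} (ht : t ∈ Icc 0 T) :
    I (S.W (th R) S.fB) t + ε * J (S.W (th R) S.d) t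
      = I (S.W (th R) S.fB) 0 + J (S.W (th1 R) S.flux) t - J (S.W (th R) S.work) t := by
  have hC := ((S.C1ρ.mul (S.C1V.mul S.C1V)).mul (C1.const (T := T) (1 / 2))).add S.C1h
  have e : (fun q => S.ρ q * (S.V q * S.V q) * (1 / 2) + S.h q) = S.fB := by
    funext q; simp only [fB]; ring
  rw [e] at hC
  have b := S.bal (th_hasDeriv R) (th1_cont R) (fun _ => th_zero hR) (fun _ => th1_zero hR) hC
    S.cj S.cjx S.dj (s := fun q => -(ε * S.d q) - S.work q) (fun q => by
      have h1 := S.h_transport q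
      have h2 := S.V_eq q
      have h3 := S.mass q
      have h4 := S.V_sub q
      simp only [work, fB] at h1 h4 ⊢
      linear_combination (-1) * h1 - h4 - S.V q * h2 - (S.V q * S.V q / 2) * h3) ht
  have l := J_lin2 (S.admθ hR S.cd) (S.admθ hR S.cwork) (-ε) (-1)
    (k := S.W (th R) (fun q => -(ε * S.d q) - S.work q)) (fun q => by simp only [W]; ring) t
  have : S.W (th1 R) (fun q => S.ρ q * ((S.p q - S.pb q.2) * S.u q)) = S.W (th1 R) S.flux := rfl
  rw [l, this] at b
  linarith

/-- Localised balance of the mechanical energy. -/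
lemma identE {R : ℝ} (hR : 0 < R) {t : ℝ} (ht : t ∈ Icc 0 T) :
    I (S.W (th R) S.fE) t + ε * J (S.W (th R) (fun q => S.ux q ^ 2)) t
      = I (S.W (th R) S.fE) 0 + J (S.W (th1 R) S.flux) t
        - ε * J (S.W (th1 R) (fun q => S.ρ q * (S.u q * S.ux q))) t
        - J (S.W (th R) S.work) t := by
  have hC := ((S.C1ρ.mul (S.C1u.mul S.C1u)).mul (C1.const (T := T) (1 / 2))).add S.C1h
  have e : (fun q => S.ρ q * (S.u q * S.u q) * (1 / 2) + S.h q) = S.fE := by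
    funext q; simp only [fE]; ring
  rw [e] at hC
  have c1 : Continuous (fun q => ε * (S.u q * S.ux q)) :=
    continuous_const.mul (S.C1u.cont.mul S.C1u.cont_x)
  have b := S.bal (th_hasDeriv R) (th1_cont R) (fun _ => th_zero hR) (fun _ => th1_zero hR) hC
    (j := fun q => (S.p q - S.pb q.2) * S.u q - ε * (S.u q * S.ux q)) (S.cj.sub c1)
    (jx := fun q => ((S.px q - S.pbx q.2) * S.u q + (S.p q - S.pb q.2) * S.ux q)
      - ε * (S.ux q * S.ux q + S.u q * S.uxx q))
    (S.cjx.sub (continuous_const.mul ((S.C1u.cont_x.mul S.C1u.cont_x).add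
      (S.C1u.cont.mul S.cuxx))))
    (fun t x => (S.dj t x).sub (((S.C1u.dx t x).mul (S.duxx t x)).const_mul ε))
    (s := fun q => -(ε * S.ux q ^ 2) - S.work q) (fun q => by
      have h1 := S.h_transport q
      have h2 := S.u_eq q
      have h3 := S.mass q
      simp only [work, fE] at h1 ⊢
      linear_combination (-1) * h1 - S.u q * h2 - (S.u q * S.u q / 2) * h3) ht
  have cu2 : Continuous (fun q => S.ux q ^ 2) := S.C1u.cont_x.pow 2
  have cr : Continuous (fun q => S.ρ q * (S.u q * S.ux q)) :=
    S.C1ρ.cont.mul (S.C1u.cont.mul S.C1u.cont_x)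
  have l := J_lin2 (S.admθ hR cu2) (S.admθ hR S.cwork) (-ε) (-1)
    (k := S.W (th R) (fun q => -(ε * S.ux q ^ 2) - S.work q)) (fun q => by simp only [W]; ring) t
  have l' := J_lin2 (S.admθ1 hR S.cflux) (S.admθ1 hR cr) 1 (-ε)
    (k := S.W (th1 R) (fun q => S.ρ q * ((S.p q - S.pb q.2) * S.u q - ε * (S.u q * S.ux q))))
    (fun q => by simp only [W, flux]; ring) t
  rw [l, l'] at b
  linarith

end NS
namespace NS
variable {γ ε T : ℝ} (S : NS γ ε T)

/-! ### The potential of the effective momentum -/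

lemma N_mono (t : ℝ) : Monotone (fun x => S.N (t, x)) :=
  monotone_of_hasDerivAt_nonneg (S.C1N.dx t) fun x => (S.ρpos (t, x)).le

/-- The mass carried by a range of labels of length `2r`. -/
lemma mass_le {φ : ℝ → ℝ} (hφ : Continuous φ) (h0 : ∀ n, 0 ≤ φ n) {M r : ℝ} (hM : ∀ n, φ n ≤ M)
    (hr : 0 ≤ r) (hz : ∀ n, r ≤ |n| → φ n = 0) (t : ℝ) : I (S.W φ S.ρ) t ≤ 2 * r * M := by
  obtain ⟨L, hL⟩ := S.proper r
  have e1 : I (S.W φ S.ρ) t = ∫ x in (-|L|)..|L|, S.W φ S.ρ (t, x) := by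
    refine integral_eq_interval (L := L) (fun x hx => ?_) (le_abs_self L) (abs_nonneg L)
    simp [W, hz _ (hL t x hx)]
  have e2 : ∫ x in (-|L|)..|L|, S.W φ S.ρ (t, x) = ∫ n in S.N (t, -|L|)..S.N (t, |L|), φ n := by
    rw [← intervalIntegral.integral_comp_mul_deriv (f := fun x => S.N (t, x))
      (fun x _ => S.C1N.dx t x) (S.C1ρ.cont.comp (by fun_prop)).continuousOn hφ]
    rfl
  have hle : S.N (t, -|L|) ≤ S.N (t, |L|) :=
    S.N_mono t (by linarith [abs_nonneg L] : -|L| ≤ |L|)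
  have hint : Integrable φ := by
    refine hφ.integrable_of_hasCompactSupport
      (HasCompactSupport.intro (K := Icc (-r) r) isCompact_Icc fun x hx => hz x ?_)
    rw [mem_Icc, ← abs_le] at hx
    exact (not_le.1 hx).le
  rw [e1, e2, intervalIntegral.integral_of_le hle]
  refine (setIntegral_le_integral hint (Eventually.of_forall h0)).trans ?_
  rw [integral_eq_interval hz le_rfl hr]
  have := intervalIntegral.integral_mono_on (μ := volume) (f := φ) (g := fun _ => M)
    (by linarith : -r ≤ r) (hφ.intervalIntegrable _ _) (by simp) fun x _ => hM x
  simp at this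
  linarith

lemma mass_om {R : ℝ} (hR : 0 < R) (t : ℝ) : I (S.W (om R) S.ρ) t ≤ 4 * Cc / R := by
  refine (S.mass_le (om_cont R) (om_nonneg R) (om_le hR) (by positivity : 0 ≤ 2 * R)
    (fun _ => om_zero hR) t).trans (le_of_eq ?_)
  field_simp; ring

lemma mass_th {R : ℝ} (hR : 0 < R) (t : ℝ) : I (S.W (th R) S.ρ) t ≤ 4 * R := by
  refine (S.mass_le (th_cont R) (th_nonneg R) (th_le_one R) (by positivity : 0 ≤ 2 * R)
    (fun _ => th_zero hR) t).trans (le_of_eq ?_)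
  ring

lemma rV (q : ℝ × ℝ) : S.ρ q * S.V q = S.ρ q * S.u q + ε * (S.ρx q / S.ρ q) := by
  have := (S.ρpos q).ne'
  rw [S.V_def]; field_simp

/-- At the initial and final times `Ψ` grows slower than the square root of the mass. -/
lemma growth {t : ℝ} (ht : t = 0 ∨ t = T) {δ : ℝ} (hδ : 0 < δ) :
    ∃ R₀, 1 ≤ R₀ ∧ ∀ R, R₀ ≤ R → ∀ x, |S.N (t, x)| ≤ 2 * R → |S.Ψ (t, x)| ≤ δ * √R := by
  obtain ⟨A, hA⟩ := S.ends_log t ht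
  have hint := S.ends_int t ht
  set k : ℝ → ℝ := fun x => S.ρ (t, x) * S.u (t, x) ^ 2 with hk
  have kc : Continuous k :=
    (S.C1ρ.cont.mul (S.C1u.cont.pow 2)).comp (by fun_prop : Continuous fun x : ℝ => (t, x))
  set m : ℝ → ℝ := fun x => ∫ y in (0 : ℝ)..x, k y with hm
  have dm : ∀ x, HasDerivAt m (k x) x := fun x =>
    intervalIntegral.integral_hasDerivAt_right (kc.intervalIntegrable _ _)
      (kc.stronglyMeasurableAtFilter _ _) kc.continuousAt
  set g : ℝ → ℝ := fun x => S.Ψ (t, x) - ε * Real.log (S.ρ (t, x)) with hg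
  have dg : ∀ x, HasDerivAt g (S.ρ (t, x) * S.u (t, x)) x := by
    intro x
    refine ((S.C1Ψ.dx t x).sub (((S.C1ρ.dx t x).log (S.ρpos _).ne').const_mul ε)).congr_deriv ?_
    have := S.rV (t, x); linarith
  -- Young's inequality in integrated form
  have key : ∀ a, 0 < a → ∀ y x, y ≤ x →
      |g x - g y| ≤ a / 2 * (S.N (t, x) - S.N (t, y)) + (m x - m y) / (2 * a) := by
    intro a ha y x hyx
    have yg : ∀ z, |S.ρ (t, z) * S.u (t, z)| ≤ a / 2 * S.ρ (t, z) + k z / (2 * a) := by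
      intro z
      have hρ := S.ρpos (t, z)
      rw [abs_mul, abs_of_pos hρ, hk]
      have e : a / 2 * S.ρ (t, z) + S.ρ (t, z) * S.u (t, z) ^ 2 / (2 * a)
        - S.ρ (t, z) * |S.u (t, z)| = S.ρ (t, z) * (a - |S.u (t, z)|) ^ 2 / (2 * a) := by
        rw [← sq_abs (S.u (t, z))]; field_simp; ring
      have : 0 ≤ S.ρ (t, z) * (a - |S.u (t, z)|) ^ 2 / (2 * a) := by positivity
      linarith
    have m1 : Monotone (fun z => a / 2 * S.N (t, z) + m z / (2 * a) - g z) :=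
      monotone_of_hasDerivAt_nonneg (fun z => (((S.C1N.dx t z).const_mul (a / 2)).add
        ((dm z).div_const (2 * a))).sub (dg z)) fun z => by
          have := (le_abs_self _).trans (yg z); simp only [Pi.zero_apply]; linarith
    have m2 : Monotone (fun z => a / 2 * S.N (t, z) + m z / (2 * a) + g z) :=
      monotone_of_hasDerivAt_nonneg (fun z => (((S.C1N.dx t z).const_mul (a / 2)).add
        ((dm z).div_const (2 * a))).add (dg z)) fun z => by
          have := (neg_le_abs _).trans (yg z); simp only [Pi.zero_apply]; linarith
    have h1 := m1 hyx
    have h2 := m2 hyx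
    simp only at h1 h2
    rw [abs_le, sub_div]
    constructor <;> linarith
  set s := δ / 4 with hs
  have spos : 0 < s := by positivity
  -- tails of the kinetic energy
  have lim1 : Tendsto m atTop (nhds (∫ y in Ioi 0, k y)) :=
    intervalIntegral_tendsto_integral_Ioi 0 hint.integrableOn tendsto_id
  have lim2 : Tendsto m atBot (nhds (-∫ y in Iic 0, k y)) := by
    have := (intervalIntegral_tendsto_integral_Iic 0 hint.integrableOn
      (tendsto_id : Tendsto id atBot atBot)).neg
    refine this.congr fun x => ?_
    simp only [hm, id]; rw [intervalIntegral.integral_symm]; simp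
  have s2 : 0 < s ^ 2 / 2 := by positivity
  obtain ⟨X1, hX1⟩ := eventually_atTop.1 (Metric.tendsto_nhds.1 lim1 _ s2)
  obtain ⟨X2, hX2⟩ := eventually_atBot.1 (Metric.tendsto_nhds.1 lim2 _ s2)
  set X := max |X1| |X2| with hX
  have t1 : ∀ x, X ≤ x → m x - m X ≤ s ^ 2 := by
    intro x hx
    have hX1' : X1 ≤ X := (le_abs_self _).trans (le_max_left _ _)
    have a1 := hX1 x (hX1'.trans hx)
    have a2 := hX1 X hX1'
    rw [Real.dist_eq, abs_lt] at a1 a2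
    linarith
  have t2 : ∀ x, x ≤ -X → m (-X) - m x ≤ s ^ 2 := by
    intro x hx
    have hX2' : -X ≤ X2 := by linarith [neg_abs_le X2, le_max_right |X1| |X2|]
    have a1 := hX2 x (hx.trans hX2')
    have a2 := hX2 (-X) hX2'
    rw [Real.dist_eq, abs_lt] at a1 a2
    linarith
  have gc : Continuous g := continuous_iff_continuousAt.2 fun x => (dg x).continuousAt
  obtain ⟨C, hC⟩ := (isCompact_Icc (a := -X) (b := X)).exists_bound_of_continuousOn gc.continuousOn
  set D := |C| + ε * |A| with hD
  have Dn : 0 ≤ D := by have := S.hε; positivity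
  have X0 : 0 ≤ X := (abs_nonneg X1).trans (le_max_left _ _)
  refine ⟨1 + |S.N (t, X)| + |S.N (t, -X)| + (2 * D / δ) ^ 2, ?_, fun R hR x hx => ?_⟩
  · have := abs_nonneg (S.N (t, X)); have := abs_nonneg (S.N (t, -X)); nlinarith [sq_nonneg (2 * D / δ)]
  have b1 := abs_nonneg (S.N (t, X))
  have b2 := abs_nonneg (S.N (t, -X))
  have b3 := sq_nonneg (2 * D / δ)
  have R1 : 1 ≤ R := by linarith
  have hsq : √R ^ 2 = R := Real.sq_sqrt (by linarith)
  have sR : 0 < √R := Real.sqrt_pos.2 (by linarith)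
  have DR : D ≤ δ / 2 * √R := by
    have : 2 * D / δ ≤ √R := Real.le_sqrt_of_sq_le (by linarith)
    rw [div_le_iff₀ hδ] at this; linarith
  have logb : |ε * Real.log (S.ρ (t, x))| ≤ ε * |A| := by
    rw [abs_mul, abs_of_pos S.hε]
    exact mul_le_mul_of_nonneg_left ((hA x).trans (le_abs_self A)) S.hε.le
  have gb : |g x| ≤ |C| + δ / 2 * √R := by
    have hpos : 0 ≤ δ / 2 * √R := by positivity
    have hX' : |g X| ≤ |C| := (hC X ⟨by linarith, le_rfl⟩).trans (le_abs_self C)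
    have hX'' : |g (-X)| ≤ |C| := (hC (-X) ⟨le_rfl, by linarith⟩).trans (le_abs_self C)
    have est : ∀ n e : ℝ, n ≤ 3 * R → e ≤ s ^ 2 →
        s / √R / 2 * n + e / (2 * (s / √R)) ≤ δ / 2 * √R := by
      intro n e hn he
      have h1 : s / √R / 2 * n ≤ s / √R / 2 * (3 * R) := by gcongr
      have h2 : e / (2 * (s / √R)) ≤ s ^ 2 / (2 * (s / √R)) := by gcongr
      have h3 : s / √R / 2 * (3 * R) = 3 / 2 * s * √R := by
        nth_rewrite 2 [← hsq]; field_simp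
      have h4 : s ^ 2 / (2 * (s / √R)) = 1 / 2 * s * √R := by field_simp
      have : δ / 2 * √R = 2 * s * √R := by rw [hs]; ring
      linarith
    rcases lt_or_ge X x with h | h
    · have := key (s / √R) (by positivity) X x h.le
      have e := est (S.N (t, x) - S.N (t, X)) (m x - m X)
        (by linarith [abs_le.1 hx, neg_abs_le (S.N (t, X))]) (t1 x h.le)
      have := abs_add_le (g x - g X) (g X)
      rw [sub_add_cancel] at this
      linarith
    rcases lt_or_ge x (-X) with h' | h'
    · have := key (s / √R) (by positivity) x (-X) h'.le
      have e := est (S.N (t, -X) - S.N (t, x)) (m (-X) - m x)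
        (by linarith [abs_le.1 hx, le_abs_self (S.N (t, -X))]) (t2 x h'.le)
      have := abs_sub (g (-X)) (g (-X) - g x)
      rw [sub_sub_cancel] at this
      linarith
    · have := (hC x ⟨h', h⟩).trans (le_abs_self C)
      rw [Real.norm_eq_abs] at this
      linarith
  have : S.Ψ (t, x) = g x + ε * Real.log (S.ρ (t, x)) := by simp [hg]
  rw [this]
  calc _ ≤ |g x| + |ε * Real.log (S.ρ (t, x))| := abs_add_le _ _
    _ ≤ D + δ / 2 * √R := by rw [hD]; linarith
    _ ≤ δ * √R := by linarith

end NS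
namespace NS
variable {γ ε T : ℝ} (S : NS γ ε T)

/-- `Ψ` decreases along trajectories at rate `p`; hence moments of `Ψ` control moments of `p`. -/
lemma psi_moment {R : ℝ} (hR : 0 < R) (k : ℕ) {t : ℝ} (ht : t ∈ Icc 0 T) :
    I (S.W (om R) (fun q => S.ρ q * S.Ψ q ^ (k + 1))) t
      - I (S.W (om R) (fun q => S.ρ q * S.Ψ q ^ (k + 1))) 0
      = -((k + 1 : ℝ) * J (S.W (om R) (fun q => S.ρ q * S.Ψ q ^ k * S.p q)) t) := by
  have hpow : C1 T (fun q => S.Ψ q ^ (k + 1))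
      (fun q => (k + 1 : ℝ) * S.Ψ q ^ k * (-(S.ρ q * S.u q * S.V q + S.p q)))
      (fun q => (k + 1 : ℝ) * S.Ψ q ^ k * (S.ρ q * S.V q)) :=
    { cont := S.C1Ψ.cont.pow _
      cont_t := (continuous_const.mul (S.C1Ψ.cont.pow _)).mul S.C1Ψ.cont_t
      cont_x := (continuous_const.mul (S.C1Ψ.cont.pow _)).mul S.C1Ψ.cont_x
      dt := fun t ht x => by
        refine ((S.C1Ψ.dt t ht x).pow (k + 1)).congr_deriv ?_
        simp
      dx := fun t x => by
        refine ((S.C1Ψ.dx t x).pow (k + 1)).congr_deriv ?_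
        simp }
  have b := S.bal (om_hasDeriv R) (om1_cont R) (fun _ => om_zero hR) (fun _ => om1_zero hR)
    (S.C1ρ.mul hpow) (j := fun _ => 0) (jx := fun _ => 0) continuous_const continuous_const
    (fun t x => hasDerivAt_const _ _)
    (s := fun q => -((k + 1 : ℝ) * (S.ρ q * S.Ψ q ^ k * S.p q))) (fun q => by
      have h3 := S.mass q
      rw [h3]; ring) ht
  have c : Continuous (fun q => S.ρ q * S.Ψ q ^ k * S.p q) :=
    (S.C1ρ.cont.mul (S.C1Ψ.cont.pow _)).mul S.C1p.cont
  have l := J_lin2 (S.admω hR c) (S.admω hR c) (-(k + 1 : ℝ)) 0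
    (k := S.W (om R) (fun q => -((k + 1 : ℝ) * (S.ρ q * S.Ψ q ^ k * S.p q))))
    (fun q => by simp only [W]; ring) t
  have z : J (S.W (om1 R) (fun q => S.ρ q * (0 : ℝ))) t = 0 := by
    simp [J, I, W]
  rw [l, z] at b
  linarith

/-- The bounds on `Ψ` over the support of the cutoff at both ends of the time interval. -/
def Small (R D : ℝ) : Prop :=
  ∀ t, t = 0 ∨ t = T → ∀ x, |S.N (t, x)| ≤ 2 * R → |S.Ψ (t, x)| ≤ D

lemma ends_moment {R D : ℝ} (hR : 0 < R) (hD0 : 0 ≤ D) (hS : S.Small R D) (k : ℕ) {t : ℝ}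
    (ht : t = 0 ∨ t = T) :
    |I (S.W (om R) (fun q => S.ρ q * S.Ψ q ^ k)) t| ≤ D ^ k * (4 * Cc / R) := by
  have c : Continuous (fun q => S.ρ q * S.Ψ q ^ k) := S.C1ρ.cont.mul (S.C1Ψ.cont.pow _)
  have := I_abs2 (S.admω hR c) (S.admω hR S.C1ρ.cont) (S.admω hR S.C1ρ.cont) (D ^ k) 0 (t := t)
    (fun x => by
      simp only [W, zero_mul, add_zero]
      rw [abs_mul, abs_mul, abs_of_nonneg (om_nonneg _ _), abs_of_pos (S.ρpos _), abs_pow]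
      by_cases h : |S.N (t, x)| ≤ 2 * R
      · have := pow_le_pow_left₀ (abs_nonneg _) (hS t ht x h) k
        have h1 := om_nonneg R (S.N (t, x))
        have h2 := (S.ρpos (t, x)).le
        nlinarith [mul_le_mul_of_nonneg_left this (mul_nonneg h1 h2)]
      · rw [om_zero hR (not_le.1 h).le]; simp)
  rw [zero_mul, add_zero] at this
  exact this.trans (mul_le_mul_of_nonneg_left (S.mass_om hR t) (pow_nonneg hD0 k))

end NS

lemma yng {x A B : ℝ} (hA : 0 ≤ A) (hB : 0 ≤ B) (h : x ^ 2 ≤ 4 * A * B) : |x| ≤ A + B :=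
  abs_le_of_sq_le_sq (by nlinarith [sq_nonneg (A - B)]) (by positivity)

namespace NS
variable {γ ε T : ℝ} (S : NS γ ε T)

lemma Jω0 {R D : ℝ} (hR : 0 < R) (hD0 : 0 ≤ D) (hS : S.Small R D) :
    J (S.W (om R) (fun q => S.ρ q * S.p q)) T ≤ 8 * Cc * D / R := by
  have h := S.psi_moment hR 0 (t := T) ⟨S.hT.le, le_rfl⟩
  have e0 := abs_le.1 (S.ends_moment hR hD0 hS 1 (Or.inl rfl))
  have eT := abs_le.1 (S.ends_moment hR hD0 hS 1 (Or.inr rfl))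
  simp only [pow_zero, mul_one, zero_add, Nat.cast_zero, one_mul, pow_one] at h e0 eT
  have : 8 * Cc * D / R = 2 * (D * (4 * Cc / R)) := by ring
  linarith

lemma Jω2 {R D : ℝ} (hR : 0 < R) (hD0 : 0 ≤ D) (hS : S.Small R D) :
    J (S.W (om R) (fun q => S.ρ q * S.Ψ q ^ 2 * S.p q)) T ≤ 8 * Cc * D ^ 3 / R := by
  have h := S.psi_moment hR 2 (t := T) ⟨S.hT.le, le_rfl⟩
  have e0 := abs_le.1 (S.ends_moment hR hD0 hS 3 (Or.inl rfl))
  have eT := abs_le.1 (S.ends_moment hR hD0 hS 3 (Or.inr rfl))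
  norm_num at h
  have : 8 * Cc * D ^ 3 / R = 2 * (D ^ 3 * (4 * Cc / R)) := by ring
  have : 0 ≤ D ^ 3 * (4 * Cc / R) := by have := one_le_Cc; positivity
  linarith

lemma Iω2 {R D : ℝ} (hR : 0 < R) (hD0 : 0 < D) (hS : S.Small R D) {t : ℝ} (ht : t ∈ Icc 0 T) :
    I (S.W (om R) (fun q => S.ρ q * S.Ψ q ^ 2)) t ≤ 20 * Cc * D ^ 2 / R := by
  have h := S.psi_moment hR 1 ht
  have e0 := abs_le.1 (S.ends_moment hR hD0.le hS 2 (Or.inl rfl))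
  have c1 : Continuous (fun q => S.ρ q * S.Ψ q ^ 1 * S.p q) :=
    (S.C1ρ.cont.mul (S.C1Ψ.cont.pow _)).mul S.C1p.cont
  have c2 : Continuous (fun q => S.ρ q * S.Ψ q ^ 2 * S.p q) :=
    (S.C1ρ.cont.mul (S.C1Ψ.cont.pow _)).mul S.C1p.cont
  have c0 : Continuous (fun q => S.ρ q * S.p q) := S.C1ρ.cont.mul S.C1p.cont
  have y := J_abs2 (S.admω hR c1) (S.admω hR c2) (S.admω hR c0) (1 / (2 * D)) (D / 2) ht.1
    (fun τ _ x => by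
      have h1 := om_nonneg R (S.N (τ, x))
      have h2 := (S.ρpos (τ, x)).le
      have h3 := (S.ppos (τ, x)).le
      simp only [W]
      have := yng (x := om R (S.N (τ, x)) * (S.ρ (τ, x) * S.Ψ (τ, x) ^ 1 * S.p (τ, x)))
        (A := 1 / (2 * D) * (om R (S.N (τ, x)) * (S.ρ (τ, x) * S.Ψ (τ, x) ^ 2 * S.p (τ, x))))
        (B := D / 2 * (om R (S.N (τ, x)) * (S.ρ (τ, x) * S.p (τ, x))))
        (by positivity) (by positivity) (le_of_eq (by field_simp; ring))
      exact this)
  have j2 := (J_le_J (S.admω hR c2) (S.W0 (om_nonneg R) fun q => by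
      have h2 := (S.ρpos q).le
      have h3 := (S.ppos q).le
      positivity) ht.1 ht.2).trans (S.Jω2 hR hD0.le hS)
  have j0 := (J_le_J (S.admω hR c0) (S.W0 (om_nonneg R) fun q => by
      have h2 := (S.ρpos q).le
      have h3 := (S.ppos q).le
      positivity) ht.1 ht.2).trans (S.Jω0 hR hD0.le hS)
  have y' := (abs_le.1 y).1
  have k2 := mul_le_mul_of_nonneg_left j2 (by positivity : 0 ≤ 1 / (2 * D))
  have k0 := mul_le_mul_of_nonneg_left j0 (by positivity : 0 ≤ D / 2)
  have s2 : 1 / (2 * D) * (8 * Cc * D ^ 3 / R) = 4 * Cc * D ^ 2 / R := by field_simp; ring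
  have s0 : D / 2 * (8 * Cc * D / R) = 4 * Cc * D ^ 2 / R := by ring
  have s1 : D ^ 2 * (4 * Cc / R) = 4 * Cc * D ^ 2 / R := by ring
  have s3 : 20 * Cc * D ^ 2 / R = 5 * (4 * Cc * D ^ 2 / R) := by ring
  rw [s2] at k2; rw [s0] at k0; rw [s1] at e0; rw [s3]
  norm_num at h
  simp only [pow_one] at h y'
  linarith

/-! ### A priori growth of the localised effective energy -/

/-- `Γ` bounds the localised effective energy and its dissipation at scale `R`. -/
def Bdd (R Γ : ℝ) : Prop :=
  (∀ τ ∈ Icc 0 T, I (S.W (th R) S.fB) τ ≤ Γ) ∧ ε * J (S.W (th R) S.d) T ≤ Γ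

/-- The least such bound. -/
noncomputable def G (R : ℝ) : ℝ :=
  max (sSup (I (S.W (th R) S.fB) '' Icc 0 T)) (ε * J (S.W (th R) S.d) T)

lemma bdd_G {R : ℝ} (hR : 0 < R) : S.Bdd R (S.G R) := by
  refine ⟨fun τ hτ => (le_csSup ?_ (mem_image_of_mem _ hτ)).trans (le_max_left _ _),
    le_max_right _ _⟩
  exact (isCompact_Icc.image (S.admθ hR S.cfB).I_cont).bddAbove

lemma G_nonneg (R : ℝ) : 0 ≤ S.G R :=
  (mul_nonneg S.hε.le (J_nonneg (S.W0 (th_nonneg R) S.d0) S.hT.le)).trans (le_max_right _ _)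

lemma G_le {R X : ℝ} (h : ∀ t ∈ Icc 0 T,
    I (S.W (th R) S.fB) t + ε * J (S.W (th R) S.d) t ≤ X) : S.G R ≤ X := by
  refine max_le (csSup_le ((nonempty_Icc.2 S.hT.le).image _) ?_) ?_
  · rintro _ ⟨t, ht, rfl⟩
    have := h t ht
    have := mul_nonneg S.hε.le (J_nonneg (S.W0 (th_nonneg R) S.d0) ht.1)
    linarith
  · have := h T ⟨S.hT.le, le_rfl⟩
    have := I_nonneg (S.W0 (th_nonneg R) S.fB0) T
    linarith

variable {S} in
lemma Bdd.nonneg {R Γ : ℝ} (h : S.Bdd R Γ) : 0 ≤ Γ :=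
  (I_nonneg (S.W0 (th_nonneg R) S.fB0) 0).trans (h.1 0 ⟨le_rfl, S.hT.le⟩)

variable {S} in
lemma Bdd.d {R Γ : ℝ} (hR : 0 < R) (h : S.Bdd R Γ) {t : ℝ} (ht : t ∈ Icc 0 T) :
    ε * J (S.W (th R) S.d) t ≤ Γ :=
  (mul_le_mul_of_nonneg_left (J_le_J (S.admθ hR S.cd) (S.W0 (th_nonneg R) S.d0) ht.1 ht.2)
    S.hε.le).trans h.2

lemma cV2 : Continuous (fun q => S.ρ q * S.V q ^ 2) := S.C1ρ.cont.mul (S.C1V.cont.pow 2)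

variable {S} in
lemma Bdd.V {R Γ : ℝ} (hR : 0 < R) (h : S.Bdd R Γ) {t : ℝ} (ht : t ∈ Icc 0 T) :
    I (S.W (th R) (fun q => S.ρ q * S.V q ^ 2)) t ≤ 2 * Γ := by
  have := I_nn2 (S.admθ hR S.cV2) (S.admθ hR S.cfB) (S.admθ hR S.cfB) 2 0 (t := t) (fun x => by
    have h1 := mul_nonneg (th_nonneg R (S.N (t, x))) (S.h0 (t, x))
    simp only [W, fB]; nlinarith)
  have := h.1 t ht
  linarith

variable {S} in
lemma Bdd.h {R Γ : ℝ} (hR : 0 < R) (h : S.Bdd R Γ) {t : ℝ} (ht : t ∈ Icc 0 T) :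
    I (S.W (th R) S.h) t ≤ Γ := by
  have := I_mono (S.admθ hR S.ch) (S.admθ hR S.cfB) t (fun x => by
    have h1 := th_nonneg R (S.N (t, x))
    have h2 := (S.ρpos (t, x)).le
    simp only [W, fB]
    have : 0 ≤ th R (S.N (t, x)) * (S.ρ (t, x) * S.V (t, x) ^ 2 / 2) := by positivity
    nlinarith)
  exact this.trans (h.1 t ht)

lemma T1 {R Γ : ℝ} (hR : 0 < R) (h : S.Bdd R Γ) {t : ℝ} (ht : t ∈ Icc 0 T) {a : ℝ} (ha : 0 < a) :
    |J (S.W (th1 R) (fun q => S.ρ q * S.V q * S.pb q.2)) t|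
      ≤ a * (T * (2 * Γ)) + S.K ^ 2 / (4 * a) * (T * (4 * Cc / R)) := by
  have c : Continuous (fun q => S.ρ q * S.V q * S.pb q.2) :=
    (S.C1ρ.cont.mul S.C1V.cont).mul S.C1pb.cont
  refine (J_abs2 (S.admθ1 hR c) (S.admθ hR S.cV2) (S.admω hR S.C1ρ.cont) a (S.K ^ 2 / (4 * a)) ht.1
    (fun τ _ x => ?_)).trans ?_
  · have h1 := om_nonneg R (S.N (τ, x))
    have h2 := (S.ρpos (τ, x)).le
    have h3 := th_nonneg R (S.N (τ, x))
    have h4 := th1_sq R (S.N (τ, x))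
    have h5 : S.pb x ^ 2 ≤ S.K ^ 2 := pow_le_pow_left₀ (S.pb_nonneg x) (S.pb_le x) 2
    simp only [W]
    refine yng (by positivity) (by positivity) ?_
    have e : (th1 R (S.N (τ, x)) * (S.ρ (τ, x) * S.V (τ, x) * S.pb x)) ^ 2
      = om R (S.N (τ, x)) * th R (S.N (τ, x)) * S.ρ (τ, x) ^ 2 * S.V (τ, x) ^ 2 * S.pb x ^ 2 := by
      rw [← h4]; ring
    have e' : 4 * (a * (th R (S.N (τ, x)) * (S.ρ (τ, x) * S.V (τ, x) ^ 2)))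
        * (S.K ^ 2 / (4 * a) * (om R (S.N (τ, x)) * S.ρ (τ, x)))
      = om R (S.N (τ, x)) * th R (S.N (τ, x)) * S.ρ (τ, x) ^ 2 * S.V (τ, x) ^ 2 * S.K ^ 2 := by
      field_simp
    rw [e, e']
    exact mul_le_mul_of_nonneg_left h5 (by positivity)
  · have hΓ := h.nonneg
    have hc := one_le_Cc
    have A := J_le_of_I_le (S.admθ hR S.cV2) ht.1
      (fun τ hτ => h.V hR ⟨hτ.1, hτ.2.trans ht.2⟩)
    have B := J_le_of_I_le (S.admω hR S.C1ρ.cont) ht.1 (fun τ hτ => S.mass_om hR τ)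
    have A' : t * (2 * Γ) ≤ T * (2 * Γ) := mul_le_mul_of_nonneg_right ht.2 (by positivity)
    have B' : t * (4 * Cc / R) ≤ T * (4 * Cc / R) := mul_le_mul_of_nonneg_right ht.2 (by positivity)
    exact add_le_add (mul_le_mul_of_nonneg_left (A.trans A') ha.le)
      (mul_le_mul_of_nonneg_left (B.trans B') (by positivity))

lemma T3 {R Γ D : ℝ} (hR : 0 < R) (hD0 : 0 ≤ D) (hS : S.Small R D) (h : S.Bdd R Γ) {t : ℝ}
    (ht : t ∈ Icc 0 T) {a : ℝ} (ha : 0 < a) :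
    ε * |J (S.W (th1 R) S.px) t| ≤ a * Γ + γ * ε / (4 * a) * (8 * Cc * D / R) := by
  have hγ := S.hγ
  have hε := S.hε
  have c0 : Continuous (fun q => S.ρ q * S.p q) := S.C1ρ.cont.mul S.C1p.cont
  have y := J_abs2 (S.admθ1 hR S.C1p.cont_x) (S.admθ hR S.cd) (S.admω hR c0) a (γ / (4 * a)) ht.1
    (fun τ _ x => by
      have h1 := om_nonneg R (S.N (τ, x))
      have h2 := S.ρpos (τ, x)
      have h2' := (S.ppos (τ, x)).le
      have h3 := th_nonneg R (S.N (τ, x))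
      have h4 := th1_sq R (S.N (τ, x))
      have h5 := S.d0 (τ, x)
      simp only [W]
      refine yng (by positivity) (by positivity) (le_of_eq ?_)
      rw [mul_pow, h4, S.px_eq, d]
      field_simp)
  have j0 := (J_le_J (S.admω hR c0) (S.W0 (om_nonneg R) fun q => by
      have h2 := (S.ρpos q).le
      have h3 := (S.ppos q).le
      positivity) ht.1 ht.2).trans (S.Jω0 hR hD0 hS)
  have jd := h.d hR ht
  have k0 := mul_le_mul_of_nonneg_left j0 (by positivity : 0 ≤ γ * ε / (4 * a))
  have y' := mul_le_mul_of_nonneg_left y hε.le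
  have kd := mul_le_mul_of_nonneg_left jd ha.le
  have e : ε * (a * J (S.W (th R) S.d) t
      + γ / (4 * a) * J (S.W (om R) (fun q => S.ρ q * S.p q)) t)
    = a * (ε * J (S.W (th R) S.d) t)
      + γ * ε / (4 * a) * J (S.W (om R) (fun q => S.ρ q * S.p q)) t := by ring
  linarith

end NS

lemma th_mul {R : ℝ} (hR : 0 < R) (n : ℝ) : th R n * th (2 * R) n = th R n := by
  by_cases h : |n| ≤ 2 * R
  · rw [th_one (R := 2 * R) (by positivity) h, mul_one]
  · rw [th_zero hR (not_le.1 h).le, zero_mul]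

namespace NS
variable {γ ε T : ℝ} (S : NS γ ε T)

/-- Labels are bounded on bounded sets. -/
lemma label_bdd (L : ℝ) : ∃ R₀, 1 ≤ R₀ ∧ ∀ t ∈ Icc 0 T, ∀ x, |x| ≤ L → |S.N (t, x)| < R₀ := by
  obtain ⟨C, hC⟩ := ((isCompact_Icc (a := (0 : ℝ)) (b := T)).prod
    (isCompact_Icc (a := -L) (b := L))).exists_bound_of_continuousOn S.C1N.cont.continuousOn
  refine ⟨|C| + 1, by linarith [abs_nonneg C], fun t ht x hx => ?_⟩
  have := hC (t, x) ⟨ht, abs_le.1 hx⟩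
  rw [Real.norm_eq_abs] at this
  linarith [le_abs_self C]

lemma T2 {R Γ : ℝ} (hR : 0 < R) (h : S.Bdd R Γ)
    (hL : ∀ t ∈ Icc 0 T, ∀ x, |x| ≤ S.L₀ → |S.N (t, x)| < R) {t : ℝ}
    (ht : t ∈ Icc 0 T) {a : ℝ} (ha : 0 < a) :
    |J (S.W (th1 R) (fun q => S.pb q.2 * (S.ρx q / S.ρ q))) t|
      ≤ a * (T * (S.K * (Γ + 4 * R))) + Cc * S.K ^ 2 / (4 * a * R ^ 4) * (T * (8 * R)) := by
  have hK := S.K_one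
  have hc := one_le_Cc
  have Cl := S.C1ρ.log S.ρpos
  have Cj := S.C1pb.mul Cl
  have b := S.bal (th1_hasDeriv R) (th2_cont R) (fun _ => th1_zero hR) (fun _ => th2_zero hR)
    (C1.const (T := T) 0) Cj.cont Cj.cont_x Cj.dx
    (s := fun q => S.pbx q.2 * Real.log (S.ρ q) + S.pb q.2 * (S.ρx q / S.ρ q))
    (fun q => by simp) ht
  have c1 : Continuous (fun q => S.pb q.2 * (S.ρx q / S.ρ q)) := S.C1pb.cont.mul Cl.cont_x
  have c2 : Continuous (fun q : ℝ × ℝ => S.pbx q.2 * Real.log (S.ρ q)) := S.C1pb.cont_x.mul Cl.cont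
  have c3 : Continuous (fun q => S.ρ q * (S.pb q.2 * Real.log (S.ρ q))) := S.C1ρ.cont.mul Cj.cont
  have c4 : Continuous (fun q => S.ρ q * Real.log (S.ρ q) ^ 2) := S.C1ρ.cont.mul (Cl.cont.pow 2)
  have z : J (S.W (th1 R) (fun q => S.pbx q.2 * Real.log (S.ρ q))) t = 0 := by
    have := J_abs2 (S.admθ1 hR c2) (S.admθ hR c4) (S.admθ hR c4) 0 0 ht.1 (fun τ hτ x => by
      simp only [W]
      rcases le_total S.L₀ |x| with hx | hx
      · simp [S.pbx_out x hx]
      · simp [th1_zero_in hR (hL τ ⟨hτ.1, hτ.2.trans ht.2⟩ x hx)])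
    simpa using this
  have l := J_lin2 (S.admθ1 hR c2) (S.admθ1 hR c1) 1 1
    (k := S.W (th1 R) (fun q => S.pbx q.2 * Real.log (S.ρ q) + S.pb q.2 * (S.ρx q / S.ρ q)))
    (fun q => by simp only [W]; ring) t
  have e0 : ∀ s, I (S.W (th1 R) (fun _ => 0)) s = 0 := fun s => by simp [I, W]
  rw [l, z, e0, e0] at b
  have e : J (S.W (th1 R) (fun q => S.pb q.2 * (S.ρx q / S.ρ q))) t
    = - J (S.W (th2 R) (fun q => S.ρ q * (S.pb q.2 * Real.log (S.ρ q)))) t := by linarith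
  rw [e, abs_neg]
  have hR2 : 0 < 2 * R := by positivity
  refine (J_abs2 (S.admθ2 hR c3) (S.admθ hR c4) (S.admθ hR2 S.C1ρ.cont) a
    (Cc * S.K ^ 2 / (4 * a * R ^ 4)) ht.1 (fun τ _ x => ?_)).trans ?_
  · have h1 := th_nonneg (2 * R) (S.N (τ, x))
    have h2 := (S.ρpos (τ, x)).le
    have h3 := th_nonneg R (S.N (τ, x))
    have h4 := th2_sq hR (S.N (τ, x))
    have h5 : S.pb x ^ 2 ≤ S.K ^ 2 := pow_le_pow_left₀ (S.pb_nonneg x) (S.pb_le x) 2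
    have h6 := th_mul hR (S.N (τ, x))
    simp only [W]
    refine yng (by positivity) (by positivity) ?_
    have e : (th2 R (S.N (τ, x)) * (S.ρ (τ, x) * (S.pb x * Real.log (S.ρ (τ, x))))) ^ 2
      = (th2 R (S.N (τ, x)) ^ 2 * S.pb x ^ 2) * (S.ρ (τ, x) ^ 2 * Real.log (S.ρ (τ, x)) ^ 2) := by
      ring
    have e' : 4 * (a * (th R (S.N (τ, x)) * (S.ρ (τ, x) * Real.log (S.ρ (τ, x)) ^ 2)))
        * (Cc * S.K ^ 2 / (4 * a * R ^ 4) * (th (2 * R) (S.N (τ, x)) * S.ρ (τ, x)))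
      = (Cc * (th R (S.N (τ, x)) * th (2 * R) (S.N (τ, x))) / R ^ 4 * S.K ^ 2)
        * (S.ρ (τ, x) ^ 2 * Real.log (S.ρ (τ, x)) ^ 2) := by
      field_simp
    rw [e, e', h6]
    exact mul_le_mul_of_nonneg_right (mul_le_mul h4 h5 (by positivity) (by positivity))
      (by positivity)
  · have hΓ := h.nonneg
    have A := J_le_of_I_le (M := S.K * (Γ + 4 * R)) (S.admθ hR c4) ht.1 (fun τ hτ => by
      have y := I_nn2 (S.admθ hR c4) (S.admθ hR S.ch) (S.admθ hR S.C1ρ.cont) S.K S.K (t := τ)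
        (fun x => by
          have := mul_le_mul_of_nonneg_left (S.hK2 (τ, x)) (th_nonneg R (S.N (τ, x)))
          simp only [W, NS.h]; linarith)
      have y1 := h.h hR (t := τ) ⟨hτ.1, hτ.2.trans ht.2⟩
      have y2 := S.mass_th hR τ
      nlinarith)
    have B := J_le_of_I_le (S.admθ hR2 S.C1ρ.cont) ht.1 (fun τ hτ => S.mass_th hR2 τ)
    have A' : t * (S.K * (Γ + 4 * R)) ≤ T * (S.K * (Γ + 4 * R)) :=
      mul_le_mul_of_nonneg_right ht.2 (by positivity)
    have B' : t * (4 * (2 * R)) ≤ T * (8 * R) := by nlinarith [ht.2]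
    exact add_le_add (mul_le_mul_of_nonneg_left (A.trans A') ha.le)
      (mul_le_mul_of_nonneg_left (B.trans B') (by positivity))

/-- First form of the transport part of the flux, using the potential `Ψ`. -/
lemma T4 {R Γ D : ℝ} (hR : 0 < R) (hD0 : 0 < D) (hS : S.Small R D) (h : S.Bdd R Γ) {t : ℝ}
    (ht : t ∈ Icc 0 T) :
    |J (S.W (th1 R) (fun q => S.ρ q * S.p q * S.V q)) t|
      ≤ 3 / 8 * Γ + 160 * Cc * D ^ 2 / R + 16 * γ * Cc * D ^ 3 / (ε * R) := by
  have hγ := S.hγ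
  have hε := S.hε
  have C3 := (S.C1ρ.mul S.C1Ψ).mul S.C1V
  have b := S.bal (th1_hasDeriv R) (th2_cont R) (fun _ => th1_zero hR) (fun _ => th2_zero hR)
    C3 (j := fun _ => 0) (jx := fun _ => 0) continuous_const continuous_const
    (fun t x => hasDerivAt_const _ _)
    (s := fun q => -(S.ρ q * S.p q * S.V q) - S.Ψ q * S.px q)
    (fun q => by
      have h2 := S.V_eq q
      have h3 := S.mass q
      linear_combination (-S.Ψ q) * h2 - (S.Ψ q * S.V q) * h3) ht
  have e0 : J (S.W (th2 R) (fun q => S.ρ q * 0)) t = 0 := by simp [J, I, W]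
  have c1 : Continuous (fun q => S.ρ q * S.p q * S.V q) :=
    (S.C1ρ.cont.mul S.C1p.cont).mul S.C1V.cont
  have c2 : Continuous (fun q => S.Ψ q * S.px q) := S.C1Ψ.cont.mul S.C1p.cont_x
  have c3 : Continuous (fun q => S.ρ q * S.Ψ q ^ 2) := S.C1ρ.cont.mul (S.C1Ψ.cont.pow 2)
  have c4 : Continuous (fun q => S.ρ q * S.Ψ q ^ 2 * S.p q) := c3.mul S.C1p.cont
  have l := J_lin2 (S.admθ1 hR c1) (S.admθ1 hR c2) (-1) (-1)
    (k := S.W (th1 R) (fun q => -(S.ρ q * S.p q * S.V q) - S.Ψ q * S.px q))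
    (fun q => by simp only [W]; ring) t
  rw [l, e0] at b
  have key : ∀ τ ∈ Icc 0 T, |I (S.W (th1 R) (fun q => S.ρ q * S.Ψ q * S.V q)) τ|
      ≤ 1 / 8 * Γ + 80 * Cc * D ^ 2 / R := fun τ hτ => by
    have y := I_abs2 (S.admθ1 hR C3.cont) (S.admθ hR S.cV2) (S.admω hR c3) (1 / 16) 4 (t := τ)
      (fun x => by
        have h1 := om_nonneg R (S.N (τ, x))
        have h2 := (S.ρpos (τ, x)).le
        have h3 := th_nonneg R (S.N (τ, x))
        have h4 := th1_sq R (S.N (τ, x))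
        simp only [W]
        refine yng (by positivity) (by positivity) (le_of_eq ?_)
        rw [mul_pow, h4]; ring)
    have y1 := h.V hR hτ
    have y2 := S.Iω2 hR hD0 hS hτ
    have e : 80 * Cc * D ^ 2 / R = 4 * (20 * Cc * D ^ 2 / R) := by ring
    rw [e]; linarith
  have k0 := abs_le.1 (key 0 ⟨le_rfl, S.hT.le⟩)
  have kt := abs_le.1 (key t ht)
  have y := J_abs2 (S.admθ1 hR c2) (S.admθ hR S.cd) (S.admω hR c4) (ε / 8) (2 * γ / ε) ht.1
    (fun τ _ x => by
      have h1 := om_nonneg R (S.N (τ, x))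
      have h2 := S.ρpos (τ, x)
      have h2' := (S.ppos (τ, x)).le
      have h3 := th_nonneg R (S.N (τ, x))
      have h4 := th1_sq R (S.N (τ, x))
      have h5 := S.d0 (τ, x)
      simp only [W]
      refine yng (by positivity) (by positivity) (le_of_eq ?_)
      rw [mul_pow, h4, S.px_eq, d]
      field_simp; ring)
  have j2 := (J_le_J (S.admω hR c4) (S.W0 (om_nonneg R) fun q => by
      have h2 := (S.ρpos q).le
      have h3 := (S.ppos q).le
      positivity) ht.1 ht.2).trans (S.Jω2 hR hD0.le hS)
  have k2 := mul_le_mul_of_nonneg_left j2 (by positivity : 0 ≤ 2 * γ / ε)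
  have e2 : 2 * γ / ε * (8 * Cc * D ^ 3 / R) = 16 * γ * Cc * D ^ 3 / (ε * R) := by
    field_simp; ring
  have e3 : 160 * Cc * D ^ 2 / R = 2 * (80 * Cc * D ^ 2 / R) := by ring
  have jd := h.d hR ht
  have y' := abs_le.1 y
  rw [e2] at k2; rw [e3]
  rw [abs_le]; constructor <;> linarith

lemma flux_split {R : ℝ} (hR : 0 < R) (t : ℝ) : J (S.W (th1 R) S.flux) t
    = -J (S.W (th1 R) (fun q => S.ρ q * S.V q * S.pb q.2)) t
      + ε * J (S.W (th1 R) (fun q => S.pb q.2 * (S.ρx q / S.ρ q))) t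
      - 1 / γ * (ε * J (S.W (th1 R) S.px) t)
      + J (S.W (th1 R) (fun q => S.ρ q * S.p q * S.V q)) t := by
  have hγ : γ ≠ 0 := by linarith [S.hγ]
  have c0 : Continuous (fun q => S.ρ q * S.V q * S.pb q.2) :=
    (S.C1ρ.cont.mul S.C1V.cont).mul S.C1pb.cont
  have c1 : Continuous (fun q => S.ρ q * S.p q * S.V q) :=
    (S.C1ρ.cont.mul S.C1p.cont).mul S.C1V.cont
  have c2 : Continuous (fun q => S.pb q.2 * (S.ρx q / S.ρ q)) :=
    S.C1pb.cont.mul (S.C1ρ.log S.ρpos).cont_x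
  rw [J_lin4 (S.admθ1 hR c0) (S.admθ1 hR c2) (S.admθ1 hR S.C1p.cont_x) (S.admθ1 hR c1)
    (-1) ε (-(ε / γ)) 1 (k := S.W (th1 R) S.flux) (fun q => by
      have := (S.ρpos q).ne'
      simp only [W, flux]
      rw [S.px_eq, S.V_def]; field_simp; ring) t]
  ring

end NS
namespace NS
variable {γ ε T : ℝ} (S : NS γ ε T)

lemma adm_work : Adm S.work :=
  ⟨S.cwork, S.L₀, fun t x hx => by simp [work, S.β_out x hx]⟩

lemma work_le {R : ℝ} (hR : 0 < R) {t : ℝ} (ht : t ∈ Icc 0 T) :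
    |J (S.W (th R) S.work) t| ≤ J (fun q => |S.work q|) t := by
  have := J_abs2 (S.admθ hR S.cwork) S.adm_work.abs S.adm_work.abs 1 0 ht.1 (fun τ _ x => by
    simp only [W, abs_mul, one_mul, zero_mul, add_zero]
    rw [abs_of_nonneg (th_nonneg _ _)]
    exact mul_le_of_le_one_left (abs_nonneg _) (th_le_one _ _))
  simpa using this

lemma init_le {R : ℝ} (hR : 0 < R) : I (S.W (th R) S.fB) 0 ≤ ∫ x, S.fB (0, x) :=
  integral_mono ((S.admθ hR S.cfB).integrable 0) S.init_B
    fun x => mul_le_of_le_one_left (S.fB0 _) (th_le_one _ _)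

lemma small {δ : ℝ} (hδ : 0 < δ) : ∃ R₀, 1 ≤ R₀ ∧ ∀ R, R₀ ≤ R → S.Small R (δ * √R) := by
  obtain ⟨A, hA, h⟩ := S.growth (Or.inl rfl) hδ
  obtain ⟨B, _, h'⟩ := S.growth (Or.inr rfl) hδ
  refine ⟨max A B, hA.trans (le_max_left _ _), fun R hR t ht x hx => ?_⟩
  rcases ht with rfl | rfl
  · exact h R ((le_max_left _ _).trans hR) x hx
  · exact h' R ((le_max_right _ _).trans hR) x hx

/-- All parts of the flux except the transport of pressure by `V` are negligible. -/
lemma flux_small {η : ℝ} (hη : 0 < η) : ∃ R₀, 1 ≤ R₀ ∧ ∀ R, R₀ ≤ R → ∀ Γ, S.Bdd R Γ →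
    ∀ t ∈ Icc 0 T, |J (S.W (th1 R) S.flux) t| ≤ η * (1 + Γ)
      + |J (S.W (th1 R) (fun q => S.ρ q * S.p q * S.V q)) t| := by
  obtain ⟨R₁, h1, hS⟩ := S.small one_pos
  obtain ⟨R₂, h2, hL⟩ := S.label_bdd S.L₀
  have hT := S.hT
  have hε := S.hε
  have hγ := S.hγ
  have hK := S.K_one
  have hc := one_le_Cc
  set e := η / 3 with he
  have he0 : 0 < e := by positivity
  set M := 2 * T + S.K ^ 2 * T * Cc + ε * (5 * T * S.K + 2 * Cc * S.K ^ 2 * T) with hM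
  have hM0 : 0 < M := by positivity
  set s₀ := 1 + M / e + 2 * γ * ε * Cc / e ^ 2 with hs₀
  refine ⟨max (max R₁ R₂) (s₀ ^ 2), h1.trans ((le_max_left _ _).trans (le_max_left _ _)),
    fun R hR Γ hB t ht => ?_⟩
  have hR1 : R₁ ≤ R := ((le_max_left _ _).trans (le_max_left _ _)).trans hR
  have hR2 : R₂ ≤ R := ((le_max_right _ _).trans (le_max_left _ _)).trans hR
  have hR0 : 0 < R := by linarith
  have hs : s₀ ≤ √R := Real.le_sqrt_of_sq_le ((le_max_right _ _).trans hR)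
  have hRs : R = √R ^ 2 := (Real.sq_sqrt hR0.le).symm
  set s := √R with hsdef
  have q1 : 0 ≤ M / e := by positivity
  have q2 : 0 ≤ 2 * γ * ε * Cc / e ^ 2 := by positivity
  have hs1 : 1 ≤ s := by linarith
  have hs0 : 0 < s := by linarith
  have hMs : M / s ≤ e := by
    rw [div_le_iff₀ hs0, ← div_le_iff₀' he0]; linarith
  have hM2 : 2 * γ * ε * Cc / (e * s) ≤ e := by
    have : 2 * γ * ε * Cc / e ^ 2 ≤ s := by linarith
    rw [div_le_iff₀ (by positivity)] at this ⊢
    nlinarith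
  have hΓ := hB.nonneg
  have t1 := S.T1 hR0 hB ht (a := 1 / s) (by positivity)
  have t2 := S.T2 hR0 hB (fun t ht x hx => (hL t ht x hx).trans_le hR2) ht (a := 1 / s ^ 3)
    (by positivity)
  have t3 := S.T3 hR0 (by positivity) (hS R hR1) hB ht he0
  rw [one_mul] at t3
  have b1 : 1 / s * (T * (2 * Γ)) + S.K ^ 2 / (4 * (1 / s)) * (T * (4 * Cc / R))
      = (2 * T * Γ + S.K ^ 2 * T * Cc) / s := by
    rw [hRs]; field_simp
  have b2 : 1 / s ^ 3 * (T * (S.K * (Γ + 4 * R)))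
      + Cc * S.K ^ 2 / (4 * (1 / s ^ 3) * R ^ 4) * (T * (8 * R))
      ≤ (T * S.K * Γ + 4 * T * S.K + 2 * Cc * S.K ^ 2 * T) / s := by
    have : 1 / s ^ 3 * (T * (S.K * (Γ + 4 * R)))
      + Cc * S.K ^ 2 / (4 * (1 / s ^ 3) * R ^ 4) * (T * (8 * R))
      = (T * S.K * Γ / s ^ 2 + 4 * T * S.K + 2 * Cc * S.K ^ 2 * T / s ^ 2) / s := by
      rw [hRs]; field_simp; ring
    rw [this]
    have i1 : T * S.K * Γ / s ^ 2 ≤ T * S.K * Γ :=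
      div_le_self (by positivity) (one_le_pow₀ hs1)
    have i2 : 2 * Cc * S.K ^ 2 * T / s ^ 2 ≤ 2 * Cc * S.K ^ 2 * T :=
      div_le_self (by positivity) (one_le_pow₀ hs1)
    gcongr
  have b3 : γ * ε / (4 * e) * (8 * Cc * s / R) = 2 * γ * ε * Cc / (e * s) := by
    rw [hRs]; field_simp; ring
  rw [b1] at t1
  rw [b3] at t3
  have t2' := mul_le_mul_of_nonneg_left (t2.trans b2) hε.le
  have t3' : 1 / γ * (ε * |J (S.W (th1 R) S.px) t|) ≤ e * Γ + e := by
    have : 1 / γ * (ε * |J (S.W (th1 R) S.px) t|) ≤ 1 * (ε * |J (S.W (th1 R) S.px) t|) :=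
      mul_le_mul_of_nonneg_right ((div_le_one (by linarith)).2 hγ.le) (by positivity)
    linarith
  have tot : (2 * T * Γ + S.K ^ 2 * T * Cc) / s
      + ε * ((T * S.K * Γ + 4 * T * S.K + 2 * Cc * S.K ^ 2 * T) / s) ≤ M / s * (1 + Γ) := by
    have : (2 * T * Γ + S.K ^ 2 * T * Cc) / s
      + ε * ((T * S.K * Γ + 4 * T * S.K + 2 * Cc * S.K ^ 2 * T) / s)
      = ((2 * T * Γ + S.K ^ 2 * T * Cc)
        + ε * (T * S.K * Γ + 4 * T * S.K + 2 * Cc * S.K ^ 2 * T)) / s := by ring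
    rw [this, div_mul_eq_mul_div]
    refine div_le_div_of_nonneg_right ?_ hs0.le
    have z1 : 0 ≤ S.K ^ 2 * T * Cc * Γ := by positivity
    have z2 : 0 ≤ ε * (4 * T * S.K + 2 * Cc * S.K ^ 2 * T) * Γ := by positivity
    have z3 : 0 ≤ ε * (T * S.K) := by positivity
    rw [hM]; nlinarith
  have tot' : M / s * (1 + Γ) ≤ e * (1 + Γ) := mul_le_mul_of_nonneg_right hMs (by positivity)
  rw [S.flux_split hR0 t]
  have a1 := abs_le.1 t1
  have a2 : ε * |J (S.W (th1 R) (fun q => S.pb q.2 * (S.ρx q / S.ρ q))) t|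
    = |ε * J (S.W (th1 R) (fun q => S.pb q.2 * (S.ρx q / S.ρ q))) t| := by
    rw [abs_mul, abs_of_pos hε]
  have a3 : 1 / γ * (ε * |J (S.W (th1 R) S.px) t|) = |1 / γ * (ε * J (S.W (th1 R) S.px) t)| := by
    rw [abs_mul, abs_mul, abs_of_pos hε, abs_of_pos (by positivity : 0 < 1 / γ)]
  rw [a2] at t2'
  rw [a3] at t3'
  have d1 := abs_le.1 t2'
  have d2 := abs_le.1 t3'
  have d3 := abs_le.1 (le_refl |J (S.W (th1 R) (fun q => S.ρ q * S.p q * S.V q)) t|)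
  have : η = 3 * e := by rw [he]; ring
  rw [this, abs_le]
  constructor <;> linarith

/-- The localised effective energy is `o(√R)`. -/
lemma growth_G {δ : ℝ} (hδ : 0 < δ) : ∃ R₀, 1 ≤ R₀ ∧ ∀ R, R₀ ≤ R → S.G R ≤ δ * √R := by
  have hε := S.hε
  have hγ := S.hγ
  have hc := one_le_Cc
  set b := min 1 (δ * ε / (64 * γ * Cc)) with hb
  have hb0 : 0 < b := by positivity
  have hb1 : b ≤ 1 := min_le_left _ _
  have hb2 : 16 * γ * Cc * b / ε ≤ δ / 4 := by
    have : b ≤ δ * ε / (64 * γ * Cc) := min_le_right _ _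
    rw [le_div_iff₀ (by positivity)] at this
    rw [div_le_iff₀ hε]; linarith
  obtain ⟨R₁, h1, hS⟩ := S.small hb0
  obtain ⟨R₂, h2, hF⟩ := S.flux_small (η := 1 / 8) (by norm_num)
  set Cw := J (fun q => |S.work q|) T
  set B := ∫ x, S.fB (0, x)
  have hCw : 0 ≤ Cw := J_nonneg (fun q => abs_nonneg _) S.hT.le
  have hB0 : 0 ≤ B := integral_nonneg fun x => S.fB0 _
  set A := 2 * (B + Cw + 1 / 8 + 160 * Cc)
  refine ⟨max (max R₁ R₂) ((2 * A / δ) ^ 2), h1.trans ((le_max_left _ _).trans (le_max_left _ _)),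
    fun R hR => ?_⟩
  have hR1 : R₁ ≤ R := ((le_max_left _ _).trans (le_max_left _ _)).trans hR
  have hR2 : R₂ ≤ R := ((le_max_right _ _).trans (le_max_left _ _)).trans hR
  have hR0 : 0 < R := by linarith
  have hs : 2 * A / δ ≤ √R := Real.le_sqrt_of_sq_le ((le_max_right _ _).trans hR)
  have hRs : R = √R ^ 2 := (Real.sq_sqrt hR0.le).symm
  have hs0 : 0 < √R := Real.sqrt_pos.2 hR0
  rw [div_le_iff₀ hδ] at hs
  have hBd := S.bdd_G hR0
  have fin : S.G R ≤ B + Cw + 1 / 8 * (1 + S.G R) + (3 / 8 * S.G R + 160 * Cc + δ / 4 * √R) := by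
    refine S.G_le fun t ht => ?_
    have t4 := S.T4 hR0 (by positivity) (hS R hR1) hBd ht
    have f := hF R hR2 _ hBd t ht
    have w := (S.work_le hR0 ht).trans
      (J_le_J S.adm_work.abs (fun q => abs_nonneg _) ht.1 ht.2)
    have i0 := S.init_le hR0
    rw [S.identA hR0 ht]
    have z1 : 160 * Cc * (b * √R) ^ 2 / R ≤ 160 * Cc := by
      have : 160 * Cc * (b * √R) ^ 2 / R = 160 * Cc * b ^ 2 := by
        rw [mul_pow, ← hRs]; field_simp
      rw [this]
      exact mul_le_of_le_one_right (by positivity) (pow_le_one₀ hb0.le hb1)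
    have z2 : 16 * γ * Cc * (b * √R) ^ 3 / (ε * R) ≤ δ / 4 * √R := by
      have e3 : (b * √R) ^ 3 = b ^ 3 * √R * R := by
        conv_rhs => rw [hRs]
        rw [Real.sqrt_sq hs0.le]; ring
      have : 16 * γ * Cc * (b * √R) ^ 3 / (ε * R) = (16 * γ * Cc * b / ε) * √R * b ^ 2 := by
        rw [e3]; field_simp
      rw [this]
      have : (16 * γ * Cc * b / ε) * √R * b ^ 2 ≤ (16 * γ * Cc * b / ε) * √R :=
        mul_le_of_le_one_right (by positivity) (pow_le_one₀ hb0.le hb1)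
      exact this.trans (mul_le_mul_of_nonneg_right hb2 hs0.le)
    have f' := abs_le.1 f
    have w' := abs_le.1 w
    linarith
  simp only [A] at hs
  linarith

end NS

/-! ### Pointwise bound on the pressure and boundedness of the effective energy -/

lemma le_of_deriv_above {q q' k : ℝ → ℝ} (hq : ∀ y, HasDerivAt q (q' y) y) (hk : Continuous k)
    (hk0 : ∀ y, 0 ≤ k y) {c : ℝ} (h0 : q 0 ≤ c) {x : ℝ} (hx : 0 ≤ x)
    (h : ∀ y ∈ Icc 0 x, c ≤ q y → q' y ≤ k y) : q x ≤ c + ∫ y in (0 : ℝ)..x, k y := by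
  refine le_of_forall_pos_le_add fun δ hδ => ?_
  set e := δ / (x + 1) with he
  have he0 : 0 < e := by positivity
  have key : q x ≤ c + (∫ y in (0 : ℝ)..x, k y) + e * x := by
    refine image_le_of_deriv_right_lt_deriv_boundary (f := q) (f' := q') (a := 0) (b := x)
      (B := fun z => c + (∫ y in (0 : ℝ)..z, k y) + e * z) (B' := fun z => k z + e)
      (continuous_iff_continuousAt.2 fun y => (hq y).continuousAt).continuousOn
      (fun y _ => (hq y).hasDerivWithinAt) (by simpa using h0) (fun z => ?_) (fun z hz hqz => ?_)
      ⟨hx, le_rfl⟩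
    · have := ((hk.integral_hasStrictDerivAt 0 z).hasDerivAt.const_add c).add
        ((hasDerivAt_id z).const_mul e)
      rw [mul_one] at this
      exact this
    · have : 0 ≤ ∫ y in (0 : ℝ)..z, k y :=
        intervalIntegral.integral_nonneg hz.1 fun y _ => hk0 y
      have := h z ⟨hz.1, hz.2.le⟩ (by rw [hqz]; nlinarith [mul_nonneg he0.le hz.1])
      linarith
  have : e * x ≤ δ := by
    rw [he, div_mul_eq_mul_div, div_le_iff₀ (by positivity)]; nlinarith
  linarith

lemma le_of_deriv_above_int {q q' k : ℝ → ℝ} (hq : ∀ y, HasDerivAt q (q' y) y) (hk : Continuous k)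
    (hk0 : ∀ y, 0 ≤ k y) (hki : Integrable k) {c : ℝ} (h0 : q 0 ≤ c) {x : ℝ}
    (h : ∀ y ∈ uIcc 0 x, c ≤ q y → |q' y| ≤ k y) : q x ≤ c + ∫ y, k y := by
  rcases le_total 0 x with hx | hx
  · have := le_of_deriv_above hq hk hk0 h0 hx fun y hy hc =>
      (le_abs_self _).trans (h y (by rwa [uIcc_of_le hx]) hc)
    rw [intervalIntegral.integral_of_le hx] at this
    have := setIntegral_le_integral (s := Ioc 0 x) hki (Eventually.of_forall hk0)
    linarith
  · have := le_of_deriv_above (q := fun y => q (-y)) (q' := fun y => -q' (-y)) (k := fun y => k (-y))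
      (x := -x) (c := c) (fun y => by
        have := (hq (-y)).comp y (hasDerivAt_neg y)
        simpa [Function.comp_def] using this)
      (hk.comp continuous_neg) (fun y => hk0 _) (by simpa using h0) (by linarith)
      (fun y hy hc => (neg_le_abs _).trans (h (-y) (by
        rw [uIcc_of_ge hx]; exact ⟨by linarith [hy.2], by linarith [hy.1]⟩) hc))
    rw [intervalIntegral.integral_comp_neg, neg_neg, neg_zero,
      intervalIntegral.integral_of_le hx] at this
    have := setIntegral_le_integral (s := Ioc x 0) hki (Eventually.of_forall hk0)
    linarith

namespace NS
variable {γ ε T : ℝ} (S : NS γ ε T)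

/-- The dissipation controls the oscillation of `√p`. -/
lemma sup_p {R Γ c : ℝ} (hR : 0 < R) (h : S.Bdd R Γ) {t : ℝ} (ht : t ∈ Icc 0 T) (hc0 : 0 < c)
    (hcs : S.cs ≤ c) (hpc : S.p (t, 0) ≤ c) (hN0 : |S.N (t, 0)| ≤ R) {x : ℝ}
    (hx : |S.N (t, x)| ≤ R) :
    S.p (t, x) ≤ 2 * c + γ * S.K / 2 * Γ * I (S.W (th R) S.d) t := by
  have hγ := S.hγ
  have hK := S.K_one
  have hΓ := h.nonneg
  set D := I (S.W (th R) S.d) t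
  have hD : 0 ≤ D := I_nonneg (S.W0 (th_nonneg R) S.d0) t
  have hP : ∀ y, 0 < √(S.p (t, y)) := fun y => Real.sqrt_pos.2 (S.ppos _)
  have dq : ∀ y, HasDerivAt (fun y => √(S.p (t, y))) (S.px (t, y) / (2 * √(S.p (t, y)))) y :=
    fun y => (S.C1p.dx t y).sqrt (S.ppos _).ne'
  have hseg : ∀ y ∈ uIcc 0 x, |S.N (t, y)| ≤ R := fun y hy => by
    have m := S.N_mono t
    rw [abs_le] at hN0 hx ⊢
    rcases mem_uIcc.1 hy with ⟨h1, h2⟩ | ⟨h1, h2⟩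
    · have := m h1; have := m h2; simp only at *; constructor <;> linarith
    · have := m h1; have := m h2; simp only at *; constructor <;> linarith
  have main : ∀ a, 0 < a → √(S.p (t, x)) ≤ √c + (a * D + γ * S.K / (16 * a) * Γ) := by
    intro a ha
    have A := ((S.admθ hR S.cd).const_mul a).add ((S.admθ hR S.ch).const_mul (γ * S.K / (16 * a)))
    have l := le_of_deriv_above_int dq
      (k := fun y => a * S.W (th R) S.d (t, y) + γ * S.K / (16 * a) * S.W (th R) S.h (t, y))
      (A.cont.comp (by fun_prop : Continuous fun y => (t, y)))
      (fun y => by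
        have h1 := S.W0 (th_nonneg R) S.d0 (t, y)
        have h2 := S.W0 (th_nonneg R) S.h0 (t, y)
        positivity) (A.integrable t) (c := √c) (Real.sqrt_le_sqrt hpc) (x := x)
      (fun y hy hcy => by
        have h1 := S.d0 (t, y)
        have h2 := S.h0 (t, y)
        have h3 := S.hK3 (t, y) (hcs.trans ((Real.sqrt_le_sqrt_iff (S.ppos _).le).1 hcy))
        have h4 := S.ρpos (t, y)
        have h5 := S.ppos (t, y)
        simp only [W, th_one hR (hseg y hy), one_mul]
        refine yng (by positivity) (by positivity) ?_
        rw [div_pow, mul_pow, Real.sq_sqrt (S.ppos _).le, S.px_eq]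
        have e : (γ * S.p (t, y) * S.ρx (t, y) / S.ρ (t, y)) ^ 2 / (2 ^ 2 * S.p (t, y))
          = γ / 4 * S.d (t, y) * S.ρ (t, y) := by
          rw [d]; field_simp; norm_num
        have e' : 4 * (a * S.d (t, y)) * (γ * S.K / (16 * a) * S.h (t, y))
          = γ / 4 * S.d (t, y) * (S.K * S.h (t, y)) := by field_simp; ring
        rw [e, e']
        exact mul_le_mul_of_nonneg_left h3 (by positivity))
    have e := I_lin2 (S.admθ hR S.cd) (S.admθ hR S.ch) a (γ * S.K / (16 * a)) (fun q => rfl) t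
    have hh := mul_le_mul_of_nonneg_left (h.h hR ht) (by positivity : 0 ≤ γ * S.K / (16 * a))
    have l' : √(S.p (t, x)) ≤ √c + (a * D + γ * S.K / (16 * a) * I (S.W (th R) S.h) t) :=
      l.trans (le_of_eq (congrArg _ e))
    linarith
  set y := √(S.p (t, x)) - √c with hy
  have hp : S.p (t, x) = √(S.p (t, x)) ^ 2 := (Real.sq_sqrt (S.ppos _).le).symm
  have hcc : c = √c ^ 2 := (Real.sq_sqrt hc0.le).symm
  rcases le_total y 0 with h0 | h0
  · have : S.p (t, x) ≤ c := (Real.sqrt_le_sqrt_iff hc0.le).1 (by linarith)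
    have : 0 ≤ γ * S.K / 2 * Γ * D := by positivity
    linarith
  · have dis := discrim_le_zero (a := D) (b := -y) (c := γ * S.K / 16 * Γ) (fun a => by
      have z : 0 ≤ D * (a * a) := mul_nonneg hD (mul_self_nonneg a)
      have z' : 0 ≤ γ * S.K / 16 * Γ := by positivity
      rcases le_or_gt a 0 with ha | ha
      · have := mul_nonneg (neg_nonneg.2 ha) h0
        nlinarith
      · have := mul_le_mul_of_nonneg_left (main a ha) ha.le
        have e : a * (√c + (a * D + γ * S.K / (16 * a) * Γ))
          = a * √c + D * (a * a) + γ * S.K / 16 * Γ := by field_simp; ring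
        rw [e] at this
        rw [hy]; linarith)
    rw [discrim] at dis
    have : S.p (t, x) ≤ 2 * c + 2 * y ^ 2 := by
      nlinarith [sq_nonneg (√(S.p (t, x)) - 2 * √c), hp, hcc]
    nlinarith

end NS
namespace NS
variable {γ ε T : ℝ} (S : NS γ ε T)

variable {S} in
lemma Bdd.half {R Γ : ℝ} (hR : 0 < R) (h : S.Bdd (2 * R) Γ) : S.Bdd R Γ := by
  have hR2 : 0 < 2 * R := by positivity
  refine ⟨fun τ hτ => (I_mono (S.admθ hR S.cfB) (S.admθ hR2 S.cfB) τ fun x => ?_).trans (h.1 τ hτ),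
    (mul_le_mul_of_nonneg_left (J_mono (S.admθ hR S.cd) (S.admθ hR2 S.cd) S.hT.le
      fun τ _ x => ?_) S.hε.le).trans h.2⟩
  · exact mul_le_mul_of_nonneg_right (th_le_th hR _) (S.fB0 _)
  · exact mul_le_mul_of_nonneg_right (th_le_th hR _) (S.d0 _)

/-- A reference level for the pressure: above `cs` and above `p(t,0)` for all times. -/
lemma exists_level : ∃ c, 0 < c ∧ S.cs ≤ c ∧ ∀ t ∈ Icc 0 T, S.p (t, 0) ≤ c := by
  obtain ⟨C, hC⟩ := (isCompact_Icc (a := (0 : ℝ)) (b := T)).exists_bound_of_continuousOn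
    (f := fun t => S.p (t, 0)) (S.C1p.cont.comp (by fun_prop)).continuousOn
  refine ⟨max (max C S.cs) 1, by positivity, (le_max_right _ _).trans (le_max_left _ _),
    fun t ht => ?_⟩
  exact ((le_abs_self _).trans (hC t ht)).trans ((le_max_left _ _).trans (le_max_left _ _))

/-- Second form of the transport part of the flux, using the pointwise bound on the pressure. -/
lemma T4' {R Γ c : ℝ} (hR : 0 < R) (h : S.Bdd (2 * R) Γ) (hc0 : 0 < c)
    (hcs : S.cs ≤ c) (hpc : ∀ t ∈ Icc 0 T, S.p (t, 0) ≤ c)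
    (hN0 : ∀ t ∈ Icc 0 T, |S.N (t, 0)| ≤ 2 * R) {t : ℝ} (ht : t ∈ Icc 0 T) {a : ℝ} (ha : 0 < a) :
    |J (S.W (th1 R) (fun q => S.ρ q * S.p q * S.V q)) t|
      ≤ a * (T * (2 * Γ)) + (2 * c) ^ 2 / (4 * a) * (T * (4 * Cc / R))
        + Cc / R * S.K * (γ * S.K / 2 * Γ) * (Γ * (Γ / ε)) := by
  have hR2 : 0 < 2 * R := by positivity
  have hγ := S.hγ
  have hε := S.hε
  have hK := S.K_one
  have hc := one_le_Cc
  have hΓ := h.nonneg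
  have c1 : Continuous (fun q => S.ρ q * S.p q * S.V q) :=
    (S.C1ρ.cont.mul S.C1p.cont).mul S.C1V.cont
  have aD := S.admθ hR2 S.cd
  have aF := (S.admθ hR2 S.cfB).time_mul aD.I_cont
  refine (J_abs3 (S.admθ1 hR c1) (S.admθ hR2 S.cV2) (S.admω hR S.C1ρ.cont) aF a
    ((2 * c) ^ 2 / (4 * a)) (Cc / R * S.K * (γ * S.K / 2 * Γ)) ht.1 (fun τ hτ x => ?_)).trans ?_
  · have hτ' : τ ∈ Icc 0 T := ⟨hτ.1, hτ.2.trans ht.2⟩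
    have h1 := om_nonneg R (S.N (τ, x))
    have h2 := (S.ρpos (τ, x)).le
    have h3 := th_nonneg (2 * R) (S.N (τ, x))
    have h5 := (S.ppos (τ, x)).le
    have h6 := S.fB0 (τ, x)
    have hD : 0 ≤ I (S.W (th (2 * R)) S.d) τ := I_nonneg (S.W0 (th_nonneg _) S.d0) τ
    have y : |2 * c * (th1 R (S.N (τ, x)) * (S.ρ (τ, x) * S.V (τ, x)))|
        ≤ a * S.W (th (2 * R)) (fun q => S.ρ q * S.V q ^ 2) (τ, x)
          + (2 * c) ^ 2 / (4 * a) * S.W (om R) S.ρ (τ, x) := by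
      simp only [W]
      refine yng (by positivity) (by positivity) ?_
      have e : (2 * c * (th1 R (S.N (τ, x)) * (S.ρ (τ, x) * S.V (τ, x)))) ^ 2
        = (2 * c) ^ 2 * om R (S.N (τ, x)) * S.ρ (τ, x) ^ 2 * S.V (τ, x) ^ 2
          * th R (S.N (τ, x)) := by
          rw [mul_pow (2 * c), mul_pow (th1 R _), th1_sq]; ring
      have e' : 4 * (a * (th (2 * R) (S.N (τ, x)) * (S.ρ (τ, x) * S.V (τ, x) ^ 2)))
          * ((2 * c) ^ 2 / (4 * a) * (om R (S.N (τ, x)) * S.ρ (τ, x)))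
        = (2 * c) ^ 2 * om R (S.N (τ, x)) * S.ρ (τ, x) ^ 2 * S.V (τ, x) ^ 2
          * th (2 * R) (S.N (τ, x)) := by field_simp
      rw [e, e']
      exact mul_le_mul_of_nonneg_left (th_le_th hR _) (by positivity)
    have y3 : 0 ≤ Cc / R * S.K * (γ * S.K / 2 * Γ)
        * (I (S.W (th (2 * R)) S.d) τ * S.W (th (2 * R)) S.fB (τ, x)) := by
      simp only [W]; positivity
    by_cases hN : |S.N (τ, x)| ≤ 2 * R
    swap
    · have e0 : S.W (th1 R) (fun q => S.ρ q * S.p q * S.V q) (τ, x) = 0 := by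
        simp [W, th1_zero hR (not_le.1 hN).le]
      rw [e0, abs_zero]
      have := (abs_nonneg _).trans y
      exact add_nonneg this y3
    have eW : |S.W (th1 R) (fun q => S.ρ q * S.p q * S.V q) (τ, x)|
        = S.p (τ, x) * |th1 R (S.N (τ, x)) * (S.ρ (τ, x) * S.V (τ, x))| := by
      rw [← abs_of_nonneg h5, ← abs_mul]; simp only [W]; congr 1; ring
    have ey : |2 * c * (th1 R (S.N (τ, x)) * (S.ρ (τ, x) * S.V (τ, x)))|
        = 2 * c * |th1 R (S.N (τ, x)) * (S.ρ (τ, x) * S.V (τ, x))| := by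
      rw [abs_mul, abs_of_pos (by positivity : 0 < 2 * c)]
    rw [eW]; rw [ey] at y
    have hX := abs_nonneg (th1 R (S.N (τ, x)) * (S.ρ (τ, x) * S.V (τ, x)))
    rcases le_total (S.p (τ, x)) c with hp | hp
    · have := mul_le_mul_of_nonneg_right (hp.trans (by linarith : c ≤ 2 * c)) hX
      linarith
    · have sp := S.sup_p hR2 h hτ' hc0 hcs (hpc τ hτ') (hN0 τ hτ') hN
      have hρ := S.hK3 (τ, x) (hcs.trans hp)
      have hX' : |th1 R (S.N (τ, x)) * (S.ρ (τ, x) * S.V (τ, x))|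
          ≤ (Cc / R * th (2 * R) (S.N (τ, x))) * (S.K * S.fB (τ, x)) := by
        rw [abs_mul]
        refine mul_le_mul (th1_le_th hR _) ?_ (abs_nonneg _) (by positivity)
        rw [abs_mul, abs_of_nonneg h2]
        have hV : |S.V (τ, x)| ≤ (1 + S.V (τ, x) ^ 2) / 2 := by
          rw [← sq_abs (S.V (τ, x))]; nlinarith [sq_nonneg (|S.V (τ, x)| - 1)]
        have i1 := mul_le_mul_of_nonneg_left hV h2
        have i2 : 0 ≤ S.ρ (τ, x) * S.V (τ, x) ^ 2 := by positivity
        have i3 : 0 ≤ (S.K - 1) * (S.ρ (τ, x) * S.V (τ, x) ^ 2) :=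
          mul_nonneg (by linarith) i2
        have i4 : 0 ≤ S.K * S.h (τ, x) := mul_nonneg (by linarith) (S.h0 _)
        have i5 : S.ρ (τ, x) ≤ S.K * S.h (τ, x) := hρ
        rw [fB]; nlinarith
      have m1 := mul_le_mul_of_nonneg_right sp hX
      have hm : 0 ≤ γ * S.K / 2 * Γ * I (S.W (th (2 * R)) S.d) τ := by positivity
      have m2 := mul_le_mul_of_nonneg_left hX' hm
      have m3 : γ * S.K / 2 * Γ * I (S.W (th (2 * R)) S.d) τ
            * ((Cc / R * th (2 * R) (S.N (τ, x))) * (S.K * S.fB (τ, x)))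
          = Cc / R * S.K * (γ * S.K / 2 * Γ)
            * (I (S.W (th (2 * R)) S.d) τ * S.W (th (2 * R)) S.fB (τ, x)) := by
        simp only [W]; ring
      rw [m3] at m2
      linarith
  · have A := J_le_of_I_le (S.admθ hR2 S.cV2) ht.1
      (fun τ hτ => h.V hR2 ⟨hτ.1, hτ.2.trans ht.2⟩)
    have B := J_le_of_I_le (S.admω hR S.C1ρ.cont) ht.1 (fun τ hτ => S.mass_om hR τ)
    have A' : t * (2 * Γ) ≤ T * (2 * Γ) := mul_le_mul_of_nonneg_right ht.2 (by positivity)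
    have B' : t * (4 * Cc / R) ≤ T * (4 * Cc / R) := mul_le_mul_of_nonneg_right ht.2 (by positivity)
    have C := J_time_mul_le (S.admθ hR2 S.cfB) aD (S.W0 (th_nonneg _) S.d0) ht.1
      (fun τ hτ => h.1 τ ⟨hτ.1, hτ.2.trans ht.2⟩)
    have C' : J (S.W (th (2 * R)) S.d) t ≤ Γ / ε := by
      rw [le_div_iff₀' hε]; exact h.d hR2 ht
    have C'' := C.trans (mul_le_mul_of_nonneg_left C' hΓ)
    exact add_le_add (add_le_add (mul_le_mul_of_nonneg_left (A.trans A') ha.le)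
      (mul_le_mul_of_nonneg_left (B.trans B') (by positivity)))
      (mul_le_mul_of_nonneg_left C'' (by positivity))

lemma flux_tiny {η : ℝ} (hη : 0 < η) : ∃ R₀, 1 ≤ R₀ ∧ ∀ R, R₀ ≤ R → ∀ t ∈ Icc 0 T,
    |J (S.W (th1 R) S.flux) t| ≤ η * (1 + S.G (2 * R)) := by
  obtain ⟨c, hc0, hcs, hpc⟩ := S.exists_level
  have hT := S.hT
  have hε := S.hε
  have hγ := S.hγ
  have hK := S.K_one
  have hc := one_le_Cc
  set e := η / 3 with he
  have he0 : 0 < e := by positivity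
  set M := Cc * S.K * (γ * S.K / 2) / ε with hM
  have hM0 : 0 < M := by positivity
  set δ := min 1 (e / (4 * M)) with hδ
  have hδ0 : 0 < δ := by positivity
  have hδ1 : δ ≤ 1 := min_le_left _ _
  have hδ2 : M * (4 * δ) ≤ e := by
    have : δ ≤ e / (4 * M) := min_le_right _ _
    rw [le_div_iff₀ (by positivity)] at this
    linarith
  obtain ⟨R₁, h1, hF⟩ := S.flux_small he0
  obtain ⟨R₂, h2, hL⟩ := S.label_bdd 0
  obtain ⟨R₃, h3, hG⟩ := S.growth_G hδ0
  set s₀ := (2 * T + 4 * c ^ 2 * T * Cc) / e with hs₀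
  refine ⟨max (max (max R₁ R₂) R₃) (s₀ ^ 2), h1.trans ((le_max_left _ _).trans
    ((le_max_left _ _).trans (le_max_left _ _))), fun R hR t ht => ?_⟩
  simp only [max_le_iff] at hR
  obtain ⟨⟨⟨hR1, hR2⟩, hR3⟩, hR4⟩ := hR
  have hR0 : 0 < R := by linarith
  have hs : s₀ ≤ √R := Real.le_sqrt_of_sq_le hR4
  have hRs : R = √R ^ 2 := (Real.sq_sqrt hR0.le).symm
  have hG' := hG (2 * R) (by linarith)
  have hs0 : 0 < √R := Real.sqrt_pos.2 hR0
  have h2s : √(2 * R) ≤ 2 * √R := by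
    rw [show 2 * √R = √(4 * R) by
      rw [Real.sqrt_mul (by norm_num), show (4 : ℝ) = 2 ^ 2 by norm_num, Real.sqrt_sq (by norm_num)]]
    exact Real.sqrt_le_sqrt (by linarith)
  have hB := S.bdd_G (by positivity : 0 < 2 * R)
  set Γ := S.G (2 * R)
  have hΓ := hB.nonneg
  have hΓs : Γ ≤ 2 * δ * √R := hG'.trans (by nlinarith)
  set s := √R
  have f := hF R hR1 _ (hB.half hR0) t ht
  have t4 := S.T4' hR0 hB hc0 hcs hpc (fun t ht => by
    have := hL t ht 0 (by simp); linarith) ht (a := 1 / s) (by positivity)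
  have b1 : 1 / s * (T * (2 * Γ)) + (2 * c) ^ 2 / (4 * (1 / s)) * (T * (4 * Cc / R))
      = (2 * T * Γ + 4 * c ^ 2 * T * Cc) / s := by
    rw [hRs]; field_simp; ring
  have b2 : Cc / R * S.K * (γ * S.K / 2 * Γ) * (Γ * (Γ / ε)) = M * (Γ ^ 2 / R) * Γ := by
    rw [hM]; field_simp
  have b3 : Γ ^ 2 / R ≤ 4 * δ := by
    rw [div_le_iff₀ hR0]
    have : Γ ^ 2 ≤ (2 * δ * s) ^ 2 := pow_le_pow_left₀ hΓ hΓs 2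
    have e2 : (2 * δ * s) ^ 2 = 4 * δ * R * δ := by rw [hRs]; ring
    rw [e2] at this
    exact this.trans (mul_le_of_le_one_right (by positivity) hδ1)
  have b4 : M * (Γ ^ 2 / R) * Γ ≤ e * Γ :=
    mul_le_mul_of_nonneg_right ((mul_le_mul_of_nonneg_left b3 hM0.le).trans hδ2) hΓ
  have b5 : (2 * T * Γ + 4 * c ^ 2 * T * Cc) / s ≤ e * (1 + Γ) := by
    rw [div_le_iff₀ hs0]
    rw [hs₀, div_le_iff₀' he0] at hs
    have z1 : 0 ≤ 4 * c ^ 2 * T * Cc * Γ := by positivity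
    nlinarith [mul_le_mul_of_nonneg_right hs (by positivity : 0 ≤ 1 + Γ)]
  rw [b1, b2] at t4
  have : η = 3 * e := by rw [he]; ring
  rw [this]; linarith

/-- The localised effective energies are bounded uniformly in the scale. -/
lemma G_bounded : ∃ M R₀, 1 ≤ R₀ ∧ ∀ R, R₀ ≤ R → S.G R ≤ M := by
  obtain ⟨R₁, h1, hF⟩ := S.flux_tiny (η := 1 / 4) (by norm_num)
  obtain ⟨R₂, h2, hG⟩ := S.growth_G one_pos
  set Cw := J (fun q => |S.work q|) T
  set B := ∫ x, S.fB (0, x)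
  have hCw : 0 ≤ Cw := J_nonneg (fun q => abs_nonneg _) S.hT.le
  have hB0 : 0 ≤ B := integral_nonneg fun x => S.fB0 _
  set A := B + Cw + 1 / 4
  have step : ∀ R, max R₁ R₂ ≤ R → S.G R ≤ A + 1 / 4 * S.G (2 * R) := fun R hR => by
    have hR1 : R₁ ≤ R := (le_max_left _ _).trans hR
    have hR0 : 0 < R := by linarith
    refine S.G_le fun t ht => ?_
    have f := abs_le.1 (hF R hR1 t ht)
    have w := abs_le.1 ((S.work_le hR0 ht).trans
      (J_le_J S.adm_work.abs (fun q => abs_nonneg _) ht.1 ht.2))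
    have i0 := S.init_le hR0
    rw [S.identA hR0 ht]
    simp only [A]
    linarith
  have it : ∀ k : ℕ, ∀ R, max R₁ R₂ ≤ R → S.G R ≤ 2 * A + (1 / 4) ^ k * S.G (2 ^ k * R) := by
    intro k
    induction k with
    | zero => intro R _; simp only [pow_zero, one_mul]; simp only [A]; linarith
    | succ k ih =>
      intro R hR
      have hR0 : 0 < R := by linarith [le_max_left R₁ R₂]
      have s1 := step R hR
      have s2 := ih (2 * R) (by linarith)
      have e : 2 ^ k * (2 * R) = 2 ^ (k + 1) * R := by ring
      have e' : (1 / 4 : ℝ) ^ (k + 1) = 1 / 4 * (1 / 4) ^ k := by ring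
      rw [e] at s2
      rw [e', mul_assoc]
      simp only [A] at s1 s2 ⊢
      linarith
  refine ⟨2 * A, max R₁ R₂, h1.trans (le_max_left _ _), fun R hR => ?_⟩
  have hR0 : 0 < R := by linarith [le_max_left R₁ R₂]
  have lim : Tendsto (fun k : ℕ => 2 * A + (1 / 2 : ℝ) ^ k * √R) atTop (nhds (2 * A + 0 * √R)) :=
    ((tendsto_pow_atTop_nhds_zero_of_lt_one (by norm_num) (by norm_num)).mul_const _).const_add _
  rw [zero_mul, add_zero] at lim
  refine ge_of_tendsto' lim fun k => (it k R hR).trans ?_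
  have hk : (1 : ℝ) ≤ 2 ^ k := one_le_pow₀ (by norm_num)
  have g := hG (2 ^ k * R) (((le_max_right _ _).trans hR).trans (le_mul_of_one_le_left hR0.le hk))
  have g2 : √(2 ^ k * R) ≤ 2 ^ k * √R := by
    rw [Real.sqrt_mul (by positivity)]
    refine mul_le_mul_of_nonneg_right ?_ (Real.sqrt_nonneg _)
    exact Real.sqrt_le_iff.2 ⟨by positivity, by nlinarith⟩
  have e : (1 / 2 : ℝ) ^ k = (1 / 4) ^ k * 2 ^ k := by rw [← mul_pow]; norm_num
  rw [e, mul_assoc]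
  have := mul_le_mul_of_nonneg_left (g.trans ((one_mul _).le.trans g2))
    (by positivity : 0 ≤ (1 / 4 : ℝ) ^ k)
  linarith

/-- The non-viscous energy flux through the cutoff vanishes in the limit. -/
lemma flux_zero {η : ℝ} (hη : 0 < η) : ∃ R₀, 1 ≤ R₀ ∧ ∀ R, R₀ ≤ R → ∀ t ∈ Icc 0 T,
    |J (S.W (th1 R) S.flux) t| ≤ η := by
  obtain ⟨M, R₁, h1, hM⟩ := S.G_bounded
  have hM0 : 0 ≤ M := (S.G_nonneg _).trans (hM R₁ le_rfl)
  obtain ⟨R₂, h2, hF⟩ := S.flux_tiny (η := η / (1 + M)) (by positivity)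
  refine ⟨max R₁ R₂, h1.trans (le_max_left _ _), fun R hR t ht => ?_⟩
  have hR1 : R₁ ≤ R := (le_max_left _ _).trans hR
  refine (hF R ((le_max_right _ _).trans hR) t ht).trans ?_
  have := hM (2 * R) (by linarith)
  rw [div_mul_eq_mul_div, div_le_iff₀ (by positivity)]
  exact mul_le_mul_of_nonneg_left (by linarith) hη.le

end NS
namespace NS
variable {γ ε T : ℝ} (S : NS γ ε T)

/-! ### The viscous energy flux -/

lemma bdd_large : ∃ M R₀, 0 ≤ M ∧ 1 ≤ R₀ ∧ ∀ R, R₀ ≤ R → S.Bdd R M := by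
  obtain ⟨M, R₁, h1, hM⟩ := S.G_bounded
  refine ⟨M, R₁, (S.G_nonneg _).trans (hM R₁ le_rfl), h1, fun R hR => ?_⟩
  have b := S.bdd_G (R := R) (by linarith)
  exact ⟨fun τ hτ => (b.1 τ hτ).trans (hM R hR), b.2.trans (hM R hR)⟩

/-- The constant by which multiplication with `ρ` inflates a weight of bounded mass. -/
lemma rho_weight {R Γ c m : ℝ} (hR : 0 < R) (h : S.Bdd (2 * R) Γ) (hc0 : 0 < c)
    (hcs : S.cs ≤ c) (hpc : ∀ t ∈ Icc 0 T, S.p (t, 0) ≤ c)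
    (hN0 : ∀ t ∈ Icc 0 T, |S.N (t, 0)| ≤ 2 * R) {k : ℝ × ℝ → ℝ} (hk : Adm k) (hk0 : ∀ q, 0 ≤ k q)
    (hkN : ∀ q, 2 * R ≤ |S.N q| → k q = 0) (hm : ∀ τ ∈ Icc 0 T, I k τ ≤ m) :
    J (fun q => k q * S.ρ q) T ≤ m * (S.K * (1 + 2 * c) * T + S.K * (γ * S.K / 2 * Γ) * (Γ / ε)) := by
  have hR2 : 0 < 2 * R := by positivity
  have hγ := S.hγ
  have hε := S.hε
  have hK := S.K_one
  have hΓ := h.nonneg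
  have hm0 : 0 ≤ m := (I_nonneg hk0 0).trans (hm 0 ⟨le_rfl, S.hT.le⟩)
  have aD := S.admθ hR2 S.cd
  have aF := hk.time_mul aD.I_cont
  refine (J_nn2 (hk.mul S.C1ρ.cont) hk aF (S.K * (1 + 2 * c)) (S.K * (γ * S.K / 2 * Γ)) S.hT.le
    (fun τ hτ x => ?_)).trans ?_
  · rcases le_total (2 * R) |S.N (τ, x)| with hN | hN
    · simp [hkN _ hN]
    · have sp := S.sup_p hR2 h hτ hc0 hcs (hpc τ hτ) (hN0 τ hτ) hN
      have h4 := S.hK4 (τ, x)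
      have h5 : S.K * (1 + S.p (τ, x)) ≤ S.K * (1 + (2 * c + γ * S.K / 2 * Γ *
        I (S.W (th (2 * R)) S.d) τ)) := mul_le_mul_of_nonneg_left (by linarith) (by linarith)
      have := mul_le_mul_of_nonneg_left (h4.trans h5) (hk0 (τ, x))
      refine this.trans (le_of_eq ?_)
      ring
  · have A := J_le_of_I_le hk S.hT.le hm
    have C := J_time_mul_le hk aD (S.W0 (th_nonneg _) S.d0) S.hT.le hm
    have C' : J (S.W (th (2 * R)) S.d) T ≤ Γ / ε := by
      rw [le_div_iff₀' hε]; exact h.2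
    have C'' := C.trans (mul_le_mul_of_nonneg_left C' hm0)
    have z1 := mul_le_mul_of_nonneg_left A (by positivity : 0 ≤ S.K * (1 + 2 * c))
    have z2 := mul_le_mul_of_nonneg_left C'' (by positivity : 0 ≤ S.K * (γ * S.K / 2 * Γ))
    refine (add_le_add z1 z2).trans (le_of_eq ?_)
    ring

lemma cF : Continuous (fun q => (S.ρx q / S.ρ q) ^ 2) := ((S.C1ρ.log S.ρpos).cont_x).pow 2

lemma entropy_identity {R : ℝ} (hR : 0 < R) :
    I (S.W (th R) (fun q => S.ρ q * Real.log (S.ρ q))) T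
      - I (S.W (th R) (fun q => S.ρ q * Real.log (S.ρ q))) 0
      = J (S.W (th R) (fun q => S.ρx q * S.V q)) T
        - ε * J (S.W (th R) (fun q => (S.ρx q / S.ρ q) ^ 2)) T
        + (J (S.W (th1 R) (fun q => S.ρ q ^ 2 * S.V q)) T - ε * J (S.W (th1 R) S.ρx) T) := by
  have Cf := S.C1ρ.mul (S.C1ρ.log S.ρpos)
  have Cj := S.C1ρ.mul S.C1u
  have b := S.bal (th_hasDeriv R) (th1_cont R) (fun _ => th_zero hR) (fun _ => th1_zero hR)
    Cf Cj.cont Cj.cont_x Cj.dx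
    (s := fun q => S.ρx q * S.V q - ε * (S.ρx q / S.ρ q) ^ 2)
    (fun q => by
      have h3 := S.mass q
      have := (S.ρpos q).ne'
      rw [h3, S.V_def]; field_simp; ring) (t := T) ⟨S.hT.le, le_rfl⟩
  have c1 : Continuous (fun q => S.ρx q * S.V q) := S.C1ρ.cont_x.mul S.C1V.cont
  have c2 : Continuous (fun q => S.ρ q ^ 2 * S.V q) := (S.C1ρ.cont.pow 2).mul S.C1V.cont
  have l1 := J_lin2 (S.admθ hR c1) (S.admθ hR S.cF) 1 (-ε)
    (k := S.W (th R) (fun q => S.ρx q * S.V q - ε * (S.ρx q / S.ρ q) ^ 2))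
    (fun q => by simp only [W]; ring) T
  have l2 := J_lin2 (S.admθ1 hR c2) (S.admθ1 hR S.C1ρ.cont_x) 1 (-ε)
    (k := S.W (th1 R) (fun q => S.ρ q * (S.ρ q * S.u q)))
    (fun q => by
      have := (S.ρpos q).ne'
      simp only [W]; rw [S.V_def]; field_simp; ring) T
  rw [l1, l2] at b
  linarith

lemma sq_sub_le (a b : ℝ) : (a - b) ^ 2 ≤ 2 * a ^ 2 + 2 * b ^ 2 := by
  nlinarith [sq_nonneg (a + b)]

lemma momentum_sq (q : ℝ × ℝ) : S.ρ q ^ 2 * S.u q ^ 2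
    ≤ 2 * (S.ρ q ^ 2 * S.V q ^ 2) + 2 * ε ^ 2 * (S.ρx q / S.ρ q) ^ 2 := by
  have e : S.ρ q ^ 2 * S.u q ^ 2 = (S.ρ q * S.V q - ε * (S.ρx q / S.ρ q)) ^ 2 := by
    have := (S.ρpos q).ne'
    rw [S.V_def]; field_simp; ring
  have := sq_sub_le (S.ρ q * S.V q) (ε * (S.ρx q / S.ρ q))
  rw [e]
  refine this.trans (le_of_eq ?_)
  ring

set_option maxHeartbeats 1000000 in
/-- The localised momentum is at most of the order of the mass. -/
lemma momentum_bound : ∃ C R₀, 0 ≤ C ∧ 1 ≤ R₀ ∧ ∀ R, R₀ ≤ R →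
    J (S.W (th R) (fun q => S.ρ q ^ 2 * S.u q ^ 2)) T ≤ C * R := by
  obtain ⟨M, R₁, hM, h1, hB⟩ := S.bdd_large
  obtain ⟨c, hc0, hcs, hpc⟩ := S.exists_level
  obtain ⟨R₂, h2, hL⟩ := S.label_bdd 0
  have hT := S.hT
  have hε := S.hε
  have hγ := S.hγ
  have hK := S.K_one
  have hc := one_le_Cc
  set X := S.K * (1 + 2 * c) * T + S.K * (γ * S.K / 2 * M) * (M / ε) with hX
  have hX0 : 0 ≤ X := by positivity
  set Y := 2 / ε * (2 * (S.K * (M + 4) + 4) + (1 / ε + 1) * (2 * M * X) + (1 / 4 + ε) * (4 * Cc * X))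
    with hY
  have hY0 : 0 ≤ Y := by positivity
  refine ⟨2 * (2 * M * X) + 2 * ε ^ 2 * Y, max R₁ R₂, by positivity, h1.trans (le_max_left _ _),
    fun R hR => ?_⟩
  have hR1 : R₁ ≤ R := (le_max_left _ _).trans hR
  have hR2 : R₂ ≤ R := (le_max_right _ _).trans hR
  have hRone : 1 ≤ R := by linarith
  have hR0 : 0 < R := by linarith
  have hBR := hB R hR1
  have hB2 := hB (2 * R) (by linarith)
  have hN0 : ∀ t ∈ Icc 0 T, |S.N (t, 0)| ≤ 2 * R := fun t ht => by
    have := hL t ht 0 (by simp); linarith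
  have cρV : Continuous (fun q => S.ρ q ^ 2 * S.V q ^ 2) :=
    (S.C1ρ.cont.pow 2).mul (S.C1V.cont.pow 2)
  have cρ2 : Continuous (fun q => S.ρ q ^ 2) := S.C1ρ.cont.pow 2
  have cρu : Continuous (fun q => S.ρ q ^ 2 * S.u q ^ 2) :=
    (S.C1ρ.cont.pow 2).mul (S.C1u.cont.pow 2)
  have A : J (S.W (th R) (fun q => S.ρ q ^ 2 * S.V q ^ 2)) T ≤ 2 * M * X := by
    have := S.rho_weight hR0 hB2 hc0 hcs hpc hN0 (S.admθ hR0 S.cV2)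
      (S.W0 (th_nonneg R) fun q => by have := S.ρpos q; positivity)
      (fun q hq => by simp [W, th_zero hR0 hq]) (fun τ hτ => hBR.V hR0 hτ)
    refine le_trans (le_of_eq ?_) this
    congr 1; funext q; simp only [W]; ring
  have B : J (S.W (om R) (fun q => S.ρ q ^ 2)) T ≤ 4 * Cc * X := by
    have := S.rho_weight hR0 hB2 hc0 hcs hpc hN0 (S.admω hR0 S.C1ρ.cont)
      (S.W0 (om_nonneg R) fun q => (S.ρpos q).le)
      (fun q hq => by simp [W, om_zero hR0 hq]) (fun τ hτ => S.mass_om hR0 τ)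
    have e : S.W (om R) (fun q => S.ρ q ^ 2) = fun q => S.W (om R) S.ρ q * S.ρ q := by
      funext q; simp only [W]; ring
    rw [e]
    refine this.trans (mul_le_mul_of_nonneg_right ?_ hX0)
    exact div_le_self (by positivity) hRone
  have E : ∀ τ ∈ Icc 0 T, |I (S.W (th R) (fun q => S.ρ q * Real.log (S.ρ q))) τ|
      ≤ (S.K * (M + 4) + 4) * R := fun τ hτ => by
    have cl : Continuous (fun q => S.ρ q * Real.log (S.ρ q)) :=
      (S.C1ρ.mul (S.C1ρ.log S.ρpos)).cont
    have y := I_abs2 (S.admθ hR0 cl) (S.admθ hR0 S.ch) (S.admθ hR0 S.C1ρ.cont) S.K (S.K + 1) (t := τ)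
      (fun x => by
        have h1 := th_nonneg R (S.N (τ, x))
        have h2 := (S.ρpos (τ, x)).le
        have h3 := S.hK2 (τ, x)
        simp only [W]
        rw [abs_mul, abs_of_nonneg h1, abs_mul, abs_of_nonneg h2]
        have hl : |Real.log (S.ρ (τ, x))| ≤ 1 + Real.log (S.ρ (τ, x)) ^ 2 := by
          rw [← sq_abs (Real.log _)]; nlinarith [sq_nonneg (|Real.log (S.ρ (τ, x))| - 1)]
        have h4 := mul_le_mul_of_nonneg_left hl h2
        have h5 : S.ρ (τ, x) * |Real.log (S.ρ (τ, x))|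
            ≤ S.K * S.h (τ, x) + (S.K + 1) * S.ρ (τ, x) := by
          rw [h]; linarith
        have := mul_le_mul_of_nonneg_left h5 h1
        linarith)
    have y1 := hBR.h hR0 hτ
    have y2 := S.mass_th hR0 τ
    have z1 := mul_le_mul_of_nonneg_left y1 (by linarith : 0 ≤ S.K)
    have z2 := mul_le_mul_of_nonneg_left y2 (by linarith : 0 ≤ S.K + 1)
    have z3 : S.K * M ≤ S.K * M * R := le_mul_of_one_le_right (by positivity) hRone
    nlinarith
  set F := J (S.W (th R) (fun q => (S.ρx q / S.ρ q) ^ 2)) T with hF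
  have id := S.entropy_identity hR0
  have y1 := J_abs2 (k := S.W (th R) (fun q => S.ρx q * S.V q))
    (S.admθ hR0 (S.C1ρ.cont_x.mul S.C1V.cont)) (S.admθ hR0 S.cF) (S.admθ hR0 cρV)
    (ε / 4) (1 / ε) hT.le (fun τ _ x => by
      have h1 := th_nonneg R (S.N (τ, x))
      have h2 := S.ρpos (τ, x)
      simp only [W]
      refine yng (by positivity) (by positivity) (le_of_eq ?_)
      field_simp)
  have y2 := J_abs2 (k := S.W (th1 R) (fun q => S.ρ q ^ 2 * S.V q))
    (S.admθ1 hR0 (cρ2.mul S.C1V.cont)) (S.admθ hR0 cρV) (S.admω hR0 cρ2)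
    1 (1 / 4) hT.le (fun τ _ x => by
      have h1 := th_nonneg R (S.N (τ, x))
      have h2 := S.ρpos (τ, x)
      have h3 := om_nonneg R (S.N (τ, x))
      simp only [W]
      refine yng (by positivity) (by positivity) (le_of_eq ?_)
      rw [mul_pow, th1_sq]; ring)
  have y3 := J_abs2 (S.admθ1 hR0 S.C1ρ.cont_x) (S.admθ hR0 S.cF) (S.admω hR0 cρ2)
    (1 / 4) 1 hT.le (fun τ _ x => by
      have h1 := th_nonneg R (S.N (τ, x))
      have h2 := S.ρpos (τ, x)
      have h3 := om_nonneg R (S.N (τ, x))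
      simp only [W]
      refine yng (by positivity) (by positivity) (le_of_eq ?_)
      rw [mul_pow, th1_sq]; field_simp)
  have hF' : F ≤ Y * R := by
    have E0 := abs_le.1 (E 0 ⟨le_rfl, hT.le⟩)
    have ET := abs_le.1 (E T ⟨hT.le, le_rfl⟩)
    have u1 := abs_le.1 y1
    have u2 := abs_le.1 y2
    have u3 := mul_le_mul_of_nonneg_left (abs_le.1 y3).1 hε.le
    have k1 := mul_le_mul_of_nonneg_left A (by positivity : 0 ≤ 1 / ε + 1)
    have k2 := mul_le_mul_of_nonneg_left B (by positivity : 0 ≤ 1 / 4 + ε)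
    have k3 : (1 / ε + 1) * (2 * M * X) ≤ (1 / ε + 1) * (2 * M * X) * R :=
      le_mul_of_one_le_right (by positivity) hRone
    have k4 : (1 / 4 + ε) * (4 * Cc * X) ≤ (1 / 4 + ε) * (4 * Cc * X) * R :=
      le_mul_of_one_le_right (by positivity) hRone
    have tot : ε / 2 * F ≤ (2 * (S.K * (M + 4) + 4) + (1 / ε + 1) * (2 * M * X)
        + (1 / 4 + ε) * (4 * Cc * X)) * R := by linarith
    have := mul_le_mul_of_nonneg_left tot (by positivity : 0 ≤ 2 / ε)
    rw [hY]
    calc F = 2 / ε * (ε / 2 * F) := by field_simp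
      _ ≤ _ := this
      _ = _ := by ring
  have fin := J_nn2 (S.admθ hR0 cρu) (S.admθ hR0 cρV) (S.admθ hR0 S.cF) 2 (2 * ε ^ 2) hT.le
    (fun τ _ x => by
      have h1 := th_nonneg R (S.N (τ, x))
      simp only [W]
      have := S.momentum_sq (τ, x)
      have := mul_le_mul_of_nonneg_left this h1
      linarith)
  have k5 : 2 * (2 * M * X) ≤ 2 * (2 * M * X) * R := le_mul_of_one_le_right (by positivity) hRone
  have k6 := mul_le_mul_of_nonneg_left hF' (by positivity : 0 ≤ 2 * ε ^ 2)
  linarith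

lemma visc_zero {η : ℝ} (hη : 0 < η) : ∃ R₀, 1 ≤ R₀ ∧ ∀ R, R₀ ≤ R → ∀ t ∈ Icc 0 T,
    -(ε * J (S.W (th1 R) (fun q => S.ρ q * (S.u q * S.ux q))) t)
      ≤ ε * J (S.W (th R) (fun q => S.ux q ^ 2)) t + η := by
  obtain ⟨C, R₁, hC, h1, hB⟩ := S.momentum_bound
  have hε := S.hε
  have hc := one_le_Cc
  refine ⟨max R₁ (ε * Cc * C / (2 * η)), h1.trans (le_max_left _ _), fun R hR t ht => ?_⟩
  have hR1 : R₁ ≤ R := (le_max_left _ _).trans hR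
  have hR2 : ε * Cc * C / (2 * η) ≤ R := (le_max_right _ _).trans hR
  have hR0 : 0 < R := by linarith
  have hRR : 0 < 2 * R := by positivity
  have cρu : Continuous (fun q => S.ρ q ^ 2 * S.u q ^ 2) :=
    (S.C1ρ.cont.pow 2).mul (S.C1u.cont.pow 2)
  have y := J_abs2 (k := S.W (th1 R) (fun q => S.ρ q * (S.u q * S.ux q)))
    (S.admθ1 hR0 (S.C1ρ.cont.mul (S.C1u.cont.mul S.C1u.cont_x)))
    (S.admθ hR0 (S.C1u.cont_x.pow 2)) (S.admω hR0 cρu) 1 (1 / 4) ht.1 (fun τ _ x => by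
      have h1 := th_nonneg R (S.N (τ, x))
      have h3 := om_nonneg R (S.N (τ, x))
      simp only [W, Pi.pow_apply]
      refine yng (by positivity) (by positivity) (le_of_eq ?_)
      rw [mul_pow, th1_sq]; ring)
  have z := J_nn2 (S.admω hR0 cρu) (S.admθ hRR cρu) (S.admθ hRR cρu) (Cc / R ^ 2) 0 ht.1
    (fun τ _ x => by
      have := mul_le_mul_of_nonneg_right (om_le_th hR0 (S.N (τ, x)))
        (by positivity : 0 ≤ S.ρ (τ, x) ^ 2 * S.u (τ, x) ^ 2)
      simp only [W]; linarith)
  have z1 := (J_le_J (S.admθ hRR cρu) (S.W0 (th_nonneg _) fun q => by positivity) ht.1 ht.2).trans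
    (hB (2 * R) (by linarith))
  have z2 := mul_le_mul_of_nonneg_left z1 (by positivity : 0 ≤ Cc / R ^ 2)
  have e : Cc / R ^ 2 * (C * (2 * R)) = 2 * Cc * C / R := by field_simp
  rw [e] at z2
  have z3 : ε * (1 / 4 * (2 * Cc * C / R)) ≤ η := by
    have : ε * (1 / 4 * (2 * Cc * C / R)) = ε * Cc * C / 2 / R := by field_simp; ring
    rw [this, div_le_iff₀ hR0]
    rw [div_le_iff₀ (by positivity)] at hR2
    linarith
  have y' := mul_le_mul_of_nonneg_left (abs_le.1 y).1 hε.le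
  have z4 := mul_le_mul_of_nonneg_left (z.trans (by linarith : _ ≤ 2 * Cc * C / R))
    (by positivity : 0 ≤ ε * (1 / 4))
  have e4 : (fun q => S.ux q ^ 2) = S.ux ^ 2 := rfl
  rw [e4]
  nlinarith

/-- Energy inequalities at a large cutoff scale, up to an arbitrarily small error. -/
lemma energies {η : ℝ} (hη : 0 < η) : ∃ R₀, 1 ≤ R₀ ∧ ∀ R, R₀ ≤ R → ∀ t ∈ Icc 0 T,
    I (S.W (th R) S.fE) t ≤ I (S.W (th R) S.fE) 0 + η - J (S.W (th R) S.work) t ∧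
    I (S.W (th R) S.fB) t + ε * J (S.W (th R) S.d) t
      ≤ I (S.W (th R) S.fB) 0 + η - J (S.W (th R) S.work) t := by
  obtain ⟨R₁, h1, hF⟩ := S.flux_zero (half_pos hη)
  obtain ⟨R₂, h2, hV⟩ := S.visc_zero (half_pos hη)
  refine ⟨max R₁ R₂, h1.trans (le_max_left _ _), fun R hR t ht => ?_⟩
  have hR1 : R₁ ≤ R := (le_max_left _ _).trans hR
  have hR2 : R₂ ≤ R := (le_max_right _ _).trans hR
  have hR0 : 0 < R := by linarith
  have f := abs_le.1 (hF R hR1 t ht)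
  have v := hV R hR2 t ht
  have a := S.identA hR0 ht
  have e := S.identE hR0 ht
  constructor <;> linarith

end NS

/-! ### Gronwall's inequality and removal of the cutoff -/

/-- Gronwall's inequality in integral form. -/
lemma gronwall {y : ℝ → ℝ} (hy : Continuous y) {a c T : ℝ} (ha : 0 ≤ a)
    (h : ∀ t ∈ Icc 0 T, y t ≤ c + a * ∫ τ in (0 : ℝ)..t, y τ) {t : ℝ} (ht : t ∈ Icc 0 T) :
    c + a * (∫ τ in (0 : ℝ)..t, y τ) ≤ c * Real.exp (a * t) := by
  have hd : ∀ s, HasDerivAt (fun s => Real.exp (-a * s) * (c + a * ∫ τ in (0 : ℝ)..s, y τ))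
      (Real.exp (-a * s) * (-a) * (c + a * ∫ τ in (0 : ℝ)..s, y τ)
        + Real.exp (-a * s) * (a * y s)) s := fun s => by
    have h1 : HasDerivAt (fun s => ∫ τ in (0 : ℝ)..s, y τ) (y s) s :=
      intervalIntegral.integral_hasDerivAt_right (hy.intervalIntegrable _ _)
        (hy.stronglyMeasurableAtFilter _ _) hy.continuousAt
    have h2 : HasDerivAt (fun s => Real.exp (-a * s)) (Real.exp (-a * s) * (-a)) s := by
      simpa using ((hasDerivAt_id s).const_mul (-a)).exp
    exact h2.mul ((h1.const_mul a).const_add c)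
  have hanti : AntitoneOn (fun s => Real.exp (-a * s) * (c + a * ∫ τ in (0 : ℝ)..s, y τ))
      (Icc 0 T) := by
    refine antitoneOn_of_deriv_nonpos (convex_Icc 0 T)
      (fun s _ => (hd s).continuousAt.continuousWithinAt)
      (fun s _ => (hd s).differentiableAt.differentiableWithinAt) fun s hs => ?_
    rw [interior_Icc] at hs
    rw [(hd s).deriv]
    have e := Real.exp_pos (-a * s)
    have h3 := mul_nonneg (mul_nonneg e.le ha) (sub_nonneg.2 (h s (Ioo_subset_Icc_self hs)))
    nlinarith
  have := hanti ⟨le_rfl, ht.1.trans ht.2⟩ ht ht.1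
  simp only [mul_zero, Real.exp_zero, intervalIntegral.integral_same, add_zero, one_mul] at this
  have e := mul_le_mul_of_nonneg_right this (Real.exp_pos (a * t)).le
  have e2 : Real.exp (-a * t) * Real.exp (a * t) = 1 := by rw [← Real.exp_add]; simp
  calc c + a * (∫ τ in (0 : ℝ)..t, y τ)
      = Real.exp (-a * t) * (c + a * ∫ τ in (0 : ℝ)..t, y τ) * Real.exp (a * t) := by
        linear_combination (-(c + a * ∫ τ in (0 : ℝ)..t, y τ)) * e2
    _ ≤ _ := e

/-- The full integral of a nonnegative function is almost attained by its truncations.  No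
integrability is needed, a divergent Bochner integral being zero. -/
lemma trunc_le {α : Type*} [MeasurableSpace α] {μ : Measure α} {f : α → ℝ} {w : ℕ → α → ℝ}
    (hf0 : ∀ q, 0 ≤ f q) (hw0 : ∀ n q, 0 ≤ w n q) (hw1 : ∀ n q, w n q ≤ 1)
    (hm : ∀ n, AEStronglyMeasurable (fun q => w n q * f q) μ)
    (hlim : ∀ q, ∀ᶠ n in atTop, w n q = 1) {δ : ℝ} (hδ : 0 < δ) :
    ∀ᶠ n in atTop, (∫ q, f q ∂μ) ≤ (∫ q, w n q * f q ∂μ) + δ := by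
  by_cases hi : Integrable f μ
  · have := tendsto_integral_of_dominated_convergence (F := fun n q => w n q * f q) f hm hi
      (fun n => Eventually.of_forall fun q => by
        rw [Real.norm_of_nonneg (mul_nonneg (hw0 n q) (hf0 q))]
        exact mul_le_of_le_one_left (hf0 q) (hw1 n q))
      (Eventually.of_forall fun q => (tendsto_const_nhds (x := f q)).congr'
        ((hlim q).mono fun n hn => by simp [hn]))
    filter_upwards [this.eventually_const_lt (sub_lt_self _ hδ)] with n hn
    linarith
  · filter_upwards with n
    rw [integral_undef hi]
    exact add_nonneg (integral_nonneg fun q => mul_nonneg (hw0 n q) (hf0 q)) hδ.le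

lemma J_eq {k : ℝ × ℝ → ℝ} (hk : Adm k) {t : ℝ} (ht : 0 ≤ t) :
    J k t = ∫ q in Ioc (0 : ℝ) t ×ˢ (univ : Set ℝ), k q := by
  obtain ⟨hc, L, hL⟩ := hk
  have hi : IntegrableOn k (Ioc (0 : ℝ) t ×ˢ (univ : Set ℝ)) := by
    have h1 : IntegrableOn k (Icc (0 : ℝ) t ×ˢ Icc (-|L|) |L|) :=
      hc.continuousOn.integrableOn_compact (isCompact_Icc.prod isCompact_Icc)
    have h2 : IntegrableOn k (Ioc (0 : ℝ) t ×ˢ Icc (-|L|) |L|) :=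
      h1.mono_set (prod_mono Ioc_subset_Icc_self subset_rfl)
    refine h2.of_forall_sdiff_eq_zero (measurableSet_Ioc.prod MeasurableSet.univ) ?_
    rintro ⟨s, x⟩ ⟨⟨hs, _⟩, hn⟩
    refine hL s x ?_
    by_contra hlt
    rw [not_le] at hlt
    refine hn ⟨hs, ?_⟩
    rw [mem_Icc, ← abs_le]
    exact hlt.le.trans (le_abs_self L)
  rw [Measure.volume_eq_prod, setIntegral_prod _ (by rwa [← Measure.volume_eq_prod])]
  simp only [Measure.restrict_univ]
  rw [J, intervalIntegral.integral_of_le ht]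
  rfl

namespace NS
variable {γ ε T : ℝ} (S : NS γ ε T)

lemma rho_le (q : ℝ × ℝ) : S.ρ q ≤ S.K * S.h q + S.K * (1 + |S.cs|) := by
  have hK := S.K_one
  have h0 := S.h0 q
  rcases le_total S.cs (S.p q) with hp | hp
  · have := S.hK3 q hp
    have : 0 ≤ S.K * (1 + |S.cs|) := by positivity
    rw [h]; linarith
  · have h1 := S.hK4 q
    have h2 : S.K * (1 + S.p q) ≤ S.K * (1 + |S.cs|) :=
      mul_le_mul_of_nonneg_left (by linarith [le_abs_self S.cs]) (by linarith)
    have : 0 ≤ S.K * S.h q := by positivity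
    linarith

lemma adm_beta : Adm (fun q => |S.β q.2|) :=
  ⟨(S.cβ.comp continuous_snd).abs, S.L₀, fun t x hx => by simp [S.β_out x hx]⟩

lemma abs_work_le {Λ : ℝ} (hΛ : ∀ x, |S.β x| ≤ Λ) (q : ℝ × ℝ) :
    |S.work q| ≤ S.K * Λ * S.fE q + S.K * (1 + |S.cs|) * |S.β q.2| := by
  have hK := S.K_one
  have h0 := S.h0 q
  have hρ := S.ρpos q
  have h1 : S.ρ q * |S.u q| ≤ S.ρ q * S.u q ^ 2 / 2 + S.ρ q := by
    rw [← sq_abs (S.u q)]; nlinarith [sq_nonneg (|S.u q| - 1)]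
  have h2 : S.ρ q * S.u q ^ 2 / 2 ≤ S.K * (S.ρ q * S.u q ^ 2 / 2) :=
    le_mul_of_one_le_left (by positivity) hK
  have h3 : S.ρ q * |S.u q| ≤ S.K * S.fE q + S.K * (1 + |S.cs|) := by
    have := S.rho_le q
    rw [fE]; linarith
  have hb := abs_nonneg (S.β q.2)
  have h4 := mul_le_mul_of_nonneg_right h3 hb
  have h5 : |S.β q.2| * (S.K * S.fE q) ≤ Λ * (S.K * S.fE q) :=
    mul_le_mul_of_nonneg_right (hΛ _) (mul_nonneg (by linarith) (S.fE0 q))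
  rw [work, abs_mul, abs_mul, abs_of_pos hρ]
  linarith

lemma J_work_le {Λ : ℝ} (hΛ : ∀ x, |S.β x| ≤ Λ) {R : ℝ} (hR : 0 < R) {t : ℝ} (ht : t ∈ Icc 0 T) :
    |J (S.W (th R) S.work) t| ≤ S.K * Λ * J (S.W (th R) S.fE) t
      + S.K * (1 + |S.cs|) * (∫ x, |S.β x|) * T := by
  have hK := S.K_one
  have y := J_abs2 (S.admθ hR S.cwork) (S.admθ hR S.cfE) S.adm_beta (S.K * Λ)
    (S.K * (1 + |S.cs|)) ht.1 (fun τ _ x => by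
      have h1 := th_nonneg R (S.N (τ, x))
      have h2 := th_le_one R (S.N (τ, x))
      have h3 := mul_le_mul_of_nonneg_left (S.abs_work_le hΛ (τ, x)) h1
      have h4 : th R (S.N (τ, x)) * (S.K * (1 + |S.cs|) * |S.β x|)
        ≤ S.K * (1 + |S.cs|) * |S.β x| := mul_le_of_le_one_left (by positivity) h2
      simp only [W]
      rw [abs_mul, abs_of_nonneg h1]
      linarith)
  refine y.trans ?_
  have e : J (fun q => |S.β q.2|) t = t * ∫ x, |S.β x| := by
    simp [J, I]
  rw [e]
  have h0 : 0 ≤ ∫ x, |S.β x| := integral_nonneg fun x => abs_nonneg _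
  have h1 : t * ∫ x, |S.β x| ≤ T * ∫ x, |S.β x| := mul_le_mul_of_nonneg_right ht.2 h0
  have := mul_le_mul_of_nonneg_left h1 (by positivity : 0 ≤ S.K * (1 + |S.cs|))
  linarith

lemma grad_le (q : ℝ × ℝ) : ε ^ 2 * (S.ρx q ^ 2 / S.ρ q ^ 3) ≤ 4 * S.fB q + 4 * S.fE q := by
  have hρ := S.ρpos q
  have h0 := S.h0 q
  have e : ε ^ 2 * (S.ρx q ^ 2 / S.ρ q ^ 3) = S.ρ q * (S.V q - S.u q) ^ 2 := by
    rw [S.V_def]; field_simp; ring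
  have := mul_le_mul_of_nonneg_left (sq_sub_le (S.V q) (S.u q)) hρ.le
  rw [e, fB, fE]; linarith

/-- The estimate for the localised quantities, at large cutoff scale. -/
lemma local_estimate (hE : Integrable (fun x => S.fE (0, x))) {Λ : ℝ} (hΛ : ∀ x, |S.β x| ≤ Λ)
    {η : ℝ} (hη : 0 < η) : ∃ R₀, 1 ≤ R₀ ∧ ∀ R, R₀ ≤ R → ∀ t ∈ Icc 0 T,
    ε ^ 2 * I (S.W (th R) (fun q => S.ρx q ^ 2 / S.ρ q ^ 3)) t + ε * J (S.W (th R) S.d) t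
      ≤ 4 * (∫ x, S.fB (0, x)) + 8 * (((∫ x, S.fE (0, x)) + η
        + S.K * (1 + |S.cs|) * (∫ x, |S.β x|) * T) * Real.exp (S.K * Λ * T)) := by
  obtain ⟨R₀, h1, H⟩ := S.energies hη
  refine ⟨R₀, h1, fun R hR t ht => ?_⟩
  have hR0 : 0 < R := by linarith
  have hK := S.K_one
  have hε := S.hε
  have hT := S.hT
  have hΛ0 : 0 ≤ Λ := (abs_nonneg _).trans (hΛ 0)
  have ha : 0 ≤ S.K * Λ := by positivity
  set E := ∫ x, S.fE (0, x)
  set B := ∫ x, S.fB (0, x)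
  have hE0 : 0 ≤ E := integral_nonneg fun x => S.fE0 _
  have hβ0 : 0 ≤ ∫ x, |S.β x| := integral_nonneg fun x => abs_nonneg _
  set Q := S.K * (1 + |S.cs|) * (∫ x, |S.β x|) * T with hQ
  have hQ0 : 0 ≤ Q := by positivity
  have iE : I (S.W (th R) S.fE) 0 ≤ E :=
    integral_mono ((S.admθ hR0 S.cfE).integrable 0) hE
      fun x => mul_le_of_le_one_left (S.fE0 _) (th_le_one _ _)
  have iB : I (S.W (th R) S.fB) 0 ≤ B := S.init_le hR0
  have hy : ∀ τ ∈ Icc 0 T, I (S.W (th R) S.fE) τ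
      ≤ (E + η + Q) + S.K * Λ * ∫ σ in (0 : ℝ)..τ, I (S.W (th R) S.fE) σ := fun τ hτ => by
    have a1 := (H R hR τ hτ).1
    have a2 := (abs_le.1 (S.J_work_le hΛ hR0 hτ)).1
    have e : J (S.W (th R) S.fE) τ = ∫ σ in (0 : ℝ)..τ, I (S.W (th R) S.fE) σ := rfl
    rw [e] at a2
    linarith
  have g := gronwall (S.admθ hR0 S.cfE).I_cont ha hy ht
  have yt := hy t ht
  have b1 := (H R hR t ht).2
  have b2 := (abs_le.1 (S.J_work_le hΛ hR0 ht)).1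
  have e : J (S.W (th R) S.fE) t = ∫ σ in (0 : ℝ)..t, I (S.W (th R) S.fE) σ := rfl
  rw [e] at b2
  have ex : (E + η + Q) * Real.exp (S.K * Λ * t) ≤ (E + η + Q) * Real.exp (S.K * Λ * T) :=
    mul_le_mul_of_nonneg_left (Real.exp_le_exp.2 (mul_le_mul_of_nonneg_left ht.2 ha))
      (by positivity)
  have cg : Continuous (fun q => S.ρx q ^ 2 / S.ρ q ^ 3) :=
    (S.C1ρ.cont_x.pow 2).div (S.C1ρ.cont.pow 3) fun q => (pow_pos (S.ρpos q) 3).ne'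
  have gr := I_nn2 ((S.admθ hR0 cg).const_mul (ε ^ 2)) (S.admθ hR0 S.cfB) (S.admθ hR0 S.cfE) 4 4
    (t := t) (fun x => by
      have := mul_le_mul_of_nonneg_left (S.grad_le (t, x)) (th_nonneg R (S.N (t, x)))
      simp only [W]; linarith)
  have gr' : I (fun q => ε ^ 2 * S.W (th R) (fun q => S.ρx q ^ 2 / S.ρ q ^ 3) q) t
      = ε ^ 2 * I (S.W (th R) (fun q => S.ρx q ^ 2 / S.ρ q ^ 3)) t :=
    integral_const_mul _ _
  rw [gr'] at gr
  have jd := mul_nonneg hε.le (J_nonneg (S.W0 (th_nonneg R) S.d0) ht.1)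
  linarith

/-- The weighted density-gradient estimate with explicit constants. -/
theorem estimate (hE : Integrable (fun x => S.fE (0, x))) {Λ : ℝ} (hΛ : ∀ x, |S.β x| ≤ Λ)
    {t : ℝ} (ht : t ∈ Icc 0 T) :
    ε ^ 2 * (∫ x, S.ρx (t, x) ^ 2 / S.ρ (t, x) ^ 3)
        + ε * (∫ q in Ioc (0 : ℝ) t ×ˢ (univ : Set ℝ), S.d q)
      ≤ 4 * (∫ x, S.fB (0, x)) + 8 * (((∫ x, S.fE (0, x))
        + S.K * (1 + |S.cs|) * (∫ x, |S.β x|) * T) * Real.exp (S.K * Λ * T)) := by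
  have hε := S.hε
  set X := Real.exp (S.K * Λ * T) with hX
  have hX0 : 0 < X := Real.exp_pos _
  have cg : Continuous (fun q => S.ρx q ^ 2 / S.ρ q ^ 3) :=
    (S.C1ρ.cont_x.pow 2).div (S.C1ρ.cont.pow 3) fun q => (pow_pos (S.ρpos q) 3).ne'
  refine le_of_forall_pos_le_add fun δ hδ => ?_
  obtain ⟨R₀, h1, H⟩ := S.local_estimate hE hΛ (η := δ / (16 * X)) (by positivity)
  have ev : ∀ q, ∀ᶠ n : ℕ in atTop, th (R₀ + n) (S.N q) = 1 := fun q => by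
    filter_upwards [tendsto_natCast_atTop_atTop.eventually_ge_atTop |S.N q|] with n hn
    exact th_one (by positivity) (by linarith)
  have hpos : ∀ n : ℕ, 0 < R₀ + n := fun n => by positivity
  have t1 := trunc_le (μ := volume) (f := fun x => S.ρx (t, x) ^ 2 / S.ρ (t, x) ^ 3)
    (w := fun n x => th (R₀ + n) (S.N (t, x)))
    (fun x => by have := S.ρpos (t, x); positivity) (fun n x => th_nonneg _ _)
    (fun n x => th_le_one _ _)
    (fun n => ((S.admθ (hpos n) cg).integrable t).aestronglyMeasurable)
    (fun x => ev (t, x)) (δ := δ / (4 * ε ^ 2)) (by positivity)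
  have t2 := trunc_le (μ := volume.restrict (Ioc (0 : ℝ) t ×ˢ (univ : Set ℝ))) (f := S.d)
    (w := fun n q => th (R₀ + n) (S.N q)) S.d0 (fun n x => th_nonneg _ _)
    (fun n x => th_le_one _ _)
    (fun n => (S.admθ (hpos n) S.cd).cont.aestronglyMeasurable) ev (δ := δ / (4 * ε)) (by positivity)
  obtain ⟨n, a1, a2⟩ := (t1.and t2).exists
  have a3 := H (R₀ + n) (by simp) t ht
  rw [J_eq (S.admθ (hpos n) S.cd) ht.1] at a3
  have b1 := mul_le_mul_of_nonneg_left a1 (by positivity : 0 ≤ ε ^ 2)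
  have b2 := mul_le_mul_of_nonneg_left a2 hε.le
  have e1 : ε ^ 2 * (δ / (4 * ε ^ 2)) = δ / 4 := by field_simp
  have e2 : ε * (δ / (4 * ε)) = δ / 4 := by field_simp
  have e3 : δ / (16 * X) * X = δ / 16 := by field_simp
  simp only [I, W] at a3
  simp only [mul_add, e1, e2] at b1 b2
  rw [← hX] at a3
  have : 8 * (((∫ x, S.fE (0, x)) + δ / (16 * X) + S.K * (1 + |S.cs|) * (∫ x, |S.β x|) * T) * X)
     = 8 * (((∫ x, S.fE (0, x)) + S.K * (1 + |S.cs|) * (∫ x, |S.β x|) * T) * X) + δ / 2 := by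
    linear_combination 8 * e3
  linarith

end NS

/-! ### Pointwise comparison of density, pressure and relative internal energy -/

/-- Nonnegativity of the relative internal energy, that is Bernoulli's inequality. -/
lemma rel_nonneg {γ κ : ℝ} (hγ : 1 < γ) (hκ : 0 < κ) {b r : ℝ} (hb : 0 < b) (hr : 0 < r) :
    0 ≤ κ * r ^ γ / (γ - 1) - κ * γ * b ^ (γ - 1) / (γ - 1) * r + κ * b ^ γ := by
  have hγ1 : 0 < γ - 1 := by linarith
  have hB := one_add_mul_self_le_rpow_one_add (s := r / b - 1)
    (by have := div_pos hr hb; linarith) hγ.le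
  rw [add_sub_cancel, Real.div_rpow hr.le hb.le, le_div_iff₀ (by positivity)] at hB
  have e : b ^ γ = b ^ (γ - 1) * b := by rw [← Real.rpow_add_one hb.ne']; ring_nf
  have e2 : (1 + γ * (r / b - 1)) * b ^ γ = γ * b ^ (γ - 1) * r - (γ - 1) * b ^ γ := by
    rw [e]; field_simp; ring
  rw [e2] at hB
  have : κ * r ^ γ / (γ - 1) - κ * γ * b ^ (γ - 1) / (γ - 1) * r + κ * b ^ γ
      = κ / (γ - 1) * (r ^ γ - (γ * b ^ (γ - 1) * r - (γ - 1) * b ^ γ)) := by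
    field_simp; ring
  rw [this]
  exact mul_nonneg (by positivity) (by linarith)

lemma log_sq_le {r δ : ℝ} (hr : 1 ≤ r) (hδ : 0 < δ) : Real.log r ^ 2 ≤ r ^ (2 * δ) / δ ^ 2 := by
  have h := Real.log_le_rpow_div (by linarith : 0 ≤ r) hδ
  have := pow_le_pow_left₀ (Real.log_nonneg hr) h 2
  rw [div_pow, ← Real.rpow_natCast, ← Real.rpow_natCast, ← Real.rpow_mul (by linarith)] at this
  simpa [mul_comm] using this

lemma mul_log_sq_le {γ : ℝ} (hγ : 1 < γ) {r : ℝ} (hr : 0 < r) :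
    r * Real.log r ^ 2 ≤ 4 + 4 / (γ - 1) ^ 2 * r ^ γ := by
  have hγ1 : 0 < γ - 1 := by linarith
  have hp : 0 < r ^ γ := by positivity
  rcases le_total 1 r with h | h
  · have h1 := mul_le_mul_of_nonneg_left (log_sq_le h (half_pos hγ1)) hr.le
    have e : r * (r ^ (2 * ((γ - 1) / 2)) / ((γ - 1) / 2) ^ 2) = 4 / (γ - 1) ^ 2 * r ^ γ := by
      have : r ^ γ = r ^ (γ - 1) * r := by rw [← Real.rpow_add_one hr.ne']; ring_nf
      rw [this, show 2 * ((γ - 1) / 2) = γ - 1 by ring]; field_simp; ring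
    rw [e] at h1; linarith
  · have h1 := log_sq_le (r := r⁻¹) (δ := 1 / 2) ((one_le_inv₀ hr).2 h) (by norm_num)
    rw [Real.log_inv, neg_sq] at h1
    have h2 := mul_le_mul_of_nonneg_left h1 hr.le
    have e : r * ((r⁻¹) ^ (2 * (1 / 2) : ℝ) / (1 / 2) ^ 2) = 4 := by
      norm_num; field_simp
    rw [e] at h2
    have : 0 ≤ 4 / (γ - 1) ^ 2 * r ^ γ := by positivity
    linarith

lemma le_one_add_rpow {γ : ℝ} (hγ : 1 < γ) {r : ℝ} (hr : 0 < r) : r ≤ 1 + r ^ γ := by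
  have hp : 0 < r ^ γ := by positivity
  rcases le_total 1 r with h | h
  · have := Real.rpow_le_rpow_of_exponent_le h hγ.le
    rw [Real.rpow_one] at this; linarith
  · linarith

/-- The comparison constants, uniform over backgrounds with values in `[r₁,r₂]`. -/
lemma comparison {γ κ : ℝ} (hγ : 1 < γ) (hκ : 0 < κ) {r₁ r₂ : ℝ} (h₁ : 0 < r₁) (h₁₂ : r₁ ≤ r₂) :
    ∃ K cs : ℝ, 1 ≤ K ∧ (∀ b ∈ Icc r₁ r₂, κ * b ^ γ ≤ K) ∧ ∀ b ∈ Icc r₁ r₂, ∀ r, 0 < r →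
      1 + κ * r ^ γ ≤ K * (κ * r ^ γ / (γ - 1) - κ * γ * b ^ (γ - 1) / (γ - 1) * r + κ * b ^ γ + r) ∧
      r * Real.log r ^ 2
        ≤ K * (κ * r ^ γ / (γ - 1) - κ * γ * b ^ (γ - 1) / (γ - 1) * r + κ * b ^ γ + r) ∧
      (cs ≤ κ * r ^ γ →
        r ≤ K * (κ * r ^ γ / (γ - 1) - κ * γ * b ^ (γ - 1) / (γ - 1) * r + κ * b ^ γ)) ∧
      r ≤ K * (1 + κ * r ^ γ) := by
  have hγ1 : 0 < γ - 1 := by linarith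
  have h₂ : 0 < r₂ := by linarith
  set e := κ * γ * r₂ ^ (γ - 1) / (γ - 1) with he
  set P := κ * r₁ ^ γ with hP
  have he0 : 0 < e := by positivity
  have hP0 : 0 < P := by positivity
  set c := ((γ - 1) + 1 / P) * (1 + e) with hc
  have hc0 : 0 < c := by positivity
  set l := 4 + 4 / (γ - 1) ^ 2 / κ with hl
  have hl0 : 0 < l := by positivity
  set K := 1 + κ * r₂ ^ γ + c + l * c + (1 + 1 / κ) with hK
  have hK1 : 1 ≤ K := by
    have : 0 ≤ κ * r₂ ^ γ + c + l * c + (1 + 1 / κ) := by positivity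
    linarith
  set rs := ((γ - 1) * (e + 1) / κ) ^ (1 / (γ - 1)) with hrs
  have hrs0 : 0 < rs := by positivity
  refine ⟨K, κ * rs ^ γ, hK1, fun b hb => ?_, fun b hb r hr => ?_⟩
  · have : κ * b ^ γ ≤ κ * r₂ ^ γ := mul_le_mul_of_nonneg_left
      (Real.rpow_le_rpow (h₁.le.trans hb.1) hb.2 (by linarith)) hκ.le
    have : 0 ≤ 1 + c + l * c + (1 + 1 / κ) := by positivity
    linarith
  have hb0 : 0 < b := h₁.trans_le hb.1
  have hH := rel_nonneg hγ hκ hb0 hr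
  set H := κ * r ^ γ / (γ - 1) - κ * γ * b ^ (γ - 1) / (γ - 1) * r + κ * b ^ γ with hHdef
  have hp : 0 < κ * r ^ γ := by positivity
  have eb : κ * γ * b ^ (γ - 1) / (γ - 1) ≤ e :=
    div_le_div_of_nonneg_right (mul_le_mul_of_nonneg_left
      (Real.rpow_le_rpow hb0.le hb.2 hγ1.le) (by positivity)) hγ1.le
  have pb : P ≤ κ * b ^ γ := mul_le_mul_of_nonneg_left
    (Real.rpow_le_rpow h₁.le hb.1 (by linarith)) hκ.le
  have low : κ * r ^ γ / (γ - 1) + P ≤ H + e * r := by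
    have := mul_le_mul_of_nonneg_right eb hr.le
    linarith
  have A : 1 + κ * r ^ γ ≤ c * (H + r) := by
    have a1 : 1 + κ * r ^ γ ≤ ((γ - 1) + 1 / P) * (κ * r ^ γ / (γ - 1) + P) := by
      have x1 : ((γ - 1) + 1 / P) * (κ * r ^ γ / (γ - 1) + P)
        = κ * r ^ γ + (γ - 1) * P + 1 / P * (κ * r ^ γ / (γ - 1)) + 1 := by field_simp; ring
      have : 0 ≤ (γ - 1) * P + 1 / P * (κ * r ^ γ / (γ - 1)) := by positivity
      linarith
    have a2 : H + e * r ≤ (1 + e) * (H + r) := by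
      have := mul_nonneg he0.le hH
      linarith
    have a3 := mul_le_mul_of_nonneg_left (low.trans a2) (by positivity : 0 ≤ (γ - 1) + 1 / P)
    rw [hc]; linarith
  have hHr : 0 ≤ H + r := by linarith
  refine ⟨A.trans (mul_le_mul_of_nonneg_right ?_ hHr), ?_, fun hcs => ?_, ?_⟩
  · have : 0 ≤ 1 + κ * r₂ ^ γ + l * c + (1 + 1 / κ) := by positivity
    linarith
  · have b1 := mul_log_sq_le hγ hr
    have b2 : 4 + 4 / (γ - 1) ^ 2 * r ^ γ ≤ l * (1 + κ * r ^ γ) := by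
      have : l * (1 + κ * r ^ γ) = 4 + 4 / (γ - 1) ^ 2 * r ^ γ + (4 / (γ - 1) ^ 2 / κ
        + 4 * (κ * r ^ γ)) := by rw [hl]; field_simp; ring
      have : 0 ≤ 4 / (γ - 1) ^ 2 / κ + 4 * (κ * r ^ γ) := by positivity
      linarith
    have b3 := mul_le_mul_of_nonneg_left A hl0.le
    have b4 : l * c ≤ K := by
      have : 0 ≤ 1 + κ * r₂ ^ γ + c + (1 + 1 / κ) := by positivity
      linarith
    have b5 := mul_le_mul_of_nonneg_right b4 hHr
    linarith
  · have hr' : rs ≤ r := by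
      have := le_of_mul_le_mul_left hcs hκ
      exact (Real.rpow_le_rpow_iff hrs0.le hr.le (by linarith)).1 this
    have c1 : (γ - 1) * (e + 1) / κ ≤ r ^ (γ - 1) := by
      have := Real.rpow_le_rpow hrs0.le hr' hγ1.le
      rwa [hrs, ← Real.rpow_mul (by positivity), one_div_mul_cancel hγ1.ne', Real.rpow_one] at this
    have c2 : (e + 1) * r ≤ κ * r ^ γ / (γ - 1) := by
      have e' : r ^ γ = r ^ (γ - 1) * r := by rw [← Real.rpow_add_one hr.ne']; ring_nf
      rw [div_le_iff₀ hκ] at c1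
      rw [le_div_iff₀ hγ1, e']
      have := mul_le_mul_of_nonneg_right c1 hr.le
      linarith
    have c3 : r ≤ H := by linarith
    exact c3.trans (le_mul_of_one_le_left hH hK1)
  · have d1 := le_one_add_rpow hγ hr
    have d2 : 1 + r ^ γ ≤ (1 + 1 / κ) * (1 + κ * r ^ γ) := by
      have : (1 + 1 / κ) * (1 + κ * r ^ γ) = 1 + r ^ γ + (κ * r ^ γ + 1 / κ) := by
        field_simp; ring
      have : 0 ≤ κ * r ^ γ + 1 / κ := by positivity
      linarith
    have d3 : 1 + 1 / κ ≤ K := by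
      have : 0 ≤ 1 + κ * r₂ ^ γ + c + l * c := by positivity
      linarith
    have d4 := mul_le_mul_of_nonneg_right d3 (by linarith : 0 ≤ 1 + κ * r ^ γ)
    linarith


/-! ### Restriction to the time interval, potentials and properness -/

/-- Projection of time to `[0,T]`.  Composing with it turns fields that are only controlled on
`[0,T] × ℝ` into globally defined continuous ones. -/
noncomputable def cl (T t : ℝ) : ℝ := max 0 (min t T)

lemma cl_cont (T : ℝ) : Continuous (cl T) := by unfold cl; fun_prop
lemma cl_mem {T : ℝ} (hT : 0 < T) (t : ℝ) : cl T t ∈ Icc 0 T :=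
  ⟨le_max_left _ _, max_le hT.le (min_le_right _ _)⟩
lemma cl_eq {T t : ℝ} (ht : t ∈ Icc 0 T) : cl T t = t := by
  unfold cl; rw [min_eq_left ht.2, max_eq_right ht.1]

/-- The point of `[0,T] × ℝ` below a space-time point. -/
noncomputable def cq (T : ℝ) (q : ℝ × ℝ) : ℝ × ℝ := (cl T q.1, q.2)

lemma cq_cont (T : ℝ) : Continuous (cq T) :=
  ((cl_cont T).comp continuous_fst).prodMk continuous_snd

lemma dt_of {F : ℝ × ℝ → ℝ} {t x : ℝ} (h : DifferentiableAt ℝ F (t, x)) :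
    HasDerivAt (fun s => F (s, x)) (fderiv ℝ F (t, x) (1, 0)) t := by
  have h1 : HasDerivAt (fun s : ℝ => (s, x)) ((1 : ℝ), (0 : ℝ)) t :=
    (hasDerivAt_id t).prodMk (hasDerivAt_const t x)
  exact h.hasFDerivAt.comp_hasDerivAt t h1

lemma dx_of {F : ℝ × ℝ → ℝ} {t x : ℝ} (h : DifferentiableAt ℝ F (t, x)) :
    HasDerivAt (fun y => F (t, y)) (fderiv ℝ F (t, x) (0, 1)) x := by
  have h1 : HasDerivAt (fun y : ℝ => (t, y)) ((0 : ℝ), (1 : ℝ)) x :=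
    (hasDerivAt_const x t).prodMk (hasDerivAt_id x)
  exact h.hasFDerivAt.comp_hasDerivAt x h1

lemma C1_clamp {T : ℝ} {F : ℝ × ℝ → ℝ} (hF : ContDiff ℝ 1 F) :
    C1 T (fun q => F (cq T q)) (fun q => fderiv ℝ F (cq T q) (1, 0))
      (fun q => fderiv ℝ F (cq T q) (0, 1)) where
  cont := hF.continuous.comp (cq_cont T)
  cont_t := ((hF.continuous_fderiv (by norm_num)).comp (cq_cont T)).clm_apply continuous_const
  cont_x := ((hF.continuous_fderiv (by norm_num)).comp (cq_cont T)).clm_apply continuous_const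
  dt t ht x := by
    have h := dt_of (F := F) (t := t) (x := x) (hF.differentiable (by norm_num) _)
    have e : cq T (t, x) = (t, x) := by simp [cq, cl_eq (Ioo_subset_Icc_self ht)]
    rw [e]
    refine h.congr_of_eventuallyEq ?_
    filter_upwards [Ioo_mem_nhds ht.1 ht.2] with s hs
    simp [cq, cl_eq (Ioo_subset_Icc_self hs)]
  dx t x := dx_of (F := F) (t := cl T t) (x := x) (hF.differentiable (by norm_num) _)

lemma C1.inv {T : ℝ} {f ft fx : ℝ × ℝ → ℝ} (hf : C1 T f ft fx) (h : ∀ q, f q ≠ 0) :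
    C1 T (fun q => (f q)⁻¹) (fun q => -ft q / f q ^ 2) (fun q => -fx q / f q ^ 2) where
  cont := hf.cont.inv₀ h
  cont_t := hf.cont_t.neg.div (hf.cont.pow 2) fun q => pow_ne_zero 2 (h q)
  cont_x := hf.cont_x.neg.div (hf.cont.pow 2) fun q => pow_ne_zero 2 (h q)
  dt t ht x := (hf.dt t ht x).inv (h _)
  dx t x := (hf.dx t x).inv (h _)

lemma C1.rpow {T : ℝ} {f ft fx : ℝ × ℝ → ℝ} (hf : C1 T f ft fx) (h : ∀ q, 0 < f q) (γ : ℝ) :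
    C1 T (fun q => f q ^ γ) (fun q => γ * f q ^ γ * ft q / f q)
      (fun q => γ * f q ^ γ * fx q / f q) where
  cont := hf.cont.rpow_const fun q => Or.inl (h q).ne'
  cont_t := ((continuous_const.mul (hf.cont.rpow_const fun q => Or.inl (h q).ne')).mul
    hf.cont_t).div hf.cont fun q => (h q).ne'
  cont_x := ((continuous_const.mul (hf.cont.rpow_const fun q => Or.inl (h q).ne')).mul
    hf.cont_x).div hf.cont fun q => (h q).ne'
  dt t ht x := by
    refine ((hf.dt t ht x).rpow_const (p := γ) (Or.inl (h _).ne')).congr_deriv ?_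
    rw [Real.rpow_sub_one (h _).ne']; ring
  dx t x := by
    refine ((hf.dx t x).rpow_const (p := γ) (Or.inl (h _).ne')).congr_deriv ?_
    rw [Real.rpow_sub_one (h _).ne']; ring

/-- The potential `φ` with `φ_x = a`, `φ_t = -b` of a conservation law `a_t + b_x = 0`. -/
noncomputable def pot (T : ℝ) (a b : ℝ × ℝ → ℝ) (q : ℝ × ℝ) : ℝ :=
  (∫ s in (0 : ℝ)..q.2, a (q.1, s)) - ∫ τ in (0 : ℝ)..cl T q.1, b (τ, 0)

lemma pot_eq {T : ℝ} {a at' ax b bx : ℝ × ℝ → ℝ} (ha : C1 T a at' ax) (hb : Continuous b)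
    (hbx : Continuous bx) (db : ∀ t x, HasDerivAt (fun y => b (t, y)) (bx (t, x)) x)
    (h : ∀ q, at' q = -bx q) {t : ℝ} (ht : t ∈ Icc 0 T) (x : ℝ) :
    pot T a b (t, x) = (∫ s in (0 : ℝ)..x, a (0, s)) - ∫ τ in (0 : ℝ)..t, b (τ, x) := by
  have ca : ∀ r, Continuous fun s => a (r, s) := fun r => ha.cont.comp (by fun_prop)
  have cb : ∀ y, Continuous fun τ => b (τ, y) := fun y => hb.comp (by fun_prop)
  have e1 : (∫ s in (0 : ℝ)..x, a (t, s)) - (∫ s in (0 : ℝ)..x, a (0, s))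
      = ∫ s in (0 : ℝ)..x, ∫ τ in (0 : ℝ)..t, at' (τ, s) := by
    rw [← intervalIntegral.integral_sub ((ca t).intervalIntegrable _ _)
      ((ca 0).intervalIntegrable _ _)]
    refine intervalIntegral.integral_congr fun s _ => ?_
    refine (intervalIntegral.integral_eq_sub_of_hasDerivAt_of_le (f := fun τ => a (τ, s)) ht.1 ?_
      (fun τ hτ => ha.dt τ ⟨hτ.1, hτ.2.trans_le ht.2⟩ s) ?_).symm
    · exact (ha.cont.comp (by fun_prop)).continuousOn
    · exact (ha.cont_t.comp (by fun_prop : Continuous fun τ : ℝ => (τ, s))).intervalIntegrable _ _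
  have e2 : (∫ s in (0 : ℝ)..x, ∫ τ in (0 : ℝ)..t, at' (τ, s))
      = ∫ τ in (0 : ℝ)..t, ∫ s in (0 : ℝ)..x, at' (τ, s) := by
    refine intervalIntegral_intervalIntegral_swap (F := fun s τ => at' (τ, s)) ?_
    have hc : Continuous (Function.uncurry fun s τ => at' (τ, s)) :=
      ha.cont_t.comp (by fun_prop : Continuous fun q : ℝ × ℝ => (q.2, q.1))
    have h1 := (hc.continuousOn.integrableOn_compact (μ := volume)
      (isCompact_uIcc.prod isCompact_uIcc : IsCompact (uIcc (0 : ℝ) x ×ˢ uIcc (0 : ℝ) t))).mono_set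
      (prod_mono uIoc_subset_uIcc uIoc_subset_uIcc)
    exact h1
  have e3 : (∫ τ in (0 : ℝ)..t, ∫ s in (0 : ℝ)..x, at' (τ, s))
      = (∫ τ in (0 : ℝ)..t, b (τ, 0)) - ∫ τ in (0 : ℝ)..t, b (τ, x) := by
    rw [← intervalIntegral.integral_sub ((cb 0).intervalIntegrable _ _)
      ((cb x).intervalIntegrable _ _)]
    refine intervalIntegral.integral_congr fun τ _ => ?_
    have := intervalIntegral.integral_eq_sub_of_hasDerivAt (f := fun y => b (τ, y)) (a := 0) (b := x)
      (fun y _ => db τ y)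
      ((hbx.comp (by fun_prop : Continuous fun y : ℝ => (τ, y))).intervalIntegrable _ _)
    simp only [h]
    rw [intervalIntegral.integral_neg, this]; ring
  simp only [pot, cl_eq ht]
  linarith

lemma C1_pot {T : ℝ} {a at' ax b bx : ℝ × ℝ → ℝ} (ha : C1 T a at' ax) (hb : Continuous b)
    (hbx : Continuous bx) (db : ∀ t x, HasDerivAt (fun y => b (t, y)) (bx (t, x)) x)
    (h : ∀ q, at' q = -bx q) : C1 T (pot T a b) (fun q => -b q) a where
  cont := by
    have h1 : Continuous fun q : ℝ × ℝ => ∫ s in (0 : ℝ)..q.2, a (q.1, s) :=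
      intervalIntegral.continuous_parametric_intervalIntegral_of_continuous
        (f := fun (q : ℝ × ℝ) s => a (q.1, s)) (ha.cont.comp (by fun_prop)) continuous_snd
    have h2 : Continuous fun r : ℝ => ∫ τ in (0 : ℝ)..r, b (τ, 0) :=
      intervalIntegral.continuous_primitive
        (fun _ _ => (hb.comp (by fun_prop : Continuous fun τ : ℝ => (τ, (0 : ℝ)))).intervalIntegrable
          _ _) 0
    exact h1.sub (h2.comp ((cl_cont T).comp continuous_fst))
  cont_t := hb.neg
  cont_x := ha.cont
  dt t ht x := by
    have cb : Continuous fun τ => b (τ, x) := hb.comp (by fun_prop)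
    have h1 : HasDerivAt (fun r => ∫ τ in (0 : ℝ)..r, b (τ, x)) (b (t, x)) t :=
      intervalIntegral.integral_hasDerivAt_right (cb.intervalIntegrable _ _)
        (cb.stronglyMeasurableAtFilter _ _) cb.continuousAt
    refine (h1.const_sub (∫ s in (0 : ℝ)..x, a (0, s))).congr_of_eventuallyEq ?_
    filter_upwards [Ioo_mem_nhds ht.1 ht.2] with s hs
    exact pot_eq ha hb hbx db h (Ioo_subset_Icc_self hs) x
  dx t x := by
    have ca : Continuous fun s => a (t, s) := ha.cont.comp (by fun_prop)
    have h1 : HasDerivAt (fun y => ∫ s in (0 : ℝ)..y, a (t, s)) (a (t, x)) x :=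
      intervalIntegral.integral_hasDerivAt_right (ca.intervalIntegrable _ _)
        (ca.stronglyMeasurableAtFilter _ _) ca.continuousAt
    exact h1.sub_const (∫ τ in (0 : ℝ)..cl T t, b (τ, 0))

/-- A density bounded below at each time yields a mass label that is proper uniformly in time. -/
lemma proper_of {T : ℝ} (hT : 0 < T) {N ρ : ℝ × ℝ → ℝ} (hN : Continuous N)
    (hNc : ∀ t x, N (t, x) = N (cl T t, x))
    (dN : ∀ t x, HasDerivAt (fun y => N (t, y)) (ρ (t, x)) x)
    (hρ : ∀ t ∈ Icc 0 T, ∃ c, 0 < c ∧ ∀ x, c ≤ ρ (t, x)) (r : ℝ) :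
    ∃ L, ∀ t x, L ≤ |x| → r ≤ |N (t, x)| := by
  have mono : ∀ t ∈ Icc 0 T, Monotone fun y => N (t, y) := fun t ht => by
    obtain ⟨c, hc, hl⟩ := hρ t ht
    refine monotone_of_deriv_nonneg (fun y => (dN t y).differentiableAt) fun y => ?_
    rw [(dN t y).deriv]; exact hc.le.trans (hl y)
  have key : ∃ L, 0 ≤ L ∧ ∀ t ∈ Icc 0 T, r ≤ N (t, L) ∧ N (t, -L) ≤ -r := by
    refine isCompact_Icc.induction_on (p := fun s => ∃ L, 0 ≤ L ∧ ∀ t ∈ s, t ∈ Icc 0 T →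
      r ≤ N (t, L) ∧ N (t, -L) ≤ -r) ⟨0, le_rfl, by simp⟩ ?_ ?_ ?_ |>.imp
      fun L hL => ⟨hL.1, fun t ht => hL.2 t ht ht⟩
    · rintro s s' hs ⟨L, hL0, hL⟩
      exact ⟨L, hL0, fun t ht => hL t (hs ht)⟩
    · rintro s s' ⟨L, hL0, hL⟩ ⟨L', hL0', hL'⟩
      refine ⟨max L L', hL0.trans (le_max_left _ _), fun t ht htT => ?_⟩
      rcases ht with ht | ht
      · have := hL t ht htT
        exact ⟨this.1.trans (mono t htT (le_max_left _ _)),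
          (mono t htT (neg_le_neg (le_max_left _ _))).trans this.2⟩
      · have := hL' t ht htT
        exact ⟨this.1.trans (mono t htT (le_max_right _ _)),
          (mono t htT (neg_le_neg (le_max_right _ _))).trans this.2⟩
    · intro t ht
      obtain ⟨c, hc, hl⟩ := hρ t ht
      have mono' : Monotone fun y => N (t, y) - c * y := by
        have hd : ∀ y, HasDerivAt (fun y => N (t, y) - c * y) (ρ (t, y) - c * 1) y := fun y =>
          (dN t y).sub ((hasDerivAt_id y).const_mul c)
        refine monotone_of_deriv_nonneg (fun y => (hd y).differentiableAt) fun y => ?_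
        rw [(hd y).deriv]; linarith [hl y]
      set L := (|r| + |N (t, 0)| + 1) / c with hLdef
      have hL0 : 0 ≤ L := by positivity
      have hcL : c * L = |r| + |N (t, 0)| + 1 := by rw [hLdef]; field_simp
      have m1 := mono' hL0
      have m2 := mono' (neg_nonpos.2 hL0)
      simp only [mul_zero, sub_zero, mul_neg] at m1 m2
      have i1 : r < N (t, L) := by
        linarith [le_abs_self r, neg_abs_le (N (t, 0))]
      have i2 : N (t, -L) < -r := by
        linarith [le_abs_self r, le_abs_self (N (t, 0))]
      have o1 : ∀ᶠ s in nhds t, r < N (s, L) :=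
        (hN.comp (by fun_prop : Continuous fun s : ℝ => (s, L))).continuousAt.eventually_const_lt i1
      have o2 : ∀ᶠ s in nhds t, N (s, -L) < -r :=
        (hN.comp (by fun_prop : Continuous fun s : ℝ => (s, -L))).continuousAt.eventually_lt_const i2
      refine ⟨_, mem_nhdsWithin_of_mem_nhds (o1.and o2), L, hL0, fun s hs _ => ⟨hs.1.le, hs.2.le⟩⟩
  obtain ⟨L, hL0, hL⟩ := key
  refine ⟨L, fun t x hx => ?_⟩
  rw [hNc]
  have ht := cl_mem hT t
  rcases le_abs.1 hx with h | h
  · exact (hL _ ht).1.trans ((mono _ ht h).trans (le_abs_self _))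
  · have := (mono _ ht (by linarith : x ≤ -L)).trans (hL _ ht).2
    exact (le_neg.1 this).trans (neg_le_abs _)


/-! ### Classical solutions as instances of the abstract flow -/

/-- Partial derivative in time. -/
noncomputable def Dt (F : ℝ × ℝ → ℝ) (q : ℝ × ℝ) : ℝ := fderiv ℝ F q (1, 0)
/-- Partial derivative in space. -/
noncomputable def Dx (F : ℝ × ℝ → ℝ) (q : ℝ × ℝ) : ℝ := fderiv ℝ F q (0, 1)

lemma Dt_contDiff {F : ℝ × ℝ → ℝ} (hF : ContDiff ℝ 2 F) : ContDiff ℝ 1 (Dt F) :=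
  (hF.fderiv_right (m := 1) (by norm_num)).clm_apply contDiff_const
lemma Dx_contDiff {F : ℝ × ℝ → ℝ} (hF : ContDiff ℝ 2 F) : ContDiff ℝ 1 (Dx F) :=
  (hF.fderiv_right (m := 1) (by norm_num)).clm_apply contDiff_const

lemma Dt_Dx {F : ℝ × ℝ → ℝ} (hF : ContDiff ℝ 2 F) (q : ℝ × ℝ) : Dt (Dx F) q = Dx (Dt F) q := by
  have hs : IsSymmSndFDerivAt ℝ F q := hF.contDiffAt.isSymmSndFDerivAt (by simp)
  have hd : DifferentiableAt ℝ (fderiv ℝ F) q :=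
    (hF.fderiv_right (m := 1) (by norm_num)).differentiable (by norm_num) q
  have e : ∀ v w : ℝ × ℝ, fderiv ℝ (fun q => fderiv ℝ F q v) q w = fderiv ℝ (fderiv ℝ F) q w v :=
    fun v w => by
      rw [fderiv_clm_apply hd (differentiableAt_const v)]
      simp
  have h1 : Dt (Dx F) q = fderiv ℝ (fderiv ℝ F) q (1, 0) (0, 1) := e (0, 1) (1, 0)
  have h2 : Dx (Dt F) q = fderiv ℝ (fderiv ℝ F) q (0, 1) (1, 0) := e (1, 0) (0, 1)
  rw [h1, h2]
  exact hs.eq _ _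

lemma hDx {F : ℝ × ℝ → ℝ} (hF : ContDiff ℝ 1 F) (t x : ℝ) :
    HasDerivAt (fun y => F (t, y)) (Dx F (t, x)) x := dx_of (hF.differentiable (by norm_num) _)
lemma hDt {F : ℝ × ℝ → ℝ} (hF : ContDiff ℝ 1 F) (t x : ℝ) :
    HasDerivAt (fun s => F (s, x)) (Dt F (t, x)) t := dt_of (hF.differentiable (by norm_num) _)

/-- Spatial derivative of the continuity equation. -/
lemma mass_x {T : ℝ} {F U : ℝ × ℝ → ℝ} (hF : ContDiff ℝ 2 F) (hU : ContDiff ℝ 2 U)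
    (m : ∀ q : ℝ × ℝ, q.1 ∈ Icc 0 T → Dt F q = -(Dx F q * U q + F q * Dx U q))
    (q : ℝ × ℝ) (hq : q.1 ∈ Icc 0 T) :
    Dt (Dx F) q = -(Dx (Dx F) q * U q + 2 * (Dx F q * Dx U q) + F q * Dx (Dx U) q) := by
  obtain ⟨t, x⟩ := q
  have hF1 := hF.of_le (m := 1) (by norm_num)
  have hU1 := hU.of_le (m := 1) (by norm_num)
  rw [Dt_Dx hF]
  have h1 := hDx (Dt_contDiff hF) t x
  have h2 := (((hDx (Dx_contDiff hF) t x).mul (hDx hU1 t x)).add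
    ((hDx hF1 t x).mul (hDx (Dx_contDiff hU) t x))).neg
  have e : (fun y => Dt F (t, y)) = -(((fun y => Dx F (t, y)) * fun y => U (t, y))
      + ((fun y => F (t, y)) * fun y => Dx U (t, y))) := by
    funext y; exact m (t, y) hq
  rw [e] at h1
  rw [h1.unique h2]; ring

/-- The flow attached to a classical solution `(F,U)` on `[0,T] × ℝ` with background density
`rb`. -/
noncomputable def build {γ ε T κ : ℝ} (hγ : 1 < γ) (hε : 0 < ε) (hT : 0 < T) (hκ : 0 < κ)
    {F U : ℝ × ℝ → ℝ} (hF : ContDiff ℝ 2 F) (hU : ContDiff ℝ 2 U)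
    (pos : ∀ q : ℝ × ℝ, q.1 ∈ Icc 0 T → 0 < F q)
    (m : ∀ q : ℝ × ℝ, q.1 ∈ Icc 0 T → Dt F q = -(Dx F q * U q + F q * Dx U q))
    (mom : ∀ q : ℝ × ℝ, q.1 ∈ Icc 0 T → F q * (Dt U q + U q * Dx U q)
      = -(γ * (κ * F q ^ γ) * Dx F q / F q) + ε * Dx (Dx U) q)
    {rb : ℝ → ℝ} (hrb : ContDiff ℝ 1 rb) (rbpos : ∀ x, 0 < rb x) {L₀ : ℝ}
    (hout : ∀ x, L₀ ≤ |x| → deriv rb x = 0) {K cs : ℝ} (hK : 1 ≤ K) (hpb : ∀ x, κ * rb x ^ γ ≤ K)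
    (cmp : ∀ x r, 0 < r →
      1 + κ * r ^ γ ≤ K * (κ * r ^ γ / (γ - 1) - κ * γ * rb x ^ (γ - 1) / (γ - 1) * r
        + κ * rb x ^ γ + r) ∧
      r * Real.log r ^ 2 ≤ K * (κ * r ^ γ / (γ - 1) - κ * γ * rb x ^ (γ - 1) / (γ - 1) * r
        + κ * rb x ^ γ + r) ∧
      (cs ≤ κ * r ^ γ → r ≤ K * (κ * r ^ γ / (γ - 1) - κ * γ * rb x ^ (γ - 1) / (γ - 1) * r
        + κ * rb x ^ γ)) ∧
      r ≤ K * (1 + κ * r ^ γ))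
    (lo : ∀ t ∈ Icc 0 T, ∃ A, ∀ x, |Real.log (F (t, x))| ≤ A)
    (hint : ∀ t ∈ Icc 0 T, Integrable (fun x => F (t, x) * U (t, x) ^ 2))
    (hB : Integrable (fun x => F (0, x) * (U (0, x) + ε * Dx F (0, x) / F (0, x) ^ 2) ^ 2 / 2
      + (κ * F (0, x) ^ γ / (γ - 1) - κ * γ * rb x ^ (γ - 1) / (γ - 1) * F (0, x)
        + κ * rb x ^ γ))) : NS γ ε T :=
  have mem : ∀ q, (cq T q).1 ∈ Icc 0 T := fun q => cl_mem hT q.1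
  have fpos : ∀ q, 0 < F (cq T q) := fun q => pos _ (mem q)
  have Cρ : C1 T (fun q => F (cq T q)) (fun q => Dt F (cq T q)) (fun q => Dx F (cq T q)) :=
    C1_clamp (hF.of_le (by norm_num))
  have Cu : C1 T (fun q => U (cq T q)) (fun q => Dt U (cq T q)) (fun q => Dx U (cq T q)) :=
    C1_clamp (hU.of_le (by norm_num))
  have Cρx : C1 T (fun q => Dx F (cq T q)) (fun q => Dt (Dx F) (cq T q))
    (fun q => Dx (Dx F) (cq T q)) := C1_clamp (Dx_contDiff hF)
  have Cux : C1 T (fun q => Dx U (cq T q)) (fun q => Dt (Dx U) (cq T q))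
    (fun q => Dx (Dx U) (cq T q)) := C1_clamp (Dx_contDiff hU)
  have CV : C1 T (fun q => U (cq T q) + ε * Dx F (cq T q) / F (cq T q) ^ 2)
      (fun q => Dt U (cq T q) + ε * (Dt (Dx F) (cq T q) / F (cq T q) ^ 2
        - 2 * Dx F (cq T q) * Dt F (cq T q) / F (cq T q) ^ 3))
      (fun q => Dx U (cq T q) + ε * (Dx (Dx F) (cq T q) / F (cq T q) ^ 2
        - 2 * Dx F (cq T q) * Dx F (cq T q) / F (cq T q) ^ 3)) := by
    have h := Cu.add (((C1.const (T := T) ε).mul Cρx).mul ((Cρ.mul Cρ).inv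
      fun q => (mul_pos (fpos q) (fpos q)).ne'))
    have e : (fun q => U (cq T q) + ε * Dx F (cq T q) * (F (cq T q) * F (cq T q))⁻¹)
        = fun q => U (cq T q) + ε * Dx F (cq T q) / F (cq T q) ^ 2 := by
      funext q; rw [div_eq_mul_inv, sq (F (cq T q))]
    rw [← e]
    refine h.congr (fun q => ?_) (fun q => ?_) <;>
    · have := (fpos q).ne'
      field_simp; ring
  have Cp : C1 T (fun q => κ * F (cq T q) ^ γ)
      (fun q => γ * (κ * F (cq T q) ^ γ) * Dt F (cq T q) / F (cq T q))
      (fun q => γ * (κ * F (cq T q) ^ γ) * Dx F (cq T q) / F (cq T q)) :=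
    ((C1.const (T := T) κ).mul (Cρ.rpow fpos γ)).congr (fun q => by ring) (fun q => by ring)
  have Veq : ∀ q, F (cq T q) * ((Dt U (cq T q) + ε * (Dt (Dx F) (cq T q) / F (cq T q) ^ 2
        - 2 * Dx F (cq T q) * Dt F (cq T q) / F (cq T q) ^ 3)) + U (cq T q) *
        (Dx U (cq T q) + ε * (Dx (Dx F) (cq T q) / F (cq T q) ^ 2
        - 2 * Dx F (cq T q) * Dx F (cq T q) / F (cq T q) ^ 3)))
        = -(γ * (κ * F (cq T q) ^ γ) * Dx F (cq T q) / F (cq T q)) := fun q => by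
    have h1 := mom _ (mem q)
    have h2 := mass_x hF hU m _ (mem q)
    have h3 := m _ (mem q)
    have h4 := (fpos q).ne'
    have h5 : F (cq T q) * (ε * (Dt (Dx F) (cq T q) / F (cq T q) ^ 2
        - 2 * Dx F (cq T q) * Dt F (cq T q) / F (cq T q) ^ 3)) + F (cq T q) * U (cq T q) *
        (ε * (Dx (Dx F) (cq T q) / F (cq T q) ^ 2
        - 2 * Dx F (cq T q) * Dx F (cq T q) / F (cq T q) ^ 3)) = -(ε * Dx (Dx U) (cq T q)) := by
      rw [h2, h3]; field_simp; ring
    linear_combination h1 + h5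
  have drb : ∀ x, HasDerivAt rb (deriv rb x) x := fun x =>
    (hrb.differentiable (by norm_num) x).hasDerivAt
  have crb : Continuous (deriv rb) := hrb.continuous_deriv (by norm_num)
  have CN := C1_pot Cρ (Cρ.mul Cu).cont (Cρ.mul Cu).cont_x (Cρ.mul Cu).dx
    (fun q => m _ (mem q))
  have Cj := ((Cρ.mul Cu).mul CV).add Cp
  have CΨ := C1_pot (Cρ.mul CV) Cj.cont Cj.cont_x Cj.dx (fun q => by
    have h1 := Veq q
    have h3 := m _ (mem q)
    linear_combination h1 + (U (cq T q) + ε * Dx F (cq T q) / F (cq T q) ^ 2) * h3)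
  { ρ := fun q => F (cq T q)
    ρt := fun q => Dt F (cq T q)
    ρx := fun q => Dx F (cq T q)
    u := fun q => U (cq T q)
    ut := fun q => Dt U (cq T q)
    ux := fun q => Dx U (cq T q)
    uxx := fun q => Dx (Dx U) (cq T q)
    V := fun q => U (cq T q) + ε * Dx F (cq T q) / F (cq T q) ^ 2
    Vt := fun q => Dt U (cq T q) + ε * (Dt (Dx F) (cq T q) / F (cq T q) ^ 2
        - 2 * Dx F (cq T q) * Dt F (cq T q) / F (cq T q) ^ 3)
    Vx := fun q => Dx U (cq T q) + ε * (Dx (Dx F) (cq T q) / F (cq T q) ^ 2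
        - 2 * Dx F (cq T q) * Dx F (cq T q) / F (cq T q) ^ 3)
    p := fun q => κ * F (cq T q) ^ γ
    pt := fun q => γ * (κ * F (cq T q) ^ γ) * Dt F (cq T q) / F (cq T q)
    px := fun q => γ * (κ * F (cq T q) ^ γ) * Dx F (cq T q) / F (cq T q)
    N := pot T (fun q => F (cq T q)) (fun q => F (cq T q) * U (cq T q))
    Ψ := pot T (fun q => F (cq T q) * (U (cq T q) + ε * Dx F (cq T q) / F (cq T q) ^ 2))
      (fun q => F (cq T q) * U (cq T q) * (U (cq T q) + ε * Dx F (cq T q) / F (cq T q) ^ 2)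
        + κ * F (cq T q) ^ γ)
    eb := fun x => κ * γ * rb x ^ (γ - 1) / (γ - 1)
    pb := fun x => κ * rb x ^ γ
    β := fun x => κ * γ * (deriv rb x * (γ - 1) * rb x ^ (γ - 1 - 1)) / (γ - 1)
    pbx := fun x => κ * (deriv rb x * γ * rb x ^ (γ - 1))
    L₀ := L₀
    K := K
    cs := cs
    hγ := hγ
    hε := hε
    hT := hT
    C1ρ := Cρ
    C1u := Cu
    C1V := CV
    C1p := Cp
    C1N := CN
    C1Ψ := CΨ
    cuxx := Cux.cont_x
    duxx := Cux.dx
    ρpos := fpos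
    ppos := fun q => mul_pos hκ (Real.rpow_pos_of_pos (fpos q) γ)
    mass := fun q => m _ (mem q)
    V_def := fun q => rfl
    V_eq := Veq
    u_eq := fun q => mom _ (mem q)
    px_eq := fun q => rfl
    pt_eq := fun q => rfl
    deb := fun x => (((drb x).rpow_const (Or.inl (rbpos x).ne')).const_mul (κ * γ)).div_const (γ - 1)
    dpb := fun x => ((drb x).rpow_const (Or.inl (rbpos x).ne')).const_mul κ
    cβ := (continuous_const.mul ((crb.mul continuous_const).mul
      (hrb.continuous.rpow_const fun x => Or.inl (rbpos x).ne'))).div_const _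
    cpbx := continuous_const.mul ((crb.mul continuous_const).mul
      (hrb.continuous.rpow_const fun x => Or.inl (rbpos x).ne'))
    β_out := fun x hx => by simp [hout x hx]
    pbx_out := fun x hx => by simp [hout x hx]
    K_one := hK
    h_nonneg := fun q => rel_nonneg hγ hκ (rbpos q.2) (fpos q)
    hK1 := fun q => (cmp q.2 _ (fpos q)).1
    hK2 := fun q => (cmp q.2 _ (fpos q)).2.1
    hK3 := fun q => (cmp q.2 _ (fpos q)).2.2.1
    hK4 := fun q => (cmp q.2 _ (fpos q)).2.2.2
    pb_nonneg := fun x => (mul_pos hκ (Real.rpow_pos_of_pos (rbpos x) γ)).le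
    pb_le := hpb
    proper := proper_of (ρ := fun q => F (cq T q)) hT CN.cont
      (fun t x => by simp [pot, cq, cl_eq (cl_mem hT t)]) CN.dx
      (fun t ht => by
        obtain ⟨A, hA⟩ := lo t ht
        refine ⟨Real.exp (-A), Real.exp_pos _, fun x => ?_⟩
        have h1 : cq T (t, x) = (t, x) := by simp [cq, cl_eq ht]
        show _ ≤ F (cq T (t, x))
        rw [h1, ← Real.le_log_iff_exp_le (pos (t, x) ht)]
        exact (abs_le.1 (hA x)).1)
    ends_log := fun t ht => by
      have ht' : t ∈ Icc 0 T := by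
        rcases ht with rfl | rfl
        exacts [⟨le_rfl, hT.le⟩, ⟨hT.le, le_rfl⟩]
      simpa [cq, cl_eq ht'] using lo t ht'
    ends_int := fun t ht => by
      have ht' : t ∈ Icc 0 T := by
        rcases ht with rfl | rfl
        exacts [⟨le_rfl, hT.le⟩, ⟨hT.le, le_rfl⟩]
      simpa [cq, cl_eq ht'] using hint t ht'
    init_B := by
      have ht' : (0 : ℝ) ∈ Icc 0 T := ⟨le_rfl, hT.le⟩
      simpa [cq, cl_eq ht'] using hB }


/-! ### The estimate for classical solutions -/

/-- The derivative of the background chemical potential `κ γ ρ̄^{γ-1}/(γ-1)`. -/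
noncomputable def bgSlope (γ κ : ℝ) (rb : ℝ → ℝ) (x : ℝ) : ℝ :=
  κ * γ * (deriv rb x * (γ - 1) * rb x ^ (γ - 1 - 1)) / (γ - 1)

/-- `NS.estimate` unfolded for the flow `build`. -/
lemma solution_estimate {γ ε T κ : ℝ} (hγ : 1 < γ) (hε : 0 < ε) (hT : 0 < T) (hκ : 0 < κ)
    {F U : ℝ × ℝ → ℝ} (hF : ContDiff ℝ 2 F) (hU : ContDiff ℝ 2 U)
    (pos : ∀ q : ℝ × ℝ, q.1 ∈ Icc 0 T → 0 < F q)
    (m : ∀ q : ℝ × ℝ, q.1 ∈ Icc 0 T → Dt F q = -(Dx F q * U q + F q * Dx U q))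
    (mom : ∀ q : ℝ × ℝ, q.1 ∈ Icc 0 T → F q * (Dt U q + U q * Dx U q)
      = -(γ * (κ * F q ^ γ) * Dx F q / F q) + ε * Dx (Dx U) q)
    {rb : ℝ → ℝ} (hrb : ContDiff ℝ 1 rb) (rbpos : ∀ x, 0 < rb x) {L₀ : ℝ}
    (hout : ∀ x, L₀ ≤ |x| → deriv rb x = 0) {K cs : ℝ} (hK : 1 ≤ K) (hpb : ∀ x, κ * rb x ^ γ ≤ K)
    (cmp : ∀ x r, 0 < r →
      1 + κ * r ^ γ ≤ K * (κ * r ^ γ / (γ - 1) - κ * γ * rb x ^ (γ - 1) / (γ - 1) * r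
        + κ * rb x ^ γ + r) ∧
      r * Real.log r ^ 2 ≤ K * (κ * r ^ γ / (γ - 1) - κ * γ * rb x ^ (γ - 1) / (γ - 1) * r
        + κ * rb x ^ γ + r) ∧
      (cs ≤ κ * r ^ γ → r ≤ K * (κ * r ^ γ / (γ - 1) - κ * γ * rb x ^ (γ - 1) / (γ - 1) * r
        + κ * rb x ^ γ)) ∧
      r ≤ K * (1 + κ * r ^ γ))
    (lo : ∀ t ∈ Icc 0 T, ∃ A, ∀ x, |Real.log (F (t, x))| ≤ A)
    (hint : ∀ t ∈ Icc 0 T, Integrable (fun x => F (t, x) * U (t, x) ^ 2))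
    (hB : Integrable (fun x => F (0, x) * (U (0, x) + ε * Dx F (0, x) / F (0, x) ^ 2) ^ 2 / 2
      + (κ * F (0, x) ^ γ / (γ - 1) - κ * γ * rb x ^ (γ - 1) / (γ - 1) * F (0, x)
        + κ * rb x ^ γ)))
    (hE : Integrable (fun x => F (0, x) * U (0, x) ^ 2 / 2
      + (κ * F (0, x) ^ γ / (γ - 1) - κ * γ * rb x ^ (γ - 1) / (γ - 1) * F (0, x)
        + κ * rb x ^ γ)))
    {Λ : ℝ} (hΛ : ∀ x, |bgSlope γ κ rb x| ≤ Λ) {t : ℝ} (ht : t ∈ Icc 0 T) :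
    ε ^ 2 * (∫ x, Dx F (t, x) ^ 2 / F (t, x) ^ 3)
      + ε * (γ * κ * ∫ q in Ioc (0 : ℝ) t ×ˢ (univ : Set ℝ), F q ^ (γ - 3) * Dx F q ^ 2)
    ≤ 4 * (∫ x, F (0, x) * (U (0, x) + ε * Dx F (0, x) / F (0, x) ^ 2) ^ 2 / 2
      + (κ * F (0, x) ^ γ / (γ - 1) - κ * γ * rb x ^ (γ - 1) / (γ - 1) * F (0, x)
        + κ * rb x ^ γ))
      + 8 * (((∫ x, F (0, x) * U (0, x) ^ 2 / 2
      + (κ * F (0, x) ^ γ / (γ - 1) - κ * γ * rb x ^ (γ - 1) / (γ - 1) * F (0, x)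
        + κ * rb x ^ γ)) + K * (1 + |cs|) * (∫ x, |bgSlope γ κ rb x|) * T)
        * Real.exp (K * Λ * T)) := by
  have h0 : (0 : ℝ) ∈ Icc 0 T := ⟨le_rfl, hT.le⟩
  have e0 : ∀ x, cq T (0, x) = (0, x) := fun x => by simp [cq, cl_eq h0]
  have et : ∀ x, cq T (t, x) = (t, x) := fun x => by simp [cq, cl_eq ht]
  let S := build hγ hε hT hκ hF hU pos m mom hrb rbpos hout hK hpb cmp lo hint hB
  have hfE : (fun x => S.fE (0, x)) = fun x => F (0, x) * U (0, x) ^ 2 / 2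
      + (κ * F (0, x) ^ γ / (γ - 1) - κ * γ * rb x ^ (γ - 1) / (γ - 1) * F (0, x)
        + κ * rb x ^ γ) := by
    funext x
    show F (cq T (0, x)) * U (cq T (0, x)) ^ 2 / 2
      + (κ * F (cq T (0, x)) ^ γ / (γ - 1) - κ * γ * rb x ^ (γ - 1) / (γ - 1) * F (cq T (0, x))
        + κ * rb x ^ γ) = _
    rw [e0]
  have hfB : (fun x => S.fB (0, x)) = fun x =>
      F (0, x) * (U (0, x) + ε * Dx F (0, x) / F (0, x) ^ 2) ^ 2 / 2
      + (κ * F (0, x) ^ γ / (γ - 1) - κ * γ * rb x ^ (γ - 1) / (γ - 1) * F (0, x)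
        + κ * rb x ^ γ) := by
    funext x
    show F (cq T (0, x)) * (U (cq T (0, x)) + ε * Dx F (cq T (0, x)) / F (cq T (0, x)) ^ 2) ^ 2 / 2
      + (κ * F (cq T (0, x)) ^ γ / (γ - 1) - κ * γ * rb x ^ (γ - 1) / (γ - 1) * F (cq T (0, x))
        + κ * rb x ^ γ) = _
    rw [e0]
  have h := S.estimate (by rw [hfE]; exact hE) (Λ := Λ) hΛ ht
  rw [hfE, hfB] at h
  have hfirst : (∫ x, S.ρx (t, x) ^ 2 / S.ρ (t, x) ^ 3) = ∫ x, Dx F (t, x) ^ 2 / F (t, x) ^ 3 := by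
    congr 1; funext x
    show Dx F (cq T (t, x)) ^ 2 / F (cq T (t, x)) ^ 3 = _
    rw [et]
  have hsecond : (∫ q in Ioc (0 : ℝ) t ×ˢ (univ : Set ℝ), S.d q)
      = γ * κ * ∫ q in Ioc (0 : ℝ) t ×ˢ (univ : Set ℝ), F q ^ (γ - 3) * Dx F q ^ 2 := by
    rw [← integral_const_mul]
    refine setIntegral_congr_fun (measurableSet_Ioc.prod MeasurableSet.univ) fun q hq => ?_
    have hq' : q.1 ∈ Icc 0 T := ⟨hq.1.1.le, hq.1.2.trans ht.2⟩
    have eq : cq T q = q := by simp [cq, cl_eq hq']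
    show γ * (κ * F (cq T q) ^ γ) * Dx F (cq T q) ^ 2 / F (cq T q) ^ 3 = _
    have hp := pos q hq'
    rw [eq, Real.rpow_sub hp, show (3 : ℝ) = ((3 : ℕ) : ℝ) by norm_num, Real.rpow_natCast]
    field_simp
  rw [hfirst, hsecond] at h
  exact h

/-- With background velocity zero the relative mechanical energy is the sum of the kinetic energy
and the relative internal energy. -/
lemma relMech_eq {γ κ b r v : ℝ} (hγ : 1 < γ) (hb : 0 < b) :
    relMechEnergy γ κ b (b * 0) r (r * v) = r * v ^ 2 / 2
      + (κ * r ^ γ / (γ - 1) - κ * γ * b ^ (γ - 1) / (γ - 1) * r + κ * b ^ γ) := by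
  have hγ1 : γ - 1 ≠ 0 := by linarith
  have e : b ^ γ = b ^ (γ - 1) * b := by rw [← Real.rpow_add_one hb.ne']; ring_nf
  unfold relMechEnergy mechEnergy
  rw [e]
  field_simp
  ring

/-- An integrable product `f |g|` whose factors have limits at an end of infinite measure, the
first one positive, forces the second limit to vanish. -/
lemma end_zero {l : Filter ℝ} [l.NeBot] (hl : ∀ s ∈ l, volume s = ⊤) {f g : ℝ → ℝ} {a b : ℝ}
    (ha : 0 < a) (hf : Tendsto f l (nhds a)) (hg : Tendsto g l (nhds b))
    (hi : Integrable fun x => f x * |g x|) : b = 0 := by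
  have h := (hi.integrableAtFilter l).eq_zero_of_tendsto (fun s hs => hl s hs) (hf.mul hg.abs)
  rcases mul_eq_zero.1 h with h | h
  · exact absurd h ha.ne'
  · exact abs_eq_zero.1 h

lemma vol_atTop {s : Set ℝ} (hs : s ∈ (atTop : Filter ℝ)) : volume s = ⊤ := by
  obtain ⟨a, ha⟩ := mem_atTop_sets.1 hs
  exact top_le_iff.1 (by simpa using measure_mono (μ := volume) (fun x (hx : x ∈ Ici a) => ha x hx))
lemma vol_atBot {s : Set ℝ} (hs : s ∈ (atBot : Filter ℝ)) : volume s = ⊤ := by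
  obtain ⟨a, ha⟩ := mem_atBot_sets.1 hs
  exact top_le_iff.1 (by simpa using measure_mono (μ := volume) (fun x (hx : x ∈ Iic a) => ha x hx))

/-- A monotone profile lies between its end values. -/
lemma between {f : ℝ → ℝ} {a b L : ℝ} (hm : Monotone f ∨ Antitone f) (ha : ∀ x, L ≤ x → f x = a)
    (hb : ∀ x, x ≤ -L → f x = b) (x : ℝ) : f x ∈ Icc (min b a) (max b a) := by
  have h1 := ha (max x L) (le_max_right _ _)
  have h2 := hb (min x (-L)) (min_le_right _ _)
  rcases hm with h | h
  · have i1 := h (le_max_left x L)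
    have i2 := h (min_le_left x (-L))
    rw [h1] at i1; rw [h2] at i2
    exact ⟨(min_le_left _ _).trans i2, i1.trans (le_max_right _ _)⟩
  · have i1 := h (le_max_left x L)
    have i2 := h (min_le_left x (-L))
    rw [h1] at i1; rw [h2] at i2
    exact ⟨(min_le_right _ _).trans i1, i2.trans (le_max_left _ _)⟩

lemma tendsto_end {l : Filter ℝ} (hl : l ≤ cocompact ℝ) {f g : ℝ → ℝ} {a : ℝ}
    (h : Tendsto (fun x => f x - g x) (cocompact ℝ) (nhds 0)) (hg : ∀ᶠ x in l, g x = a) :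
    Tendsto f l (nhds a) := by
  have h1 := (h.mono_left hl).add_const a
  rw [zero_add] at h1
  refine h1.congr' ?_
  filter_upwards [hg] with x hx
  rw [hx]; ring

/-- A positive continuous function converging to a background with values in `[r₁,r₂]`, `r₁ > 0`,
has bounded logarithm. -/
lemma log_bounded {f g : ℝ → ℝ} (hf : Continuous f) (pos : ∀ x, 0 < f x) {r₁ r₂ : ℝ} (h₁ : 0 < r₁)
    (hg : ∀ x, g x ∈ Icc r₁ r₂) (h : Tendsto (fun x => f x - g x) (cocompact ℝ) (nhds 0)) :
    ∃ A, ∀ x, |Real.log (f x)| ≤ A := by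
  have h2 : ∀ᶠ x in cocompact ℝ, |f x - g x| < r₁ / 2 := by
    have := h.abs
    rw [abs_zero] at this
    exact this.eventually_lt_const (by positivity)
  obtain ⟨s, hs, hsub⟩ := mem_cocompact.1 h2
  have cl : Continuous fun x => |Real.log (f x)| := (hf.log fun x => (pos x).ne').abs
  obtain ⟨C, hC⟩ := (hs.bddAbove_image cl.continuousOn)
  refine ⟨max C (max |Real.log (r₁ / 2)| |Real.log (r₂ + r₁)|), fun x => ?_⟩
  by_cases hx : x ∈ s
  · exact (hC (mem_image_of_mem _ hx)).trans (le_max_left _ _)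
  · have i := abs_lt.1 (show |f x - g x| < r₁ / 2 from hsub hx)
    have j := hg x
    refine le_trans ?_ (le_max_right _ _)
    have l1 := Real.log_le_log (by positivity) (by linarith [j.1] : r₁ / 2 ≤ f x)
    have l2 := Real.log_le_log (pos x) (by linarith [j.2] : f x ≤ r₂ + r₁)
    exact abs_le_max_abs_abs l1 l2

lemma deriv_out {f : ℝ → ℝ} {a b L : ℝ} (ha : ∀ x, L ≤ x → f x = a)
    (hb : ∀ x, x ≤ -L → f x = b) (x : ℝ) (hx : L + 1 ≤ |x|) : deriv f x = 0 := by
  rcases le_abs.1 hx with h | h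
  · have : f =ᶠ[nhds x] fun _ => a := by
      filter_upwards [Ioi_mem_nhds (by linarith : L < x)] with y hy
      exact ha y (le_of_lt hy)
    rw [this.deriv_eq, deriv_const]
  · have : f =ᶠ[nhds x] fun _ => b := by
      filter_upwards [Iio_mem_nhds (by linarith : x < -L)] with y hy
      exact hb y (le_of_lt hy)
    rw [this.deriv_eq, deriv_const]

lemma bgSlope_bounded {γ κ : ℝ} {rb : ℝ → ℝ} (hrb : ContDiff ℝ 1 rb) (rbpos : ∀ x, 0 < rb x)
    {L : ℝ} (hout : ∀ x, L ≤ |x| → deriv rb x = 0) : ∃ Λ, ∀ x, |bgSlope γ κ rb x| ≤ Λ := by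
  have c : Continuous (bgSlope γ κ rb) :=
    (continuous_const.mul (((hrb.continuous_deriv (by norm_num)).mul continuous_const).mul
      (hrb.continuous.rpow_const fun x => Or.inl (rbpos x).ne'))).div_const _
  have hs : HasCompactSupport (bgSlope γ κ rb) :=
    HasCompactSupport.intro (K := Icc (-L) L) isCompact_Icc fun x hx => by
      have : L ≤ |x| := by
        by_contra hc
        exact hx (abs_le.1 (not_le.1 hc).le)
      simp [bgSlope, hout x this]
  obtain ⟨C, hC⟩ := c.bounded_above_of_compact_support hs
  exact ⟨C, hC⟩

lemma conv_mass {F U : ℝ × ℝ → ℝ} (hF : ContDiff ℝ 2 F) (hU : ContDiff ℝ 2 U) {t x : ℝ}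
    (h : deriv (fun s => F (s, x)) t + deriv (fun y => F (t, y) * U (t, y)) x = 0) :
    Dt F (t, x) = -(Dx F (t, x) * U (t, x) + F (t, x) * Dx U (t, x)) := by
  have hF1 := hF.of_le (m := 1) (by norm_num)
  have hU1 := hU.of_le (m := 1) (by norm_num)
  have e2 : deriv (fun y => F (t, y) * U (t, y)) x
      = Dx F (t, x) * U (t, x) + F (t, x) * Dx U (t, x) :=
    ((hDx hF1 t x).mul (hDx hU1 t x)).deriv
  rw [(hDt hF1 t x).deriv, e2] at h
  linarith

lemma conv_mom {γ κ ε : ℝ} {F U : ℝ × ℝ → ℝ} (hF : ContDiff ℝ 2 F) (hU : ContDiff ℝ 2 U) {t x : ℝ}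
    (pos : 0 < F (t, x))
    (hm : Dt F (t, x) = -(Dx F (t, x) * U (t, x) + F (t, x) * Dx U (t, x)))
    (h : deriv (fun s => F (s, x) * U (s, x)) t
      + deriv (fun y => F (t, y) * U (t, y) ^ 2 + κ * F (t, y) ^ γ) x
      = ε * deriv (deriv (fun y => U (t, y))) x) :
    F (t, x) * (Dt U (t, x) + U (t, x) * Dx U (t, x))
      = -(γ * (κ * F (t, x) ^ γ) * Dx F (t, x) / F (t, x)) + ε * Dx (Dx U) (t, x) := by
  have hF1 := hF.of_le (m := 1) (by norm_num)
  have hU1 := hU.of_le (m := 1) (by norm_num)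
  have e1 : deriv (fun s => F (s, x) * U (s, x)) t
      = Dt F (t, x) * U (t, x) + F (t, x) * Dt U (t, x) :=
    ((hDt hF1 t x).mul (hDt hU1 t x)).deriv
  have e2 := (((hDx hF1 t x).mul ((hDx hU1 t x).pow 2)).add
    (((hDx hF1 t x).rpow_const (p := γ) (Or.inl pos.ne')).const_mul κ)).deriv
  have e3 : deriv (fun y => U (t, y)) = fun y => Dx U (t, y) := by
    funext y; exact (hDx hU1 t y).deriv
  have e2' : deriv (fun y => F (t, y) * U (t, y) ^ 2 + κ * F (t, y) ^ γ) x = _ := e2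
  rw [e1, e2', e3, (hDx (Dx_contDiff hU) t x).deriv, hm, Real.rpow_sub_one pos.ne'] at h
  simp only [Pi.pow_apply] at h
  push_cast at h
  field_simp at h ⊢
  linear_combination h

end NSDensity

/-- **Derivative estimate for the density for the one-dimensional Navier–Stokes
equations.** There is a constant `C₁ > 0`, independent of `ε`, such that every classical
positive solution with relative energy bounded by `E₀` and initial density-derivative
bound `E₁` satisfies
`ε² ∫ |∂ₓρ(t)|²/ρ(t)³ dx + ε ∫₀ᵗ ∫ ρ^{γ−3} |∂ₓρ|² dx dτ ≤ C₁ (E₀ + E₁)`. -/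
theorem navier_stokes_density_derivative_estimate
    (γ : ℝ) (hγ : 1 < γ) (κ : ℝ) (hκ : κ = (γ - 1) ^ 2 / (4 * γ))
    (T : ℝ) (hT : 0 < T)
    (ρplus ρminus uplus uminus L₀ : ℝ) (hρplus : 0 < ρplus) (hρminus : 0 < ρminus)
    (hL₀ : 0 < L₀)
    (ρb ub : ℝ → ℝ) (hρb : ContDiff ℝ (⊤ : ℕ∞) ρb) (hub : ContDiff ℝ (⊤ : ℕ∞) ub)
    (hρbmono : Monotone ρb ∨ Antitone ρb) (hubmono : Monotone ub ∨ Antitone ub)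
    (hbplus : ∀ x : ℝ, L₀ ≤ x → ρb x = ρplus ∧ ub x = uplus)
    (hbminus : ∀ x : ℝ, x ≤ -L₀ → ρb x = ρminus ∧ ub x = uminus)
    (E₀ E₁ : ℝ) :
    ∃ C₁ : ℝ, 0 < C₁ ∧
      ∀ ε : ℝ, 0 < ε →
      ∀ ρ u : ℝ → ℝ → ℝ,
        ContDiff ℝ 2 (fun pt : ℝ × ℝ => ρ pt.1 pt.2) →
        ContDiff ℝ 2 (fun pt : ℝ × ℝ => u pt.1 pt.2) →
        (∀ t x : ℝ, t ∈ Set.Icc 0 T → 0 < ρ t x) →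
        -- PDE: `∂ₜ ρ + ∂ₓ(ρu) = 0`
        (∀ t x : ℝ, t ∈ Set.Icc 0 T →
          deriv (fun s => ρ s x) t + deriv (fun y => ρ t y * u t y) x = 0) →
        -- PDE: `∂ₜ(ρu) + ∂ₓ(ρu² + κρ^γ) = ε ∂ₓₓ u`
        (∀ t x : ℝ, t ∈ Set.Icc 0 T →
          deriv (fun s => ρ s x * u s x) t
              + deriv (fun y => ρ t y * (u t y) ^ 2 + κ * ρ t y ^ γ) x
            = ε * deriv (deriv (fun y => u t y)) x) →
        -- decay of `ρ − ρ̄`, `u − ū` and their first spatial derivatives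
        (∀ t : ℝ, t ∈ Set.Icc 0 T →
          Tendsto (fun x => ρ t x - ρb x) (cocompact ℝ) (nhds 0) ∧
          Tendsto (fun x => u t x - ub x) (cocompact ℝ) (nhds 0) ∧
          Tendsto (fun x => deriv (fun y => ρ t y - ρb y) x) (cocompact ℝ) (nhds 0) ∧
          Tendsto (fun x => deriv (fun y => u t y - ub y) x) (cocompact ℝ) (nhds 0)) →
        (∀ t : ℝ, t ∈ Set.Icc 0 T →
          Integrable (fun x =>
            relMechEnergy γ κ (ρb x) (ρb x * ub x) (ρ t x) (ρ t x * u t x))) →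
        -- initial bounds
        (∫ x : ℝ, relMechEnergy γ κ (ρb x) (ρb x * ub x) (ρ 0 x) (ρ 0 x * u 0 x)) ≤ E₀ →
        Integrable (fun x => ε ^ 2 * (deriv (fun y => ρ 0 y) x) ^ 2 / (ρ 0 x) ^ 3
          + 2 * ε * |deriv (fun y => ρ 0 y) x * u 0 x| / ρ 0 x + ρ 0 x * |u 0 x|) →
        (∫ x : ℝ, (ε ^ 2 * (deriv (fun y => ρ 0 y) x) ^ 2 / (ρ 0 x) ^ 3
          + 2 * ε * |deriv (fun y => ρ 0 y) x * u 0 x| / ρ 0 x + ρ 0 x * |u 0 x|)) ≤ E₁ →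
        -- conclusion
        ∀ t : ℝ, t ∈ Set.Icc 0 T →
          ε ^ 2 * (∫ x : ℝ, (deriv (fun y => ρ t y) x) ^ 2 / (ρ t x) ^ 3)
            + ε * (∫ q in Set.Ioc (0 : ℝ) t ×ˢ (Set.univ : Set ℝ),
                ρ q.1 q.2 ^ (γ - 3) * (deriv (fun y => ρ q.1 y) q.2) ^ 2)
            ≤ C₁ * (E₀ + E₁) := by
  have hγ1 : 0 < γ - 1 := by linarith
  have hκ0 : 0 < κ := by rw [hκ]; positivity
  have hmem := NSDensity.between hρbmono (fun x hx => (hbplus x hx).1) (fun x hx => (hbminus x hx).1)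
  have hmin : 0 < min ρminus ρplus := lt_min hρminus hρplus
  have rbpos : ∀ x, 0 < ρb x := fun x => hmin.trans_le (hmem x).1
  have hrb1 : ContDiff ℝ 1 ρb := hρb.of_le (by exact_mod_cast le_top)
  have hout := NSDensity.deriv_out (fun x hx => (hbplus x hx).1) (fun x hx => (hbminus x hx).1)
  obtain ⟨K, cs, hK, hpb, cmp⟩ := NSDensity.comparison hγ hκ0 hmin (min_le_max (a := ρminus) (b := ρplus))
  obtain ⟨Λ, hΛ⟩ := NSDensity.bgSlope_bounded (γ := γ) (κ := κ) hrb1 rbpos hout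
  set D := K * (1 + |cs|) * (∫ x, |NSDensity.bgSlope γ κ ρb x|) * T with hD
  set X := Real.exp (K * Λ * T) with hX
  have hX0 : 0 < X := Real.exp_pos _
  have hD0 : 0 ≤ D := by
    have : 0 ≤ ∫ x, |NSDensity.bgSlope γ κ ρb x| := integral_nonneg fun x => abs_nonneg _
    positivity
  -- Division by `0` gives `0` here, which is the right value: `D = 0` when `E₀ + E₁ = 0`.
  refine ⟨(1 + 1 / (γ * κ)) * (4 + 8 * X + 8 * (D * X) / |E₀ + E₁|), by positivity, ?_⟩
  intro ε hε ρ u hF hU pos mass mom decay intE hE₀ intg hE₁ t ht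
  have h0T : (0 : ℝ) ∈ Icc 0 T := ⟨le_rfl, hT.le⟩
  set F : ℝ × ℝ → ℝ := fun pt => ρ pt.1 pt.2 with hFdef
  set U : ℝ × ℝ → ℝ := fun pt => u pt.1 pt.2 with hUdef
  have hF1 : ContDiff ℝ 1 F := hF.of_le (by norm_num)
  have hU1 : ContDiff ℝ 1 U := hU.of_le (by norm_num)
  have dρ : ∀ s y, deriv (fun y => ρ s y) y = NSDensity.Dx F (s, y) := fun s y =>
    (NSDensity.hDx hF1 s y).deriv
  have pos' : ∀ q : ℝ × ℝ, q.1 ∈ Icc 0 T → 0 < F q := fun q hq => pos q.1 q.2 hq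
  have m' : ∀ q : ℝ × ℝ, q.1 ∈ Icc 0 T →
      NSDensity.Dt F q = -(NSDensity.Dx F q * U q + F q * NSDensity.Dx U q) := fun q hq =>
    NSDensity.conv_mass hF hU (mass q.1 q.2 hq)
  have mom' : ∀ q : ℝ × ℝ, q.1 ∈ Icc 0 T →
      F q * (NSDensity.Dt U q + U q * NSDensity.Dx U q)
      = -(γ * (κ * F q ^ γ) * NSDensity.Dx F q / F q) + ε * NSDensity.Dx (NSDensity.Dx U) q :=
    fun q hq => NSDensity.conv_mom hF hU (pos' q hq) (m' q hq) (mom q.1 q.2 hq)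
  have cF0 : Continuous fun x => F (0, x) := hF.continuous.comp (by fun_prop)
  have cU0 : Continuous fun x => U (0, x) := hU.continuous.comp (by fun_prop)
  have cFx0 : Continuous fun x => NSDensity.Dx F (0, x) :=
    (NSDensity.Dx_contDiff hF).continuous.comp (by fun_prop)
  have p0 : ∀ x, 0 < F (0, x) := fun x => pos 0 x h0T
  -- The integrand of the second initial bound.
  set g : ℝ → ℝ := fun x => ε ^ 2 * NSDensity.Dx F (0, x) ^ 2 / F (0, x) ^ 3
      + 2 * ε * |NSDensity.Dx F (0, x) * U (0, x)| / F (0, x) + F (0, x) * |U (0, x)| with hg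
  have eg : (fun x => ε ^ 2 * (deriv (fun y => ρ 0 y) x) ^ 2 / (ρ 0 x) ^ 3
          + 2 * ε * |deriv (fun y => ρ 0 y) x * u 0 x| / ρ 0 x + ρ 0 x * |u 0 x|) = g := by
    funext x; rw [dρ]
  rw [eg] at intg hE₁
  have g1 : ∀ x, 0 ≤ ε ^ 2 * NSDensity.Dx F (0, x) ^ 2 / F (0, x) ^ 3 := fun x => by
    have := p0 x; positivity
  have g2 : ∀ x, 0 ≤ 2 * ε * |NSDensity.Dx F (0, x) * U (0, x)| / F (0, x) := fun x => by
    have := p0 x; positivity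
  have g3 : ∀ x, 0 ≤ F (0, x) * |U (0, x)| := fun x => by
    have := p0 x; positivity
  have g0 : ∀ x, 0 ≤ g x := fun x => add_nonneg (add_nonneg (g1 x) (g2 x)) (g3 x)
  have cg : Continuous g := by
    refine (((continuous_const.mul (cFx0.pow 2)).div (cF0.pow 3) fun x => ?_).add
      ((continuous_const.mul (cFx0.mul cU0).abs).div cF0 fun x => (p0 x).ne')).add
      (cF0.mul cU0.abs)
    exact (pow_pos (p0 x) 3).ne'
  have i3 : Integrable fun x => F (0, x) * |U (0, x)| := by
    refine intg.mono' (cF0.mul cU0.abs).aestronglyMeasurable (ae_of_all _ fun x => ?_)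
    rw [Real.norm_of_nonneg (g3 x)]
    show _ ≤ _ + _ + _
    linarith [g1 x, g2 x]
  -- Finite initial momentum forces the background velocity to vanish.
  obtain ⟨dec1, dec2, -, -⟩ := decay 0 h0T
  have tp : Tendsto (fun x => F (0, x)) atTop (nhds ρplus) :=
    NSDensity.tendsto_end atTop_le_cocompact dec1
      ((eventually_ge_atTop L₀).mono fun x hx => (hbplus x hx).1)
  have tm : Tendsto (fun x => F (0, x)) atBot (nhds ρminus) :=
    NSDensity.tendsto_end atBot_le_cocompact dec1
      ((eventually_le_atBot (-L₀)).mono fun x hx => (hbminus x hx).1)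
  have up : uplus = 0 := NSDensity.end_zero (l := atTop) (fun s => NSDensity.vol_atTop) hρplus tp
    (NSDensity.tendsto_end atTop_le_cocompact dec2
      ((eventually_ge_atTop L₀).mono fun x hx => (hbplus x hx).2)) i3
  have um : uminus = 0 := NSDensity.end_zero (l := atBot) (fun s => NSDensity.vol_atBot) hρminus tm
    (NSDensity.tendsto_end atBot_le_cocompact dec2
      ((eventually_le_atBot (-L₀)).mono fun x hx => (hbminus x hx).2)) i3
  have ub0 : ∀ x, ub x = 0 := fun x => by
    have := NSDensity.between hubmono (fun x hx => (hbplus x hx).2) (fun x hx => (hbminus x hx).2) x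
    rw [up, um, min_self, max_self] at this
    exact le_antisymm this.2 this.1
  have lo : ∀ t ∈ Icc 0 T, ∃ A, ∀ x, |Real.log (F (t, x))| ≤ A := fun t ht =>
    NSDensity.log_bounded (hF.continuous.comp (by fun_prop)) (fun x => pos t x ht) hmin hmem
      (decay t ht).1
  set H : ℝ → ℝ → ℝ := fun t x => κ * F (t, x) ^ γ / (γ - 1)
    - κ * γ * ρb x ^ (γ - 1) / (γ - 1) * F (t, x) + κ * ρb x ^ γ with hH
  have H0 : ∀ t ∈ Icc 0 T, ∀ x, 0 ≤ H t x := fun t ht x =>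
    NSDensity.rel_nonneg hγ hκ0 (rbpos x) (pos t x ht)
  have eE : ∀ t ∈ Icc 0 T,
      (fun x => relMechEnergy γ κ (ρb x) (ρb x * ub x) (ρ t x) (ρ t x * u t x))
      = fun x => F (t, x) * U (t, x) ^ 2 / 2 + H t x := fun t ht => by
    funext x
    rw [ub0]
    exact NSDensity.relMech_eq hγ (rbpos x)
  have intE' : ∀ t ∈ Icc 0 T, Integrable fun x => F (t, x) * U (t, x) ^ 2 / 2 + H t x :=
    fun t ht => by rw [← eE t ht]; exact intE t ht
  rw [eE 0 h0T] at hE₀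
  have hint : ∀ t ∈ Icc 0 T, Integrable (fun x => F (t, x) * U (t, x) ^ 2) := fun t ht => by
    refine ((intE' t ht).const_mul 2).mono' (Continuous.aestronglyMeasurable ?_)
      (ae_of_all _ fun x => ?_)
    · exact (hF.continuous.mul (hU.continuous.pow 2)).comp (by fun_prop : Continuous fun x => (t, x))
    · have : 0 < F (t, x) := pos t x ht
      rw [Real.norm_of_nonneg (by positivity)]
      linarith [H0 t ht x]
  set B : ℝ → ℝ := fun x =>
    F (0, x) * (U (0, x) + ε * NSDensity.Dx F (0, x) / F (0, x) ^ 2) ^ 2 / 2 + H 0 x with hBdef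
  have B0 : ∀ x, 0 ≤ B x := fun x => by
    have := p0 x
    have := H0 0 h0T x
    simp only [hBdef]; positivity
  -- Expanding the square in the effective energy leaves exactly the terms controlled by `g`.
  have Ble : ∀ x, B x ≤ (F (0, x) * U (0, x) ^ 2 / 2 + H 0 x) + 1 / 2 * g x := fun x => by
    have hp := (p0 x).ne'
    have e : B x = (F (0, x) * U (0, x) ^ 2 / 2 + H 0 x)
        + 1 / 2 * (ε ^ 2 * NSDensity.Dx F (0, x) ^ 2 / F (0, x) ^ 3
          + 2 * ε * (NSDensity.Dx F (0, x) * U (0, x)) / F (0, x)) := by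
      simp only [hBdef]; field_simp; ring
    have h2 : 2 * ε * (NSDensity.Dx F (0, x) * U (0, x)) / F (0, x)
        ≤ 2 * ε * |NSDensity.Dx F (0, x) * U (0, x)| / F (0, x) := by
      have := p0 x
      gcongr
      exact le_abs_self _
    have h3 := g3 x
    rw [e]
    simp only [hg]
    linarith
  have cH : Continuous (H 0) := by
    refine (((continuous_const.mul (cF0.rpow_const fun x => Or.inl (p0 x).ne')).div_const _).sub
      (((continuous_const.mul (hrb1.continuous.rpow_const fun x => Or.inl (rbpos x).ne')).div_const
        _).mul cF0)).add
      (continuous_const.mul (hrb1.continuous.rpow_const fun x => Or.inl (rbpos x).ne'))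
  have cB : Continuous B :=
    ((cF0.mul ((cU0.add ((continuous_const.mul cFx0).div (cF0.pow 2)
      fun x => (pow_pos (p0 x) 2).ne')).pow 2)).div_const 2).add cH
  have intDom := (intE' 0 h0T).add (intg.const_mul (1 / 2))
  have intB : Integrable B := intDom.mono' cB.aestronglyMeasurable
    (ae_of_all _ fun x => by rw [Real.norm_of_nonneg (B0 x)]; exact Ble x)
  have ig0 : 0 ≤ ∫ x, g x := integral_nonneg g0
  have iE0 : 0 ≤ ∫ x, F (0, x) * U (0, x) ^ 2 / 2 + H 0 x := integral_nonneg fun x => by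
    have := p0 x
    have := H0 0 h0T x
    show 0 ≤ F (0, x) * U (0, x) ^ 2 / 2 + H 0 x
    positivity
  have iB : ∫ x, B x ≤ E₀ + 1 / 2 * E₁ := by
    have h1 : ∫ x, B x ≤ ∫ x, ((F (0, x) * U (0, x) ^ 2 / 2 + H 0 x) + 1 / 2 * g x) :=
      integral_mono intB intDom Ble
    rw [integral_add (intE' 0 h0T) (intg.const_mul (1 / 2)), integral_const_mul] at h1
    linarith
  have main := NSDensity.solution_estimate hγ hε hT hκ0 hF hU pos' m' mom' hrb1 rbpos hout hK
    (fun x => hpb _ (hmem x)) (fun x r hr => cmp _ (hmem x) r hr) lo hint intB (intE' 0 h0T) hΛ ht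
  have main' : ε ^ 2 * (∫ x, NSDensity.Dx F (t, x) ^ 2 / F (t, x) ^ 3)
      + ε * (γ * κ * ∫ q in Ioc (0 : ℝ) t ×ˢ (univ : Set ℝ),
        F q ^ (γ - 3) * NSDensity.Dx F q ^ 2)
      ≤ 4 * (∫ x, B x) + 8 * (((∫ x, F (0, x) * U (0, x) ^ 2 / 2 + H 0 x) + D) * X) := main
  -- Without initial data the initial density is constant, hence so is the background.
  have Dzero : E₀ + E₁ = 0 → D = 0 := fun hz => by
    have hgz : ∫ x, g x = 0 := by linarith
    have hae := (integral_eq_zero_iff_of_nonneg g0 intg).1 hgz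
    have hgz' : g = fun _ => 0 := (cg.ae_eq_iff_eq volume continuous_const).1 hae
    have hx0 : ∀ x, NSDensity.Dx F (0, x) = 0 := fun x => by
      have h1 : g x = 0 := congrFun hgz' x
      have h2 : ε ^ 2 * NSDensity.Dx F (0, x) ^ 2 / F (0, x) ^ 3 = 0 := by
        have : g x = _ + _ + _ := rfl
        linarith [g1 x, g2 x, g3 x]
      have h3 := p0 x
      simpa [hε.ne', h3.ne'] using h2
    have hc : ∀ x, F (0, x) = F (0, 0) := fun x =>
      is_const_of_deriv_eq_zero (f := fun x => F (0, x))
        (fun y => (NSDensity.hDx hF1 0 y).differentiableAt)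
        (fun y => by rw [(NSDensity.hDx hF1 0 y).deriv, hx0]) x 0
    have e1 : ρplus = F (0, 0) :=
      tendsto_nhds_unique (tp.congr hc) tendsto_const_nhds
    have e2 : ρminus = F (0, 0) :=
      tendsto_nhds_unique (tm.congr hc) tendsto_const_nhds
    have hconst : ρb = fun _ => F (0, 0) := by
      funext x
      have := hmem x
      rw [e1, e2, min_self, max_self] at this
      exact le_antisymm this.2 this.1
    have hs : ∀ x, NSDensity.bgSlope γ κ ρb x = 0 := fun x => by
      simp [NSDensity.bgSlope, hconst]
    simp [hD, hs]
  have hE0' : 0 ≤ E₀ := iE0.trans hE₀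
  have hE1' : 0 ≤ E₁ := ig0.trans hE₁
  have hDE : 8 * (D * X) / |E₀ + E₁| * (E₀ + E₁) = 8 * (D * X) := by
    rw [abs_of_nonneg (add_nonneg hE0' hE1')]
    by_cases hz : E₀ + E₁ = 0
    · simp [hz, Dzero hz]
    · field_simp
  have hR : 4 * (∫ x, B x) + 8 * (((∫ x, F (0, x) * U (0, x) ^ 2 / 2 + H 0 x) + D) * X)
      ≤ (4 + 8 * X + 8 * (D * X) / |E₀ + E₁|) * (E₀ + E₁) := by
    have h1 : (4 + 8 * X + 8 * (D * X) / |E₀ + E₁|) * (E₀ + E₁)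
        = (4 + 8 * X) * (E₀ + E₁) + 8 * (D * X) := by rw [add_mul, hDE]
    rw [h1]
    have h2 := mul_le_mul_of_nonneg_right hE₀ hX0.le
    have h3 := mul_nonneg hE1' hX0.le
    nlinarith
  set I₁ := ∫ x, NSDensity.Dx F (t, x) ^ 2 / F (t, x) ^ 3 with hI₁
  set I₂ := ∫ q in Ioc (0 : ℝ) t ×ˢ (univ : Set ℝ), F q ^ (γ - 3) * NSDensity.Dx F q ^ 2 with hI₂
  have I₁0 : 0 ≤ I₁ := integral_nonneg fun x => by
    have : 0 < F (t, x) := pos t x ht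
    show 0 ≤ NSDensity.Dx F (t, x) ^ 2 / F (t, x) ^ 3
    positivity
  have I₂0 : 0 ≤ I₂ := setIntegral_nonneg (measurableSet_Ioc.prod MeasurableSet.univ) fun q hq => by
    have : 0 < F q := pos' q ⟨hq.1.1.le, hq.1.2.trans ht.2⟩
    positivity
  have goal1 : (∫ x : ℝ, (deriv (fun y => ρ t y) x) ^ 2 / (ρ t x) ^ 3) = I₁ := by
    simp only [dρ]; rfl
  have goal2 : (∫ q in Set.Ioc (0 : ℝ) t ×ˢ (Set.univ : Set ℝ),
      ρ q.1 q.2 ^ (γ - 3) * (deriv (fun y => ρ q.1 y) q.2) ^ 2) = I₂ := by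
    simp only [dρ]; rfl
  rw [goal1, goal2]
  set R := (4 + 8 * X + 8 * (D * X) / |E₀ + E₁|) * (E₀ + E₁) with hRdef
  have hγκ : 0 < γ * κ := by positivity
  have a1 : 0 ≤ ε ^ 2 * I₁ := by positivity
  have a2 : 0 ≤ ε * (γ * κ * I₂) := by positivity
  have tot : ε ^ 2 * I₁ + ε * (γ * κ * I₂) ≤ R := main'.trans hR
  have b2 : ε * I₂ ≤ 1 / (γ * κ) * R := by
    have : ε * I₂ = 1 / (γ * κ) * (ε * (γ * κ * I₂)) := by field_simp
    rw [this]
    exact mul_le_mul_of_nonneg_left (by linarith) (by positivity)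
  have : (1 + 1 / (γ * κ)) * (4 + 8 * X + 8 * (D * X) / |E₀ + E₁|) * (E₀ + E₁)
      = R + 1 / (γ * κ) * R := by rw [hRdef]; ring
  rw [this]
  linarith
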